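/- arXiv:1506.04011 — 2 statements merged into one kernel-verified Lean document; each statement's English description precedes it below -/
import Mathlib

section
/- Let F be a totally real number field, V a nonzero finite-dimensional F-vector space, and ψ₁, ψ₂ : V × V → F two symmetric F-bilinear forms such that Tr_{F/ℚ}(ψᵢ(v,v)) > 0 for all v ∈ V \ {0} (i = 1,2). Then ψ₁^⊕4 and ψ₂^⊕4 are isometric: there exists an F-linear automorphism f of V⁴ with ψ₂^⊕4(f(x), f(y)) = ψ₁^⊕4(x, y) for all x, y ∈ V⁴. (This is the Albert type I case of the fourth-power Hermitian form theorem: D = F a totally real field with the trivial involution, so Hermitian forms are quadratic forms.) -/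
/-!
A trace-positive form is diagonal in a suitable basis with entries `ψ (b j) (b j)` that are totally
positive (`totally_pos_of_trace`). If such an entry is a sum of four squares `p² + q² + r² + s²`,
then left multiplication by the quaternion `p + q i + r j + s k` identifies the fourth power of the
one-dimensional form with `⟨1, 1, 1, 1⟩`. Hence both fourth powers are isometric to the standard
form on `F ^ (4 n)`, and everything rests on `sum_four_squares`: totally positive elements of `F`
are sums of four squares. This is a consequence of the Hasse–Minkowski theorem; the proof below
uses only the part of class field theory that is needed.

*Reduction to an unramified norm problem.* Multiplying `a` by a suitable sum of three squares makes
its valuation odd at each prime where `2` or `3` has odd valuation. Then `M = F(√-a)` is totally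
complex, and `2` and `3` have even valuation at all primes of `M`. If `-1 = x² + y²` in `M`, then `a`
is a sum of three squares in `F` (`sum_squares_of_adjoin`). The identity
`(α² + β²) + ((β + 1)² + (β - 1)²) = α² + 3 β² + 2` shows that it suffices to solve
`α² + 3 β² = -2`, i.e. to write `-2` as a norm from `L = M(√-3)`. Since `3` has even valuations
and `-3` is a discriminant, `L / M` is unramified, and `-2` has even valuation everywhere.

*Unramified norms* (`QuadExt.first_inequality`, `exists_N_eq_of_even`). Let `L / M` be an unramified
quadratic extension of a totally complex field with `I` infinite places, and let `b` have even
valuation everywhere. Choose `S` finite, containing the primes dividing `2` and the support of `b`,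
and generating the class group. Let `W` be a set of `I + #S - 1` primes split in `L` such that an
`S ∪ W`-unit which is a local square at `S` is a square. Let `X` be the group of `S ∪ W`-units, `m`
the number of nonsplit primes in `S`, `NX` the norms to `X` of the units of `L` above, and `K₁ ⊆ X`
the subgroup of elements with even valuation at the nonsplit primes of `S`. Then `NX ⊆ K₁`,
and `b ∈ K₁`. The Herbrand quotient of the units gives `2 [X : NX] ≤ 2 ^ m`. On the other hand
`[X : X²] = 2 ^ (I + #S + #W)`, while counting local square classes bounds `[K₁ : X²]` by
`2 ^ (#S + 2 I + (#S - m))`, so `2 [X : K₁] ≥ 2 ^ m`. Hence `NX = K₁`, and `b` is a norm.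

*Auxiliary primes* (`QuadExt.exists_aux_primes`). These come from the existence of infinitely many
nonsplit primes in every quadratic extension (`QuadExt.exists_nonsplit`), which holds because
otherwise `ζ_L` would behave like `ζ_M ²` at `s = 1`, whereas both have a simple pole there.
-/

open IsDedekindDomain NumberField

/-! ### Quadratic extensions of number fields -/

/-- A quadratic extension of fields `L = M(s)`, `s ^ 2 = d`, with its nontrivial automorphism `σ`. -/
structure QuadExt (M L : Type*) [Field M] [Field L] [Algebra M L] where
  d : M
  s : L
  σ : L ≃ₐ[M] L
  hs : s ^ 2 = algebraMap M L d
  hd : ¬ IsSquare d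
  hσ : σ s = -s
  span : ∀ z : L, ∃ a b : M, z = algebraMap M L a + algebraMap M L b * s
  rank : Module.finrank M L = 2

/-- `AdjoinRoot (X ^ 2 - C d)` as a quadratic extension. -/
theorem QuadExt.exists_of_not_isSquare.{u} {M : Type u} [Field M] [NumberField M] (d : M)
    (hd : ¬ IsSquare d) :
    ∃ (L : Type u) (_ : Field L) (_ : NumberField L) (_ : Algebra M L) (Q : QuadExt M L),
      Q.d = d := by
  have hne : ((Polynomial.X ^ 2 - Polynomial.C d : Polynomial M)).natDegree = 2 :=
    Polynomial.natDegree_X_pow_sub_C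
  have hmon : (Polynomial.X ^ 2 - Polynomial.C d : Polynomial M).Monic :=
    Polynomial.monic_X_pow_sub_C _ (by norm_num)
  have hirr : Irreducible (Polynomial.X ^ 2 - Polynomial.C d : Polynomial M) := by
    refine X_pow_sub_C_irreducible_of_prime Nat.prime_two ?_
    intro b hb
    exact hd ⟨b, by rw [← hb, sq]⟩
  have : Fact (Irreducible (Polynomial.X ^ 2 - Polynomial.C d : Polynomial M)) := ⟨hirr⟩
  set p := (Polynomial.X ^ 2 - Polynomial.C d : Polynomial M) with hp
  set s := AdjoinRoot.root p with hs
  have hs2 : s ^ 2 = algebraMap M (AdjoinRoot p) d := by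
    have := AdjoinRoot.eval₂_root p
    rw [hp] at this
    simp only [Polynomial.eval₂_sub, Polynomial.eval₂_pow, Polynomial.eval₂_X,
      Polynomial.eval₂_C] at this
    exact sub_eq_zero.mp this
  let τ : AdjoinRoot p →ₐ[M] AdjoinRoot p := AdjoinRoot.liftAlgHom p (Algebra.ofId M _) (-s) (by
    simp [hp, Algebra.ofId_apply, hs2])
  have hτ : τ s = -s := by simp [τ, hs]
  have hττ : τ.comp τ = AlgHom.id M _ := by
    apply AdjoinRoot.algHom_ext
    change τ (τ s) = s
    rw [hτ, map_neg, hτ, neg_neg]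
  have hrank : Module.finrank M (AdjoinRoot p) = 2 := by
    simpa [hne] using (AdjoinRoot.powerBasis hirr.ne_zero).finrank
  have : FiniteDimensional M (AdjoinRoot p) := (AdjoinRoot.powerBasis hirr.ne_zero).finite
  have : FiniteDimensional ℚ (AdjoinRoot p) := FiniteDimensional.trans ℚ M _
  have : CharZero (AdjoinRoot p) := charZero_of_injective_algebraMap (algebraMap M _).injective
  refine ⟨AdjoinRoot p, inferInstance, ⟨⟩, inferInstance,
    { d := d, s := s, σ := AlgEquiv.ofAlgHom τ τ hττ hττ, hs := hs2, hd := hd, hσ := hτ,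
      span := ?_, rank := hrank }, rfl⟩
  intro z
  obtain ⟨q, rfl⟩ := AdjoinRoot.mk_surjective z
  have h1 : AdjoinRoot.mk p q = AdjoinRoot.mk p (q %ₘ p) := by
    rw [AdjoinRoot.mk_eq_mk]
    exact ⟨q /ₘ p, by nth_rewrite 1 [← Polynomial.modByMonic_add_div q p]; ring⟩
  have h2 : (q %ₘ p).natDegree ≤ 1 := by
    have := Polynomial.natDegree_modByMonic_lt q hmon (by intro h; rw [h] at hne; simp at hne)
    omega
  refine ⟨(q %ₘ p).coeff 0, (q %ₘ p).coeff 1, ?_⟩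
  rw [h1, Polynomial.eq_X_add_C_of_natDegree_le_one h2]
  simp [hs, add_comm]

namespace QuadExt

variable {M L : Type*} [Field M] [NumberField M] [Field L] [NumberField L] [Algebra M L]
  (Q : QuadExt M L)

theorem σσ (z : L) : Q.σ (Q.σ z) = z := by
  obtain ⟨a, b, rfl⟩ := Q.span z
  simp [Q.hσ]

theorem s_ne_zero : Q.s ≠ 0 := by
  intro h
  have := Q.hs
  rw [h] at this
  have h0 : Q.d = 0 := by
    apply (algebraMap M L).injective; rw [← this]; simp
  exact Q.hd (h0 ▸ ⟨0, by simp⟩)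

theorem fixed {z : L} (h : Q.σ z = z) : ∃ a : M, z = algebraMap M L a := by
  obtain ⟨a, b, rfl⟩ := Q.span z
  simp only [map_add, map_mul, AlgEquiv.commutes, Q.hσ] at h
  have h2 : 2 * (algebraMap M L b * Q.s) = 0 := by linear_combination -h
  have h3 : algebraMap M L b * Q.s = 0 := by simpa using h2
  exact ⟨a, by rw [h3, add_zero]⟩

/-- The norm from `L` to `M`, as the element of `M` mapping to `z * σ z`. -/
theorem exists_norm (z : L) : ∃ a : M, z * Q.σ z = algebraMap M L a :=
  Q.fixed (by rw [map_mul, Q.σσ, mul_comm])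

noncomputable def N (z : L) : M := (Q.exists_norm z).choose

theorem N_spec (z : L) : algebraMap M L (Q.N z) = z * Q.σ z := (Q.exists_norm z).choose_spec.symm

theorem N_eq (a b : M) : Q.N (algebraMap M L a + algebraMap M L b * Q.s) = a ^ 2 - Q.d * b ^ 2 := by
  apply (algebraMap M L).injective
  rw [Q.N_spec]
  simp only [map_add, map_mul, AlgEquiv.commutes, Q.hσ, map_sub, map_pow, ← Q.hs]
  ring

theorem exists_N_eq (z : L) : ∃ a b : M, Q.N z = a ^ 2 - Q.d * b ^ 2 := by
  obtain ⟨a, b, rfl⟩ := Q.span z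
  exact ⟨a, b, Q.N_eq a b⟩

theorem N_mul (x y : L) : Q.N (x * y) = Q.N x * Q.N y := by
  apply (algebraMap M L).injective
  rw [map_mul, Q.N_spec, Q.N_spec, Q.N_spec, map_mul]; ring

theorem N_one : Q.N 1 = 1 := by
  apply (algebraMap M L).injective; rw [Q.N_spec]; simp

/-- Hilbert 90. -/
theorem hilbert90 {u : L} (h : u * Q.σ u = 1) : ∃ z : L, z ≠ 0 ∧ z = u * Q.σ z := by
  by_cases h1 : 1 + u = 0
  · refine ⟨Q.s, Q.s_ne_zero, ?_⟩
    rw [Q.hσ, eq_neg_of_add_eq_zero_right h1]; ring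
  · refine ⟨1 + u, h1, ?_⟩
    rw [map_add, map_one, mul_add, h]; ring

/-! ### Primes in a quadratic extension -/

/-- The conjugate prime. -/
noncomputable def conj (w : HeightOneSpectrum (𝓞 L)) : HeightOneSpectrum (𝓞 L) :=
  HeightOneSpectrum.comap (RingOfIntegers.mapRingEquiv Q.σ.toRingEquiv).toRingHom
    (RingEquiv.surjective _) w

theorem mem_conj (w : HeightOneSpectrum (𝓞 L)) (x : 𝓞 L) :
    x ∈ (Q.conj w).asIdeal ↔ RingOfIntegers.mapRingEquiv Q.σ.toRingEquiv x ∈ w.asIdeal := Iff.rfl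

theorem conj_conj (w : HeightOneSpectrum (𝓞 L)) : Q.conj (Q.conj w) = w := by
  ext x
  rw [mem_conj, mem_conj]
  have : (RingOfIntegers.mapRingEquiv Q.σ.toRingEquiv
    (RingOfIntegers.mapRingEquiv Q.σ.toRingEquiv x)) = x := by
    ext; exact Q.σσ _
  rw [this]

theorem intValuation_conj (w : HeightOneSpectrum (𝓞 L)) (x : 𝓞 L) :
    (Q.conj w).intValuation x =
      w.intValuation (RingOfIntegers.mapRingEquiv Q.σ.toRingEquiv x) := by
  have key (n : ℕ) : x ∈ (Q.conj w).asIdeal ^ n ↔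
      RingOfIntegers.mapRingEquiv Q.σ.toRingEquiv x ∈ w.asIdeal ^ n := by
    have h1 : (Q.conj w).asIdeal =
        w.asIdeal.map (RingOfIntegers.mapRingEquiv Q.σ.toRingEquiv).symm :=
      (Ideal.map_symm (RingOfIntegers.mapRingEquiv Q.σ.toRingEquiv)).symm
    rw [h1, ← Ideal.map_pow, Ideal.map_symm, Ideal.mem_comap]
  rcases eq_or_ne x 0 with rfl | hx
  · simp
  have hx' : RingOfIntegers.mapRingEquiv Q.σ.toRingEquiv x ≠ 0 := by simpa using hx
  apply le_antisymm
  · rw [w.intValuation_eq_exp_neg_multiplicity hx',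
      HeightOneSpectrum.intValuation_le_pow_iff_mem, key,
      ← HeightOneSpectrum.intValuation_le_pow_iff_mem,
      w.intValuation_eq_exp_neg_multiplicity hx']
  · rw [(Q.conj w).intValuation_eq_exp_neg_multiplicity hx,
      HeightOneSpectrum.intValuation_le_pow_iff_mem, ← key,
      ← HeightOneSpectrum.intValuation_le_pow_iff_mem,
      (Q.conj w).intValuation_eq_exp_neg_multiplicity hx]

theorem valuation_conj (w : HeightOneSpectrum (𝓞 L)) (x : L) :
    (Q.conj w).valuation L (Q.σ x) = w.valuation L x := by
  obtain ⟨x, y, hy, rfl⟩ := IsFractionRing.div_surjective (A := 𝓞 L) x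
  have h (z : 𝓞 L) : (Q.conj w).valuation L (Q.σ (algebraMap (𝓞 L) L z)) =
      w.valuation L (algebraMap (𝓞 L) L z) := by
    have : Q.σ (algebraMap (𝓞 L) L z) =
      algebraMap (𝓞 L) L (RingOfIntegers.mapRingEquiv Q.σ.toRingEquiv z) := rfl
    rw [this, HeightOneSpectrum.valuation_of_algebraMap, HeightOneSpectrum.valuation_of_algebraMap,
      intValuation_conj]
    congr 1
    ext; exact Q.σσ _
  rw [map_div₀, map_div₀, map_div₀, h, h]

theorem valuation_σ (w : HeightOneSpectrum (𝓞 L)) (x : L) :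
    w.valuation L (Q.σ x) = (Q.conj w).valuation L x := by
  rw [← Q.valuation_conj, Q.σσ]

theorem under_conj (w : HeightOneSpectrum (𝓞 L)) : (Q.conj w).under (𝓞 M) = w.under (𝓞 M) := by
  ext x
  simp only [HeightOneSpectrum.under_asIdeal, Ideal.under, Ideal.mem_comap, mem_conj]
  have : (RingOfIntegers.mapRingEquiv Q.σ.toRingEquiv (algebraMap (𝓞 M) (𝓞 L) x)) =
    algebraMap (𝓞 M) (𝓞 L) x := by
    ext
    exact Q.σ.commutes _
  rw [this]

/-- The prime of `M` below a prime of `L`. -/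
noncomputable abbrev below (w : HeightOneSpectrum (𝓞 L)) : HeightOneSpectrum (𝓞 M) :=
  w.under (𝓞 M)

omit Q in
theorem liesOver_below (w : HeightOneSpectrum (𝓞 L)) :
    w.asIdeal.LiesOver (w.under (𝓞 M)).asIdeal := ⟨rfl⟩

omit Q in
theorem exists_above (v : HeightOneSpectrum (𝓞 M)) :
    ∃ w : HeightOneSpectrum (𝓞 L), w.under (𝓞 M) = v := by
  obtain ⟨P, hP, hP2⟩ := v.asIdeal.exists_ideal_over_prime_of_isIntegral_of_isDomain
    (S := 𝓞 L) (by
      rw [(RingHom.injective_iff_ker_eq_bot _).mp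
        (FaithfulSMul.algebraMap_injective (𝓞 M) (𝓞 L))]
      exact bot_le)
  refine ⟨⟨P, hP, ?_⟩, ?_⟩
  · rintro rfl
    apply v.ne_bot
    rw [← hP2]
    exact Ideal.comap_bot_of_injective _ (FaithfulSMul.algebraMap_injective (𝓞 M) (𝓞 L))
  · ext1; exact hP2

/-- The ramification index over `M` of a prime of `L`. -/
noncomputable def e (w : HeightOneSpectrum (𝓞 L)) : ℕ :=
  (w.under (𝓞 M)).asIdeal.ramificationIdx' w.asIdeal

omit Q in
theorem valuation_algebraMap (w : HeightOneSpectrum (𝓞 L)) (x : M) :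
    w.valuation L (algebraMap M L x) = (w.under (𝓞 M)).valuation M x ^ e (M := M) w := by
  have := liesOver_below (M := M) w
  exact (HeightOneSpectrum.valuation_liesOver L (w.under (𝓞 M)) w x).symm

theorem eq_or_eq_conj {w w' : HeightOneSpectrum (𝓞 L)} (h : w.under (𝓞 M) = w'.under (𝓞 M)) :
    w' = w ∨ w' = Q.conj w := by
  by_contra! hne
  obtain ⟨h1, h2⟩ := hne
  have hc : IsCoprime w'.asIdeal (w.asIdeal ⊓ (Q.conj w).asIdeal) := by
    rw [Ideal.isCoprime_iff_sup_eq]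
    have hm : w'.asIdeal.IsMaximal := w'.isMaximal
    have hw : IsCoprime w'.asIdeal w.asIdeal :=
      Ideal.isCoprime_iff_sup_eq.mpr (Ideal.IsMaximal.coprime_of_ne hm w.isMaximal
        fun h => h1 (HeightOneSpectrum.ext h))
    have hw2 : IsCoprime w'.asIdeal (Q.conj w).asIdeal :=
      Ideal.isCoprime_iff_sup_eq.mpr (Ideal.IsMaximal.coprime_of_ne hm (Q.conj w).isMaximal
        fun h => h2 (HeightOneSpectrum.ext h))
    have := IsCoprime.mul_right hw hw2
    rw [Ideal.isCoprime_iff_sup_eq] at this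
    rw [eq_top_iff, ← this]
    exact sup_le_sup_left Ideal.mul_le_inf _
  obtain ⟨x, hx, y, hy, hxy⟩ := Ideal.isCoprime_iff_exists.mp hc
  have hmem : ∃ a : 𝓞 M, algebraMap (𝓞 M) (𝓞 L) a =
      x * RingOfIntegers.mapRingEquiv Q.σ.toRingEquiv x := by
    obtain ⟨a, ha⟩ := Q.exists_norm (x : L)
    have hint : IsIntegral ℤ a := by
      rw [← isIntegral_algebraMap_iff (algebraMap M L).injective (B := L), ← ha]
      exact (RingOfIntegers.isIntegral_coe x).mul
        (RingOfIntegers.isIntegral_coe (RingOfIntegers.mapRingEquiv Q.σ.toRingEquiv x))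
    refine ⟨⟨a, hint⟩, ?_⟩
    ext
    exact ha.symm
  obtain ⟨a, ha⟩ := hmem
  have ha' : a ∈ (w'.under (𝓞 M)).asIdeal := by
    change algebraMap (𝓞 M) (𝓞 L) a ∈ w'.asIdeal
    rw [ha]; exact Ideal.mul_mem_right _ _ hx
  rw [← h] at ha'
  have ha2 : algebraMap (𝓞 M) (𝓞 L) a ∈ w.asIdeal := ha'
  rw [ha] at ha2
  have hno (w : HeightOneSpectrum (𝓞 L)) (hy : y ∈ w.asIdeal) : x ∉ w.asIdeal := by
    intro hx
    exact w.isPrime.ne_top ((Ideal.eq_top_iff_one _).mpr (hxy ▸ Ideal.add_mem _ hx hy))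
  rcases w.isPrime.mem_or_mem ha2 with h | h
  · exact hno w hy.1 h
  · exact hno _ hy.2 h

omit Q in
theorem e_pos (w : HeightOneSpectrum (𝓞 L)) : 0 < e (M := M) w := by
  have := liesOver_below (M := M) w
  exact Nat.pos_of_ne_zero
    (Ideal.IsDedekindDomain.ramificationIdx'_ne_zero_of_liesOver _ (w.under (𝓞 M)).ne_bot)

omit Q in
theorem absNorm_eq (w : HeightOneSpectrum (𝓞 L)) :
    Ideal.absNorm w.asIdeal = Ideal.absNorm (w.under (𝓞 M)).asIdeal ^
      ((w.under (𝓞 M)).asIdeal.inertiaDeg' w.asIdeal) := by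
  have := liesOver_below (M := M) w
  exact Ideal.absNorm_eq_pow_inertiaDeg'_of_liesOver _ _ (w.under (𝓞 M)).isPrime
    (w.under (𝓞 M)).ne_bot

omit Q in
theorem f_pos (w : HeightOneSpectrum (𝓞 L)) :
    0 < (w.under (𝓞 M)).asIdeal.inertiaDeg' w.asIdeal := by
  have := liesOver_below (M := M) w
  have : (w.under (𝓞 M)).asIdeal.IsMaximal := (w.under (𝓞 M)).isMaximal
  exact Ideal.inertiaDeg'_pos _ _

omit Q in
theorem mem_primesOver (w w' : HeightOneSpectrum (𝓞 L)) (h : w'.under (𝓞 M) = w.under (𝓞 M)) :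
    w'.asIdeal ∈ IsDedekindDomain.primesOverFinset (w.under (𝓞 M)).asIdeal (𝓞 L) := by
  have := liesOver_below (M := M) w'
  have h2 : (w.under (𝓞 M)).asIdeal.IsMaximal := (w.under (𝓞 M)).isMaximal
  rw [IsDedekindDomain.mem_primesOverFinset_iff (w.under (𝓞 M)).ne_bot]
  exact ⟨w'.isPrime, h ▸ this⟩

/-- The fundamental identity `∑ e f = 2` in the case of two primes above. -/
theorem of_conj_ne {w : HeightOneSpectrum (𝓞 L)} (h : Q.conj w ≠ w) :
    e (M := M) w = 1 ∧ Ideal.absNorm w.asIdeal = Ideal.absNorm (w.under (𝓞 M)).asIdeal := by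
  have h2 : (w.under (𝓞 M)).asIdeal.IsMaximal := (w.under (𝓞 M)).isMaximal
  have hsum := Ideal.sum_ramification_inertia (𝓞 L) M L (p := (w.under (𝓞 M)).asIdeal)
    (w.under (𝓞 M)).ne_bot
  rw [Q.rank] at hsum
  have hne : w.asIdeal ≠ (Q.conj w).asIdeal := fun h' => h (HeightOneSpectrum.ext h'.symm)
  have hle : ∑ P ∈ {w.asIdeal, (Q.conj w).asIdeal},
      (w.under (𝓞 M)).asIdeal.ramificationIdx' P * (w.under (𝓞 M)).asIdeal.inertiaDeg' P ≤ 2 := by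
    rw [← hsum]
    apply Finset.sum_le_sum_of_subset
    intro P hP
    rw [Finset.mem_insert, Finset.mem_singleton] at hP
    rcases hP with rfl | rfl
    · exact mem_primesOver _ _ rfl
    · exact mem_primesOver _ _ (Q.under_conj w)
  rw [Finset.sum_pair hne] at hle
  have he := e_pos (M := M) w
  have he' := e_pos (M := M) (Q.conj w)
  have hf := f_pos (M := M) w
  have hf' := f_pos (M := M) (Q.conj w)
  rw [Q.under_conj] at hf'
  rw [e, Q.under_conj] at he'
  have h3 := Nat.mul_pos he' hf'
  rw [e] at he ⊢
  have h4 : (w.under (𝓞 M)).asIdeal.ramificationIdx' w.asIdeal *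
    (w.under (𝓞 M)).asIdeal.inertiaDeg' w.asIdeal ≤ 1 := by omega
  have h5 := Nat.mul_pos he hf
  have h6 := mul_eq_one.mp (le_antisymm h4 h5)
  exact ⟨h6.1, by rw [absNorm_eq (M := M) w, h6.2, pow_one]⟩

theorem of_conj_eq {w : HeightOneSpectrum (𝓞 L)} (h : Q.conj w = w) (he : e (M := M) w = 1) :
    Ideal.absNorm w.asIdeal = Ideal.absNorm (w.under (𝓞 M)).asIdeal ^ 2 := by
  have h2 : (w.under (𝓞 M)).asIdeal.IsMaximal := (w.under (𝓞 M)).isMaximal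
  have hsum := Ideal.sum_ramification_inertia (𝓞 L) M L (p := (w.under (𝓞 M)).asIdeal)
    (w.under (𝓞 M)).ne_bot
  have hs : IsDedekindDomain.primesOverFinset (w.under (𝓞 M)).asIdeal (𝓞 L) = {w.asIdeal} := by
    ext P
    rw [Finset.mem_singleton]
    constructor
    · intro hP
      obtain ⟨hP1, hP2⟩ :=
        (IsDedekindDomain.mem_primesOverFinset_iff (w.under (𝓞 M)).ne_bot _).mp hP
      let w' : HeightOneSpectrum (𝓞 L) := ⟨P, hP1, by
        rintro rfl
        apply (w.under (𝓞 M)).ne_bot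
        rw [hP2.over]
        exact Ideal.comap_bot_of_injective _ (FaithfulSMul.algebraMap_injective (𝓞 M) (𝓞 L))⟩
      rcases Q.eq_or_eq_conj (w := w) (w' := w') (HeightOneSpectrum.ext hP2.over) with h' | h'
      · exact congrArg (·.asIdeal) h'
      · rw [h] at h'; exact congrArg (·.asIdeal) h'
    · rintro rfl
      exact mem_primesOver _ _ rfl
  rw [hs, Finset.sum_singleton, Q.rank] at hsum
  rw [e] at he
  rw [he, one_mul] at hsum
  rw [absNorm_eq (M := M) w, hsum]

end QuadExt

/-! ### Local behaviour: ramification, splitting and norm residues -/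

namespace QuadExt

variable {M L : Type*} [Field M] [NumberField M] [Field L] [NumberField L] [Algebra M L]
  (Q : QuadExt M L)

theorem valuation_σ_of_conj_eq {w : HeightOneSpectrum (𝓞 L)} (h : Q.conj w = w) (x : L) :
    w.valuation L (Q.σ x) = w.valuation L x := by
  rw [Q.valuation_σ, h]

theorem exp_le_of_lt_one {x : WithZero (Multiplicative ℤ)} (h : x < 1) : x ≤ WithZero.exp (-1) := by
  rcases eq_or_ne x 0 with rfl | hx
  · exact zero_le
  rw [← WithZero.exp_log hx] at h ⊢
  rw [← WithZero.exp_zero, WithZero.exp_lt_exp] at h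
  rw [WithZero.exp_le_exp]; omega

/-- An integral `θ` whose difference from its conjugate is a unit at `w` forces `w` to be
unramified. -/
theorem unram_of_theta {w : HeightOneSpectrum (𝓞 L)} {θ : L} (h1 : w.valuation L θ ≤ 1)
    (h2 : w.valuation L (θ - Q.σ θ) = 1) : e (M := M) w = 1 := by
  by_contra hne
  have he : 2 ≤ e (M := M) w := by have := e_pos (M := M) w; omega
  have hc : Q.conj w = w := by
    by_contra h; exact hne (Q.of_conj_ne h).1
  have hdiff : θ - Q.σ θ ≠ 0 := by
    intro h; rw [h, map_zero] at h2; exact zero_ne_one h2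
  obtain ⟨p, hp⟩ := w.valuation_exists_uniformizer L
  obtain ⟨b, hb⟩ := Q.fixed (z := (p - Q.σ p) / (θ - Q.σ θ)) (by
    rw [map_div₀, map_sub, map_sub, Q.σσ, Q.σσ, ← neg_sub p, ← neg_sub θ, neg_div_neg_eq])
  have hb' : p - Q.σ p = algebraMap M L b * (θ - Q.σ θ) := by
    rw [← hb]; field_simp
  obtain ⟨a, ha⟩ := Q.fixed (z := p - algebraMap M L b * θ) (by
    rw [map_sub, map_mul, AlgEquiv.commutes]; linear_combination -hb')
  have step (x : M) (hx : w.valuation L (algebraMap M L x) ≤ WithZero.exp (-1)) :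
      w.valuation L (algebraMap M L x) ≤ WithZero.exp (-2) := by
    rw [valuation_algebraMap (M := M)] at hx ⊢
    have h3 : (w.under (𝓞 M)).valuation M x < 1 := by
      by_contra! h3
      have h4 : (1 : WithZero (Multiplicative ℤ)) ≤ _ := one_le_pow_of_one_le' h3 (e (M := M) w)
      have h5 := h4.trans hx
      rw [← WithZero.exp_zero, WithZero.exp_le_exp] at h5
      omega
    have h4 := exp_le_of_lt_one h3
    calc _ ≤ (w.under (𝓞 M)).valuation M x ^ 2 := pow_le_pow_right_of_le_one' h3.le he
      _ ≤ (WithZero.exp (-1)) ^ 2 := pow_le_pow_left' h4 2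
      _ = _ := by rw [← WithZero.exp_nsmul]; rfl
  have hb2 := step b (by
    have h3 := congrArg (w.valuation L) hb'
    rw [map_mul, h2, mul_one] at h3
    rw [← h3]
    refine (Valuation.map_sub _ _ _).trans ?_
    rw [Q.valuation_σ_of_conj_eq hc, max_self, hp])
  have hb3 : w.valuation L (algebraMap M L b * θ) ≤ WithZero.exp (-2) := by
    rw [map_mul]; exact (mul_le_mul' hb2 h1).trans (mul_one _).le
  have h21 : WithZero.exp (-2 : ℤ) ≤ WithZero.exp (-1) := by
    rw [WithZero.exp_le_exp]; omega
  have ha2 := step a (by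
    rw [← ha]
    refine (Valuation.map_sub _ _ _).trans (max_le hp.le (hb3.trans h21)))
  rw [← ha] at ha2
  have h5 : w.valuation L p ≤ WithZero.exp (-2) := by
    have : p = (p - algebraMap M L b * θ) + algebraMap M L b * θ := by ring
    rw [this]
    exact (Valuation.map_add _ _ _).trans (max_le ha2 hb3)
  rw [hp, WithZero.exp_le_exp] at h5
  omega

/-- If `d` is a square locally at `v`, then `v` splits. The hypothesis is the one of Hensel's lemma:
`d * c ^ 2` agrees with `x ^ 2` to a precision better than `4 * x ^ 2`. -/
theorem split_of_near_square {w : HeightOneSpectrum (𝓞 L)} {c x : M}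
    (h : (w.under (𝓞 M)).valuation M (Q.d * c ^ 2 - x ^ 2) <
      (w.under (𝓞 M)).valuation M (4 * x ^ 2)) : Q.conj w ≠ w := by
  intro hc
  set V := w.valuation L
  set i := algebraMap M L
  have h1 : (i c * Q.s + i x) * (i c * Q.s - i x) = i (Q.d * c ^ 2 - x ^ 2) := by
    simp only [map_sub, map_mul, map_pow, i, ← Q.hs]; ring
  have h2 : V (i c * Q.s - i x) = V (i c * Q.s + i x) := by
    rw [← Q.valuation_σ_of_conj_eq hc (i c * Q.s + i x), map_add, map_mul, AlgEquiv.commutes,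
      AlgEquiv.commutes, Q.hσ, Valuation.map_sub_swap]
    congr 1; ring
  have h3 : V (i (2 * x)) ≤ V (i c * Q.s + i x) := by
    have : i (2 * x) = (i c * Q.s + i x) - (i c * Q.s - i x) := by
      simp only [map_mul, map_ofNat, i]; ring
    rw [this]
    refine (Valuation.map_sub _ _ _).trans ?_
    rw [h2, max_self]
  have h4 : V (i (4 * x ^ 2)) ≤ V (i (Q.d * c ^ 2 - x ^ 2)) := by
    rw [← h1, map_mul V, h2, show (4 * x ^ 2 : M) = 2 * x * (2 * x) by ring, map_mul i, map_mul V]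
    exact mul_le_mul' h3 h3
  simp only [V, i] at h4
  rw [valuation_algebraMap (M := M), valuation_algebraMap (M := M)] at h4
  exact absurd h4 (not_le.mpr (pow_lt_pow_left₀ h zero_le (e_pos w).ne'))

theorem valuation_N {w : HeightOneSpectrum (𝓞 L)} (hc : Q.conj w = w) (he : e (M := M) w = 1)
    (z : L) : (w.under (𝓞 M)).valuation M (Q.N z) = w.valuation L z ^ 2 := by
  have := valuation_algebraMap (M := M) w (Q.N z)
  rw [he, pow_one] at this
  rw [← this, Q.N_spec, map_mul, Q.valuation_σ_of_conj_eq hc, sq]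

end QuadExt

/-! ### Quadratic residues -/

section Res

variable {K : Type*} [Field K] [NumberField K]

/-- `u` is a square modulo the prime `v`. -/
def Res (v : HeightOneSpectrum (𝓞 K)) (u : K) : Prop := ∃ α : K, v.valuation K (u - α ^ 2) < 1

theorem val_lt_one_iff {v : HeightOneSpectrum (𝓞 K)} {r : 𝓞 K} :
    v.valuation K (algebraMap (𝓞 K) K r) < 1 ↔ r ∈ v.asIdeal :=
  HeightOneSpectrum.valuation_lt_one_iff_mem v r

theorem exists_int_approx (v : HeightOneSpectrum (𝓞 K)) {u : K} (hu : v.valuation K u ≤ 1) :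
    ∃ r : 𝓞 K, v.valuation K (u - algebraMap (𝓞 K) K r) < 1 := by
  obtain ⟨r, hr⟩ := HeightOneSpectrum.exists_valuation_sub_lt_of_integer v hu 1
  exact ⟨r, by rw [Valuation.map_sub_swap]; exact hr⟩

theorem valuation_eq_one_of_sub {v : HeightOneSpectrum (𝓞 K)} {u r : K} (hu : v.valuation K u = 1)
    (h : v.valuation K (u - r) < 1) : v.valuation K r = 1 := by
  rw [← hu] at h
  rw [Valuation.map_eq_of_sub_lt _ (by rwa [Valuation.map_sub_swap]), hu]

theorem res_iff {v : HeightOneSpectrum (𝓞 K)} {u : K} {r : 𝓞 K} (hu : v.valuation K u = 1)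
    (h : v.valuation K (u - algebraMap (𝓞 K) K r) < 1) :
    Res v u ↔ IsSquare (Ideal.Quotient.mk v.asIdeal r) := by
  constructor
  · rintro ⟨α, hα⟩
    have h1 := valuation_eq_one_of_sub hu hα
    rw [map_pow] at h1
    have hα1 : v.valuation K α = 1 := by
      rwa [pow_eq_one_iff_of_nonneg zero_le two_ne_zero] at h1
    obtain ⟨t, ht⟩ := exists_int_approx v hα1.le
    refine ⟨Ideal.Quotient.mk v.asIdeal t, ?_⟩
    rw [← map_mul, Ideal.Quotient.eq, ← val_lt_one_iff (K := K)]
    have h2 : v.valuation K (algebraMap (𝓞 K) K t) ≤ 1 := v.valuation_le_one _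
    have : algebraMap (𝓞 K) K (r - t * t) = (u - α ^ 2) - (u - algebraMap (𝓞 K) K r)
        + (α - algebraMap (𝓞 K) K t) * (α + algebraMap (𝓞 K) K t) := by
      simp only [map_sub, map_mul]; ring
    rw [this]
    refine Valuation.map_add_lt _ (Valuation.map_sub_lt _ hα h) ?_
    rw [map_mul]
    exact mul_lt_one_of_nonneg_of_lt_one_left zero_le ht ((Valuation.map_add _ _ _).trans (max_le hα1.le h2))
  · rintro ⟨t, ht⟩
    obtain ⟨t, rfl⟩ := Ideal.Quotient.mk_surjective t
    rw [← map_mul, Ideal.Quotient.eq, ← val_lt_one_iff (K := K)] at ht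
    refine ⟨algebraMap (𝓞 K) K t, ?_⟩
    have : u - algebraMap (𝓞 K) K t ^ 2 = (u - algebraMap (𝓞 K) K r) +
        algebraMap (𝓞 K) K (r - t * t) := by simp only [map_sub, map_mul]; ring
    rw [this]
    exact Valuation.map_add_lt _ h ht

theorem ringChar_ne_two {v : HeightOneSpectrum (𝓞 K)} (h2 : v.valuation K 2 = 1) :
    ringChar (𝓞 K ⧸ v.asIdeal) ≠ 2 := by
  intro h
  have : ((2 : ℕ) : 𝓞 K ⧸ v.asIdeal) = 0 := by rw [← h]; exact ringChar.Nat.cast_ringChar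
  have h3 : Ideal.Quotient.mk v.asIdeal (2 : 𝓞 K) = 0 := by rw [map_ofNat]; exact this
  rw [Ideal.Quotient.eq_zero_iff_mem, ← val_lt_one_iff (K := K),
    map_ofNat, h2] at h3
  exact lt_irrefl _ h3

theorem Res.mul {v : HeightOneSpectrum (𝓞 K)} {u u' : K} (hu : v.valuation K u = 1)
    (hu' : v.valuation K u' = 1) (h2 : v.valuation K 2 = 1) :
    Res v (u * u') ↔ (Res v u ↔ Res v u') := by
  obtain ⟨r, hr⟩ := exists_int_approx v hu.le
  obtain ⟨r', hr'⟩ := exists_int_approx v hu'.le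
  have hrr : v.valuation K (u * u' - algebraMap (𝓞 K) K (r * r')) < 1 := by
    have : u * u' - algebraMap (𝓞 K) K (r * r') = (u - algebraMap (𝓞 K) K r) * u' +
        algebraMap (𝓞 K) K r * (u' - algebraMap (𝓞 K) K r') := by
      simp only [map_mul]; ring
    rw [this]
    refine Valuation.map_add_lt _ ?_ ?_
    · rwa [map_mul, hu', mul_one]
    · rw [map_mul]; exact mul_lt_one_of_nonneg_of_lt_one_right (v.valuation_le_one _) zero_le hr'
  rw [res_iff hu hr, res_iff hu' hr', res_iff (by rw [map_mul, hu, hu', one_mul]) hrr, map_mul]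
  letI : Field (𝓞 K ⧸ v.asIdeal) := @Ideal.Quotient.field _ _ v.asIdeal v.isMaximal
  have : Finite (𝓞 K ⧸ v.asIdeal) := Ideal.finiteQuotientOfFreeOfNeBot _ v.ne_bot
  letI := Fintype.ofFinite (𝓞 K ⧸ v.asIdeal)
  have hchar := ringChar_ne_two h2
  have ne0 (r : 𝓞 K) (u : K) (hu : v.valuation K u = 1)
      (hr : v.valuation K (u - algebraMap (𝓞 K) K r) < 1) : Ideal.Quotient.mk v.asIdeal r ≠ 0 := by
    rw [Ne, Ideal.Quotient.eq_zero_iff_mem, ← val_lt_one_iff (K := K),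
      valuation_eq_one_of_sub hu hr]
    exact lt_irrefl _
  have ha := ne0 r u hu hr
  have hb := ne0 r' u' hu' hr'
  classical
  rw [← quadraticChar_one_iff_isSquare (mul_ne_zero ha hb), ← quadraticChar_one_iff_isSquare ha,
    ← quadraticChar_one_iff_isSquare hb, map_mul]
  rcases quadraticChar_dichotomy ha with h | h <;> rcases quadraticChar_dichotomy hb with h' | h' <;>
    simp [h, h']

theorem Res.of_sq {v : HeightOneSpectrum (𝓞 K)} (x : K) : Res v (x ^ 2) := ⟨x, by simp⟩

end Res

namespace QuadExt
variable {M L : Type*} [Field M] [NumberField M] [Field L] [NumberField L] [Algebra M L]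
  (Q : QuadExt M L)

/-- The residue field of an inert prime contains the square roots of the residue field below. -/
theorem res_of_inert {w : HeightOneSpectrum (𝓞 L)} (hc : Q.conj w = w) (he : e (M := M) w = 1)
    (h2 : w.valuation L 2 = 1) {u : M} (hu : w.valuation L (algebraMap M L u) = 1) :
    Res w (algebraMap M L u) := by
  set v := w.under (𝓞 M)
  have hu' : v.valuation M u = 1 := by
    have := valuation_algebraMap (M := M) w u
    rwa [hu, he, pow_one, eq_comm] at this
  obtain ⟨r, hr⟩ := exists_int_approx v hu'.le
  have hr2 : w.valuation L (algebraMap M L u - algebraMap (𝓞 L) L (algebraMap (𝓞 M) (𝓞 L) r)) < 1 := by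
    have := valuation_algebraMap (M := M) w (u - algebraMap (𝓞 M) M r)
    rw [he, pow_one] at this
    rw [← this, map_sub] at hr
    exact hr
  rw [res_iff hu hr2]
  letI : Field (𝓞 L ⧸ w.asIdeal) := @Ideal.Quotient.field _ _ w.asIdeal w.isMaximal
  have : Finite (𝓞 L ⧸ w.asIdeal) := Ideal.finiteQuotientOfFreeOfNeBot _ w.ne_bot
  letI := Fintype.ofFinite (𝓞 L ⧸ w.asIdeal)
  letI : Field (𝓞 M ⧸ v.asIdeal) := @Ideal.Quotient.field _ _ v.asIdeal v.isMaximal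
  have : Finite (𝓞 M ⧸ v.asIdeal) := Ideal.finiteQuotientOfFreeOfNeBot _ v.ne_bot
  letI := Fintype.ofFinite (𝓞 M ⧸ v.asIdeal)
  have hchar := ringChar_ne_two h2
  have ne0 : Ideal.Quotient.mk w.asIdeal (algebraMap (𝓞 M) (𝓞 L) r) ≠ 0 := by
    rw [Ne, Ideal.Quotient.eq_zero_iff_mem, ← val_lt_one_iff (K := L),
      valuation_eq_one_of_sub hu hr2]
    exact lt_irrefl _
  have ne0' : Ideal.Quotient.mk v.asIdeal r ≠ 0 := by
    rw [Ne, Ideal.Quotient.eq_zero_iff_mem, ← val_lt_one_iff (K := M),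
      valuation_eq_one_of_sub hu' hr]
    exact lt_irrefl _
  have hcard : Fintype.card (𝓞 L ⧸ w.asIdeal) = Fintype.card (𝓞 M ⧸ v.asIdeal) ^ 2 := by
    have := Q.of_conj_eq hc he
    rw [Ideal.absNorm_apply, Submodule.cardQuot_apply, Ideal.absNorm_apply,
      Submodule.cardQuot_apply] at this
    rw [← Nat.card_eq_fintype_card, ← Nat.card_eq_fintype_card]
    exact this
  set q := Fintype.card (𝓞 M ⧸ v.asIdeal)
  have hodd : ¬ Even q := by
    intro hev
    have h1 : Even (Fintype.card (𝓞 L ⧸ w.asIdeal)) := by rw [hcard]; exact hev.pow_of_ne_zero two_ne_zero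
    exact hchar (FiniteField.even_card_iff_char_two.mpr (Nat.even_iff.mp h1))
  rw [Nat.not_even_iff_odd] at hodd
  obtain ⟨k, hk⟩ := hodd
  rw [FiniteField.isSquare_iff hchar ne0, hcard]
  have h5 : q ^ 2 / 2 = (q - 1) * (k + 1) := by
    have : q ^ 2 = 2 * ((q - 1) * (k + 1)) + 1 := by
      rw [hk]; simp; ring
    omega
  have h6 : Ideal.Quotient.mk v.asIdeal (r ^ (q - 1) - 1) = 0 := by
    rw [map_sub, map_pow, map_one, FiniteField.pow_card_sub_one_eq_one _ ne0', sub_self]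
  rw [Ideal.Quotient.eq_zero_iff_mem] at h6
  have h7 : algebraMap (𝓞 M) (𝓞 L) (r ^ (q - 1) - 1) ∈ w.asIdeal := h6
  rw [← Ideal.Quotient.eq_zero_iff_mem, map_sub, map_sub, map_pow, map_pow, map_one, map_one,
    sub_eq_zero] at h7
  rw [h5, pow_mul, h7, one_pow]

end QuadExt

/-! ### Herbrand quotients of finitely generated groups -/

section Abstract

/-- Doubling, as an endomorphism of an abelian group. -/
def dbl (A : Type*) [AddCommGroup A] : A →+ A := nsmulAddMonoidHom 2

@[simp] lemma dbl_apply {A : Type*} [AddCommGroup A] (a : A) : dbl A a = a + a := by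
  simp [dbl, two_nsmul]

lemma dbl_index_congr {A B : Type*} [AddCommGroup A] [AddCommGroup B] (e : A ≃+ B) :
    (dbl A).range.index = (dbl B).range.index := by
  rw [← AddSubgroup.index_comap_of_surjective (dbl B).range (f := e.toAddMonoidHom) e.surjective]
  congr 1
  ext a
  simp only [AddMonoidHom.mem_range, dbl_apply, AddSubgroup.mem_comap]
  constructor
  · rintro ⟨x, rfl⟩
    exact ⟨e x, by simp⟩
  · rintro ⟨x, hx⟩
    exact ⟨e.symm x, e.injective (by simpa using hx)⟩

lemma dbl_ker_congr {A B : Type*} [AddCommGroup A] [AddCommGroup B] (e : A ≃+ B) :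
    Nat.card (dbl A).ker = Nat.card (dbl B).ker := by
  refine Nat.card_congr ⟨fun x => ⟨e x, ?_⟩, fun x => ⟨e.symm x, ?_⟩, fun x => by simp, fun x => by simp⟩
  · have := x.2
    rw [AddMonoidHom.mem_ker, dbl_apply] at this ⊢
    rw [← map_add, this, map_zero]
  · have := x.2
    rw [AddMonoidHom.mem_ker, dbl_apply] at this ⊢
    rw [← map_add, this, map_zero]

lemma dbl_index_prod (A B : Type*) [AddCommGroup A] [AddCommGroup B] :
    (dbl (A × B)).range.index = (dbl A).range.index * (dbl B).range.index := by
  rw [← AddSubgroup.index_prod]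
  congr 1
  ext ⟨a, b⟩
  simp [AddSubgroup.mem_prod]

lemma dbl_index_free (A : Type*) [AddCommGroup A] [Module.Free ℤ A] [Module.Finite ℤ A] :
    (dbl A).range.index = 2 ^ Module.finrank ℤ A := by
  rw [← ModN.natCard_eq A 2, AddSubgroup.index]
  refine Nat.card_congr (QuotientAddGroup.quotientAddEquivOfEq ?_).toEquiv
  ext a
  simp only [AddMonoidHom.mem_range, dbl_apply, Submodule.mem_toAddSubgroup, LinearMap.mem_range]
  exact exists_congr fun x => by
    rw [LinearMap.lsmul_apply, natCast_zsmul, two_nsmul]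

lemma dbl_index_finite (T : Type*) [AddCommGroup T] [Finite T] :
    (dbl T).range.index = Nat.card (dbl T).ker := by
  have h1 := AddSubgroup.index_mul_card (dbl T).range
  have h2 := AddSubgroup.index_mul_card (dbl T).ker
  rw [AddSubgroup.index_ker] at h2
  have : 0 < Nat.card (dbl T).range := Nat.card_pos
  nlinarith

lemma finrank_int_finite (T : Type*) [AddCommGroup T] [Finite T] : Module.finrank ℤ T = 0 := by
  rw [Module.finrank_eq_zero_iff_isTorsion]
  intro x
  refine ⟨⟨Nat.card T, by simpa [mem_nonZeroDivisors_iff_ne_zero] using Nat.card_pos.ne'⟩, ?_⟩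
  change (Nat.card T : ℤ) • x = 0
  rw [natCast_zsmul, card_nsmul_eq_zero']

/-- Rank-nullity over `ℤ`. -/
lemma finrank_int_range_add_ker {A B : Type*} [AddCommGroup A] [AddCommGroup B] [Module.Finite ℤ A]
    (f : A →ₗ[ℤ] B) : Module.finrank ℤ (LinearMap.range f) + Module.finrank ℤ (LinearMap.ker f) =
      Module.finrank ℤ A := by
  rw [← (LinearMap.ker f).finrank_quotient_add_finrank, f.quotKerEquivRange.finrank_eq]

/-- For a finitely generated abelian group `A` of rank `r`, `[A : 2A] = 2 ^ r * #A[2]`. -/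
lemma dbl_index (A : Type*) [AddCommGroup A] [Module.Finite ℤ A] :
    (dbl A).range.index = 2 ^ Module.finrank ℤ A * Nat.card (dbl A).ker := by
  have : AddGroup.FG A := Module.Finite.iff_addGroup_fg.1 inferInstance
  obtain ⟨n, ι, _, p, hp, e, ⟨E⟩⟩ := AddCommGroup.equiv_free_prod_directSum_zmod A
  have : ∀ i, NeZero (p i ^ e i) := fun i => ⟨pow_ne_zero _ (hp i).ne_zero⟩
  let T := DirectSum ι fun i => ZMod (p i ^ e i)
  have : Finite T := Finite.of_equiv _ (DirectSum.addEquivProd (fun i => ZMod (p i ^ e i))).symm.toEquiv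
  rw [dbl_index_congr E, dbl_ker_congr E, dbl_index_prod, dbl_index_free, dbl_index_finite T]
  congr 1
  · congr 1
    rw [LinearEquiv.finrank_eq E.toIntLinearEquiv]
    have h := finrank_int_range_add_ker (LinearMap.fst ℤ (Fin n →₀ ℤ) T)
    rw [LinearMap.range_eq_top.2 LinearMap.fst_surjective, finrank_top] at h
    have h2 : Module.finrank ℤ (LinearMap.ker (LinearMap.fst ℤ (Fin n →₀ ℤ) T)) = 0 := by
      have : Finite (LinearMap.ker (LinearMap.fst ℤ (Fin n →₀ ℤ) T)) :=
        Finite.of_injective (fun x => x.1.2) (by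
          rintro ⟨⟨a, b⟩, hx⟩ ⟨⟨a', b'⟩, hx'⟩ h
          simp at hx hx' h
          simp [hx, hx', h])
      exact finrank_int_finite (LinearMap.ker (LinearMap.fst ℤ (Fin n →₀ ℤ) T))
    rw [← h, h2, add_zero, Module.finrank_finsupp_self, Fintype.card_fin]
  · refine Nat.card_congr ⟨fun x => ⟨(0, x), ?_⟩, fun x => ⟨x.1.2, ?_⟩, fun x => rfl, fun x => ?_⟩
    · have := x.2
      rw [AddMonoidHom.mem_ker, dbl_apply] at this ⊢
      ext1 <;> simp [this]
    · have := x.2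
      rw [AddMonoidHom.mem_ker, dbl_apply] at this ⊢
      exact congrArg Prod.snd this
    · obtain ⟨⟨a, b⟩, hx⟩ := x
      rw [AddMonoidHom.mem_ker, dbl_apply] at hx
      have ha : a + a = 0 := congrArg Prod.fst hx
      have ha : a = 0 := by
        rw [← two_nsmul] at ha
        simpa using ha
      simp [ha]

/-- The Herbrand quotient computation for a group of order two acting on a finitely generated
group `A` with vanishing first cohomology; `B` is the group of invariants, `ν` the norm. -/
lemma herbrand_index {A B : Type*} [AddCommGroup A] [AddCommGroup B] [Module.Finite ℤ A]
    [Module.Finite ℤ B] (σ : A →+ A) (i : B →+ A) (ν : A →+ B)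
    (hi : Function.Injective i) (hfix : ∀ a, σ a = a → ∃ b, i b = a) (hfix' : ∀ b, σ (i b) = i b)
    (hν : ∀ a, i (ν a) = a + σ a) (hσ : ∀ a, σ (σ a) = a)
    (H1 : ∀ a, a + σ a = 0 → ∃ b, a = b - σ b) (ε : B) (hε : ε ≠ 0) (hε2 : ε + ε = 0)
    (htors : ∀ a : A, a + a = 0 → a = 0 ∨ a = i ε) :
    ν.range.index * 2 ^ Module.finrank ℤ A = 2 ^ (2 * Module.finrank ℤ B) := by
  let N := ν.ker
  have hN : ∀ a, a ∈ N ↔ a + σ a = 0 := fun a => by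
    rw [AddMonoidHom.mem_ker, ← hν, map_eq_zero_iff _ hi]
  have hνi : ∀ b, ν (i b) = b + b := fun b => hi (by rw [hν, hfix', map_add])
  let δ : A →+ A := AddMonoidHom.id A - σ
  have hδ : ∀ a, δ a = a - σ a := fun a => rfl
  have hδr : δ.range = N := by
    ext a
    rw [hN, AddMonoidHom.mem_range]
    constructor
    · rintro ⟨x, rfl⟩
      rw [hδ, map_sub, hσ]; abel
    · intro h
      obtain ⟨b, hb⟩ := H1 a h
      exact ⟨b, hb.symm⟩
  -- the preimages of `2B` under the norm and of `2N` under `1 - σ` agree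
  have h1 : (dbl B).range.comap ν = (N.map (dbl A)).comap δ := by
    ext a
    simp only [AddSubgroup.mem_comap, AddMonoidHom.mem_range, AddSubgroup.mem_map, dbl_apply, hδ]
    constructor
    · rintro ⟨b, hb⟩
      refine ⟨a - i b, ?_, ?_⟩
      · change ν _ = 0
        rw [map_sub, hνi, hb, sub_self]
      · have := hν a
        rw [← hb, map_add] at this
        have h3 : σ a = i b + i b - a := by rw [this]; abel
        rw [h3]; abel
    · rintro ⟨x, hx, hxa⟩
      rw [hN] at hx
      have h3 : σ (a - x) = a - x := by
        have h4 : σ x = -x := by rw [eq_neg_iff_add_eq_zero, add_comm, hx]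
        have h5 : σ a = a - (x + x) := by rw [hxa]; abel
        rw [map_sub, h4, h5]; abel
      obtain ⟨b, hb⟩ := hfix _ h3
      refine ⟨b, ?_⟩
      rw [← hνi, hb, map_sub, (show ν x = 0 from (hN x).2 hx), sub_zero]
  have h2 := congrArg AddSubgroup.index h1
  rw [AddSubgroup.index_comap, AddSubgroup.index_comap, hδr] at h2
  have h3 : (dbl B).range.relIndex ν.range * ν.range.index = (dbl B).range.index := by
    refine AddSubgroup.relIndex_mul_index ?_
    rintro _ ⟨b, rfl⟩
    exact ⟨i b, by rw [hνi, dbl_apply]⟩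
  have h4 : (N.map (dbl A)).relIndex N = (dbl N).range.index := by
    rw [AddSubgroup.relIndex]
    congr 1
    ext ⟨x, hx⟩
    simp only [AddSubgroup.mem_addSubgroupOf, AddSubgroup.mem_map, AddMonoidHom.mem_range,
      dbl_apply, Subtype.exists, Subtype.ext_iff, AddSubgroup.coe_add, exists_prop]
  have hfin : Module.Finite ℤ N := by
    change Module.Finite ℤ (AddSubgroup.toIntSubmodule N)
    infer_instance
  have hkB : Nat.card (dbl B).ker = 2 := by
    rw [Nat.card_eq_two_iff]
    refine ⟨0, ⟨ε, by simpa using hε2⟩, by simpa [Subtype.ext_iff] using hε.symm, ?_⟩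
    ext ⟨x, hx⟩
    rw [AddMonoidHom.mem_ker, dbl_apply] at hx
    have := htors (i x) (by rw [← map_add, hx, map_zero])
    rw [map_eq_zero_iff _ hi, hi.eq_iff] at this
    simpa [Subtype.ext_iff] using this
  have hkN : Nat.card (dbl N).ker = 2 := by
    rw [Nat.card_eq_two_iff]
    have h0 : i ε ∈ N := by
      change ν _ = 0
      rw [hνi, hε2]
    refine ⟨0, ⟨⟨i ε, h0⟩, ?_⟩, ?_, ?_⟩
    · rw [AddMonoidHom.mem_ker, dbl_apply]
      ext
      simp [← map_add, hε2]
    · intro h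
      apply hε
      have := congrArg (fun x => (x.1 : A)) h
      exact ((map_eq_zero_iff _ hi).1 this.symm)
    · ext ⟨⟨x, hxN⟩, hx⟩
      rw [AddMonoidHom.mem_ker, dbl_apply] at hx
      have := htors x (congrArg Subtype.val hx)
      simpa [Subtype.ext_iff] using this
  rw [h4, dbl_index, hkN] at h2
  rw [h2, dbl_index, hkB] at h3
  have hrk : Module.finrank ℤ A = Module.finrank ℤ B + Module.finrank ℤ N := by
    have h := finrank_int_range_add_ker ν.toIntLinearMap
    have hq := (LinearMap.range ν.toIntLinearMap).finrank_quotient_add_finrank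
    have hf : Finite (B ⧸ LinearMap.range ν.toIntLinearMap) := by
      have : ν.range.index ≠ 0 := by
        rintro h0
        rw [h0, mul_zero] at h3
        have : 0 < 2 ^ Module.finrank ℤ B * 2 := by positivity
        omega
      have : ν.range.FiniteIndex := ⟨this⟩
      exact AddSubgroup.finite_quotient_of_finiteIndex (H := ν.range)
    rw [finrank_int_finite, zero_add] at hq
    rw [← h, hq]
    rfl
  rw [hrk, two_mul, pow_add, pow_add]
  have h5 : 2 ^ Module.finrank ℤ N * ν.range.index = 2 ^ Module.finrank ℤ B := by
    have := h3
    nlinarith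
  rw [← h5]; ring

end Abstract

/-! ### `S`-units -/

section SUnits

variable {K : Type*} [Field K] [NumberField K]

/-- The logarithm of the `v`-adic valuation, so that a uniformizer has `vl v π = -1`. The junk
value at `0` is `0`. -/
noncomputable def vl (v : HeightOneSpectrum (𝓞 K)) (x : K) : ℤ := WithZero.log (v.valuation K x)

lemma val_ne_zero (v : HeightOneSpectrum (𝓞 K)) {x : K} (hx : x ≠ 0) : v.valuation K x ≠ 0 :=
  (Valuation.ne_zero_iff _).2 hx

lemma exp_vl (v : HeightOneSpectrum (𝓞 K)) {x : K} (hx : x ≠ 0) :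
    WithZero.exp (vl v x) = v.valuation K x := WithZero.exp_log (val_ne_zero v hx)

lemma vl_mul (v : HeightOneSpectrum (𝓞 K)) {x y : K} (hx : x ≠ 0) (hy : y ≠ 0) :
    vl v (x * y) = vl v x + vl v y := by
  rw [vl, map_mul, WithZero.log_mul (val_ne_zero v hx) (val_ne_zero v hy)]; rfl

@[simp] lemma vl_one (v : HeightOneSpectrum (𝓞 K)) : vl v 1 = 0 := by simp [vl]

lemma vl_pow (v : HeightOneSpectrum (𝓞 K)) (x : K) (n : ℕ) :
    vl v (x ^ n) = n * vl v x := by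
  rw [vl, map_pow, WithZero.log_pow, nsmul_eq_mul]; rfl

lemma vl_inv (v : HeightOneSpectrum (𝓞 K)) (x : K) : vl v x⁻¹ = -vl v x := by
  rw [vl, map_inv₀, WithZero.log_inv]; rfl

lemma vl_eq_zero (v : HeightOneSpectrum (𝓞 K)) {x : K} (hx : x ≠ 0) :
    vl v x = 0 ↔ v.valuation K x = 1 := by
  rw [← exp_vl v hx, ← WithZero.exp_zero, WithZero.exp_inj]

lemma vl_zpow (v : HeightOneSpectrum (𝓞 K)) (x : K) (n : ℤ) :
    vl v (x ^ n) = n * vl v x := by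
  rw [vl, map_zpow₀, WithZero.log_zpow, smul_eq_mul]; rfl

/-- The group of `S`-units of `K`, for a finite set `S` of finite primes. -/
noncomputable abbrev SU (S : Finset (HeightOneSpectrum (𝓞 K))) : Subgroup Kˣ := Set.unit (S : Set (HeightOneSpectrum (𝓞 K))) K

lemma mem_SU {S : Finset (HeightOneSpectrum (𝓞 K))} {x : Kˣ} :
    x ∈ SU S ↔ ∀ v ∉ S, v.valuation K (x : K) = 1 := Iff.rfl

lemma span_val_le {g : 𝓞 K} {I : Ideal (𝓞 K)} (h : I = Ideal.span {g})
    (v : HeightOneSpectrum (𝓞 K)) (n : ℕ) :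
    v.valuation K (algebraMap (𝓞 K) K g) ≤ WithZero.exp (-(n : ℤ)) ↔ I ≤ v.asIdeal ^ n := by
  rw [v.valuation_of_algebraMap, v.intValuation_le_pow_iff_mem, h, Ideal.span_singleton_le_iff_mem]

lemma span_val_eq_one {g : 𝓞 K} {I : Ideal (𝓞 K)} (h : I = Ideal.span {g})
    (v : HeightOneSpectrum (𝓞 K)) :
    v.valuation K (algebraMap (𝓞 K) K g) = 1 ↔ ¬ I ≤ v.asIdeal := by
  rw [v.valuation_eq_one_iff_notMem, h, Ideal.span_singleton_le_iff_mem]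

lemma pow_le_prime {v w : HeightOneSpectrum (𝓞 K)} {n : ℕ} (h : w.asIdeal ^ n ≤ v.asIdeal) :
    w = v := by
  have h1 := Ideal.IsPrime.le_of_pow_le h
  exact HeightOneSpectrum.ext (w.isMaximal.eq_of_le v.isPrime.ne_top h1)

/-- Some power of every prime is principal. -/
lemma exists_gen_pow (w : HeightOneSpectrum (𝓞 K)) : ∃ g : K, g ≠ 0 ∧
    vl w g = -(Fintype.card (ClassGroup (𝓞 K)) : ℤ) ∧ ∀ v ≠ w, v.valuation K g = 1 := by
  set h := Fintype.card (ClassGroup (𝓞 K))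
  have h1 : ClassGroup.mk0 ⟨w.asIdeal, mem_nonZeroDivisors_of_ne_zero w.ne_bot⟩ ^ h = 1 :=
    pow_card_eq_one
  rw [← map_pow, ClassGroup.mk0_eq_one_iff] at h1
  obtain ⟨g, hg⟩ := h1
  have hg' : w.asIdeal ^ h = Ideal.span {g} := by simpa using hg
  have hg0 : g ≠ 0 := by
    rintro rfl
    rw [Ideal.span_singleton_eq_bot.2 rfl] at hg'
    exact pow_ne_zero h w.ne_bot hg'
  have hgK : algebraMap (𝓞 K) K g ≠ 0 := by simpa using hg0
  refine ⟨algebraMap (𝓞 K) K g, hgK, ?_, fun v hv => ?_⟩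
  · have h2 := (span_val_le hg' w h).2 le_rfl
    have h3 := (span_val_le hg' w (h + 1)).not.2 (fun hle =>
      absurd (Ideal.pow_right_strictAnti w.asIdeal w.ne_bot w.isPrime.ne_top (Nat.lt_succ_self h))
        (not_lt_of_ge hle))
    rw [← exp_vl w hgK, WithZero.exp_le_exp] at h2 h3
    push_cast at h3
    omega
  · rw [span_val_eq_one hg']
    exact fun hle => hv (pow_le_prime hle).symm

/-- The logarithmic valuation map on `S`-units. -/
noncomputable def vlMap (S : Finset (HeightOneSpectrum (𝓞 K))) :
    Additive (SU S) →ₗ[ℤ] (S → ℤ) :=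
  AddMonoidHom.toIntLinearMap
    { toFun := fun x v => vl v.1 ((x.toMul : Kˣ) : K)
      map_zero' := by ext v; simp
      map_add' := fun x y => by
        ext v
        simp only [toMul_add, Subgroup.coe_mul, Units.val_mul, Pi.add_apply]
        exact vl_mul _ (Units.ne_zero _) (Units.ne_zero _) }

lemma vlMap_apply (S : Finset (HeightOneSpectrum (𝓞 K))) (x : Additive (SU S)) (v : S) :
    vlMap S x v = vl v.1 ((x.toMul : Kˣ) : K) := rfl

lemma SU_val_eq_one_of_ker {S : Finset (HeightOneSpectrum (𝓞 K))} {x : Additive (SU S)}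
    (hx : x ∈ LinearMap.ker (vlMap S)) (v : HeightOneSpectrum (𝓞 K)) :
    v.valuation K ((x.toMul : Kˣ) : K) = 1 := by
  by_cases hv : v ∈ S
  · have := congrFun (LinearMap.mem_ker.1 hx) ⟨v, hv⟩
    rw [vlMap_apply] at this
    exact (vl_eq_zero v (Units.ne_zero _)).1 this
  · exact x.toMul.2 v hv

lemma unit_val_eq_one (v : HeightOneSpectrum (𝓞 K)) (u : (𝓞 K)ˣ) :
    v.valuation K (algebraMap (𝓞 K) K (u : 𝓞 K)) = 1 := by
  rw [v.valuation_eq_one_iff_notMem]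
  exact fun h => v.isPrime.ne_top (Ideal.eq_top_of_isUnit_mem _ h u.isUnit)

/-- The units of the ring of integers are the kernel of the valuation map on `S`-units. -/
noncomputable def unitsToKer (S : Finset (HeightOneSpectrum (𝓞 K))) :
    Additive (𝓞 K)ˣ →ₗ[ℤ] LinearMap.ker (vlMap S) :=
  AddMonoidHom.toIntLinearMap
    { toFun := fun u => ⟨Additive.ofMul ⟨Units.map (algebraMap (𝓞 K) K) u.toMul, fun v _ => unit_val_eq_one v u.toMul⟩, by
        rw [LinearMap.mem_ker]
        ext v
        rw [vlMap_apply]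
        exact (vl_eq_zero v.1 (Units.ne_zero _)).2 (unit_val_eq_one v.1 u.toMul)⟩
      map_zero' := by
        ext; simp
      map_add' := fun u u' => by
        ext; simp }

lemma unitsToKer_bij (S : Finset (HeightOneSpectrum (𝓞 K))) :
    Function.Bijective (unitsToKer S) := by
  have hval : ∀ u, ((((unitsToKer S u).1.toMul : SU S) : Kˣ) : K) =
    algebraMap (𝓞 K) K (u.toMul : 𝓞 K) := fun u => rfl
  constructor
  · intro u u' h
    have h2 := hval u
    rw [h, hval] at h2
    have h3 := IsFractionRing.injective (𝓞 K) K h2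
    exact Additive.toMul.injective (Units.ext h3.symm)
  · intro x
    obtain ⟨y, hy⟩ := HeightOneSpectrum.mem_integers_of_valuation_le_one K
      ((x.1.toMul : Kˣ) : K) (fun v => (SU_val_eq_one_of_ker x.2 v).le)
    obtain ⟨z, hz⟩ := HeightOneSpectrum.mem_integers_of_valuation_le_one K
      (((x.1.toMul : Kˣ)⁻¹ : Kˣ) : K) (fun v => by
        rw [Units.val_inv_eq_inv_val, map_inv₀, SU_val_eq_one_of_ker x.2 v, inv_one])
    have hyz : y * z = 1 := by
      apply IsFractionRing.injective (𝓞 K) K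
      rw [map_mul, hy, hz, map_one, Units.mul_inv]
    refine ⟨Additive.ofMul ⟨y, z, hyz, by rw [mul_comm, hyz]⟩, ?_⟩
    apply Subtype.ext
    apply Additive.toMul.injective
    apply Subtype.ext
    apply Units.ext
    rw [hval, ← hy]; rfl

lemma vlMap_finrank_range (S : Finset (HeightOneSpectrum (𝓞 K))) :
    Module.finrank ℤ (LinearMap.range (vlMap S)) = S.card := by
  classical
  apply le_antisymm
  · simpa using Submodule.finrank_le (LinearMap.range (vlMap S))
  · set h := Fintype.card (ClassGroup (𝓞 K))
    have hh : (h : ℤ) ≠ 0 := by simp [h]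
    have h1 : LinearMap.range (LinearMap.lsmul ℤ (S → ℤ) (h : ℤ)) ≤ LinearMap.range (vlMap S) := by
      rintro _ ⟨f, rfl⟩
      choose g hg0 hg1 hg2 using exists_gen_pow (K := K)
      have hf : LinearMap.lsmul ℤ (S → ℤ) (h : ℤ) f = ∑ w : S, f w • (Pi.single w (h : ℤ)) := by
        ext v
        simp [Pi.single_apply, Finset.sum_apply, mul_comm]
      rw [hf]
      refine Submodule.sum_mem _ fun w _ => Submodule.smul_mem _ _ ?_
      have hmem : Units.mk0 (g w) (hg0 w) ∈ SU S := fun v hv => hg2 w v (fun h => hv (h ▸ w.2))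
      refine ⟨-Additive.ofMul ⟨Units.mk0 (g w) (hg0 w), hmem⟩, ?_⟩
      rw [map_neg]
      ext v
      rw [Pi.neg_apply, vlMap_apply]
      by_cases hvw : v = w
      · subst hvw
        simp [hg1, h]
      · rw [Pi.single_eq_of_ne hvw, neg_eq_zero, vl_eq_zero _ (Units.ne_zero _)]
        exact hg2 w v (fun h => hvw (Subtype.ext h))
    have h2 := Submodule.finrank_mono h1
    rw [LinearMap.finrank_range_of_inj] at h2
    · simpa using h2
    · intro a b hab
      exact smul_right_injective _ hh hab

instance SU_module_finite (S : Finset (HeightOneSpectrum (𝓞 K))) :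
    Module.Finite ℤ (Additive (SU S)) := by
  have h1 : Module.Finite ℤ (LinearMap.ker (vlMap S)) :=
    Module.Finite.of_surjective (unitsToKer S) (unitsToKer_bij S).2
  have h2 : Module.Finite ℤ (LinearMap.range (vlMap S)) := inferInstance
  have h3 : Module.Finite ℤ (Additive (SU S) ⧸ LinearMap.ker (vlMap S)) :=
    Module.Finite.equiv (vlMap S).quotKerEquivRange.symm
  exact Module.Finite.of_submodule_quotient (LinearMap.ker (vlMap S))

/-- Dirichlet's `S`-unit theorem: the rank. -/
lemma SU_finrank (S : Finset (HeightOneSpectrum (𝓞 K))) :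
    Module.finrank ℤ (Additive (SU S)) + 1 = Fintype.card (InfinitePlace K) + S.card := by
  rw [← finrank_int_range_add_ker (vlMap S), vlMap_finrank_range,
    ← (LinearEquiv.ofBijective (unitsToKer S) (unitsToKer_bij S)).finrank_eq,
    NumberField.Units.finrank_eq, NumberField.Units.rank]
  have : 0 < Fintype.card (InfinitePlace K) := Fintype.card_pos
  omega

/-- `[U : U²] = 2 ^ (number of places in S)` for the `S`-units `U`. -/
lemma SU_sq_index (S : Finset (HeightOneSpectrum (𝓞 K))) :
    ((SU S).map (powMonoidHom 2)).relIndex (SU S) =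
      2 ^ (Fintype.card (InfinitePlace K) + S.card) := by
  have h := dbl_index (Additive (SU S))
  have hk : Nat.card (dbl (Additive (SU S))).ker = 2 := by
    have hm1 : (-1 : Kˣ) ∈ SU S := fun v _ => by simp
    rw [Nat.card_eq_two_iff]
    refine ⟨0, ⟨Additive.ofMul ⟨-1, hm1⟩, ?_⟩, ?_, ?_⟩
    · rw [AddMonoidHom.mem_ker, dbl_apply]
      apply Additive.toMul.injective
      apply Subtype.ext
      simp
    · intro h
      have h1 := congrArg (fun x => ((x.1.toMul : SU S) : Kˣ)) h
      have h2 := congrArg (Units.val) h1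
      simp at h2
      norm_num [eq_neg_iff_add_eq_zero] at h2
    · ext ⟨x, hx⟩
      rw [AddMonoidHom.mem_ker, dbl_apply] at hx
      have h1 := congrArg (fun x => (((x.toMul : SU S) : Kˣ) : K)) hx
      simp only [toMul_add, Subgroup.coe_mul, Units.val_mul, toMul_zero, Subgroup.coe_one, Units.val_one] at h1
      have h2 := mul_self_eq_one_iff.1 h1
      simp only [Set.mem_insert_iff, Set.mem_singleton_iff, Set.mem_univ, iff_true]
      refine h2.imp (fun h => ?_) (fun h => ?_)
      · apply Subtype.ext
        apply Additive.toMul.injective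
        apply Subtype.ext
        exact Units.ext h
      · apply Subtype.ext
        apply Additive.toMul.injective
        apply Subtype.ext
        exact Units.ext h
  rw [hk, ← pow_succ, SU_finrank] at h
  rw [← h, Subgroup.relIndex, ← Subgroup.index_toAddSubgroup]
  congr 1
  ext x
  simp only [AddMonoidHom.mem_range, dbl_apply]
  change (x.toMul : Kˣ) ∈ (SU S).map (powMonoidHom 2) ↔ _
  rw [Subgroup.mem_map]
  constructor
  · rintro ⟨y, hy, hxy⟩
    refine ⟨Additive.ofMul ⟨y, hy⟩, ?_⟩
    apply Additive.toMul.injective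
    apply Subtype.ext
    rw [← hxy]
    simp [sq]
  · rintro ⟨y, rfl⟩
    exact ⟨y.toMul, y.toMul.2, by simp [sq]⟩

/-- The finite primes outside `S` have `S`-principal generators, i.e. the primes in `S` generate
the class group. -/
def ClassGen (S : Finset (HeightOneSpectrum (𝓞 K))) : Prop :=
  ∀ w ∉ S, ∃ p : K, p ≠ 0 ∧ vl w p = -1 ∧ ∀ v ∉ S, v ≠ w → v.valuation K p = 1

lemma exists_classGen (T : Finset (HeightOneSpectrum (𝓞 K))) :
    ∃ S, T ⊆ S ∧ ClassGen S := by
  classical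
  choose J hJ using ClassGroup.mk0_surjective (R := 𝓞 K)
  have hfin : ∀ c, {v : HeightOneSpectrum (𝓞 K) | v.asIdeal ∣ (J c : Ideal (𝓞 K))}.Finite :=
    fun c => Ideal.finite_factors (nonZeroDivisors.ne_zero (J c).2)
  refine ⟨T ∪ Finset.univ.biUnion fun c => (hfin c).toFinset, Finset.subset_union_left, ?_⟩
  intro w hw
  simp only [Finset.mem_union, Finset.mem_biUnion, Finset.mem_univ, true_and, Set.Finite.mem_toFinset,
    Set.mem_setOf_eq, not_or, not_exists] at hw
  let W : nonZeroDivisors (Ideal (𝓞 K)) := ⟨w.asIdeal, mem_nonZeroDivisors_of_ne_zero w.ne_bot⟩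
  set c := (ClassGroup.mk0 W)⁻¹
  have h1 : ClassGroup.mk0 (W * J c) = 1 := by rw [map_mul, hJ, mul_inv_cancel]
  rw [ClassGroup.mk0_eq_one_iff] at h1
  obtain ⟨g, hg⟩ := h1
  have hg' : w.asIdeal * (J c : Ideal (𝓞 K)) = Ideal.span {g} := by simpa using hg
  have hg0 : g ≠ 0 := by
    rintro rfl
    rw [Ideal.span_singleton_eq_bot.2 rfl] at hg'
    exact mul_ne_zero w.ne_bot (nonZeroDivisors.ne_zero (J c).2) hg'
  have hgK : algebraMap (𝓞 K) K g ≠ 0 := by simpa using hg0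
  refine ⟨algebraMap (𝓞 K) K g, hgK, ?_, fun v hv hvw => ?_⟩
  have hle0 : w.asIdeal * (J c : Ideal (𝓞 K)) ≤ w.asIdeal := Ideal.mul_le_left
  · have h2 := (span_val_le hg' w 1).2 (by rw [pow_one]; exact hle0)
    have h3 := (span_val_le hg' w 2).not.2 (fun hle => by
      have h4 := Ideal.dvd_iff_le.2 hle
      rw [sq] at h4
      exact hw.2 c (mul_dvd_mul_iff_left w.ne_bot |>.1 h4))
    rw [← exp_vl w hgK, WithZero.exp_le_exp] at h2 h3
    push_cast at h2 h3
    omega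
  · rw [span_val_eq_one hg']
    intro hle
    simp only [Finset.mem_union, Finset.mem_biUnion, Finset.mem_univ, true_and,
      Set.Finite.mem_toFinset, Set.mem_setOf_eq, not_or, not_exists] at hv
    rcases (Ideal.IsPrime.mul_le v.isPrime).1 hle with h | h
    · exact hvw (pow_le_prime (n := 1) (by rwa [pow_one])).symm
    · exact hv.2 c (Ideal.dvd_iff_le.2 h)

end SUnits

/-! ### The first inequality -/

section Gen
variable {K : Type*} [Field K] [NumberField K]

lemma vl_support_finite {x : K} (hx : x ≠ 0) : {v : HeightOneSpectrum (𝓞 K) | vl v x ≠ 0}.Finite := by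
  refine ((HeightOneSpectrum.Support.finite (𝓞 K) x).union
    (HeightOneSpectrum.Support.finite (𝓞 K) x⁻¹)).subset ?_
  intro v hv
  rw [Set.mem_setOf_eq, Ne, vl_eq_zero v hx] at hv
  rcases lt_or_gt_of_ne hv with h | h
  · right
    change 1 < v.valuation K x⁻¹
    rw [map_inv₀]
    exact (one_lt_inv₀ (zero_lt_iff.2 (val_ne_zero v hx))).2 h
  · left; exact h

lemma vl_prod {ι : Type*} (v : HeightOneSpectrum (𝓞 K)) (T : Finset ι) (f : ι → K)
    (hf : ∀ i ∈ T, f i ≠ 0) : vl v (∏ i ∈ T, f i) = ∑ i ∈ T, vl v (f i) := by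
  classical
  induction T using Finset.induction_on with
  | empty => simp
  | insert a T ha ih =>
    rw [Finset.prod_insert ha, Finset.sum_insert ha, vl_mul, ih]
    · exact fun i hi => hf i (Finset.mem_insert_of_mem hi)
    · exact hf a (Finset.mem_insert_self a T)
    · exact Finset.prod_ne_zero_iff.2 fun i hi => hf i (Finset.mem_insert_of_mem hi)

/-- If `S` generates the class group, valuations outside `S` can be prescribed. -/
lemma ClassGen.exists_vl {S : Finset (HeightOneSpectrum (𝓞 K))} (hS : ClassGen S)
    (n : HeightOneSpectrum (𝓞 K) → ℤ) (T : Finset (HeightOneSpectrum (𝓞 K))) :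
    ∃ y : K, y ≠ 0 ∧ (∀ v ∉ S, v ∈ T → vl v y = n v) ∧ (∀ v ∉ S, v ∉ T → vl v y = 0) := by
  classical
  choose! p hp0 hp1 hp2 using hS
  have hne : ∀ w ∈ T \ S, p w ^ (-n w) ≠ 0 := fun w hw =>
    zpow_ne_zero _ (hp0 w (Finset.mem_sdiff.1 hw).2)
  have key : ∀ v ∉ S, vl v (∏ w ∈ T \ S, p w ^ (-n w)) = if v ∈ T then n v else 0 := by
    intro v hv
    rw [vl_prod _ _ _ hne]
    have : ∀ w ∈ T \ S, vl v (p w ^ (-n w)) = if v = w then n v else 0 := by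
      intro w hw
      rw [vl_zpow]
      have hw' := (Finset.mem_sdiff.1 hw).2
      split_ifs with h
      · subst h; rw [hp1 v hw']; ring
      · rw [(vl_eq_zero v (hp0 w hw')).2 (hp2 w hw' v hv h), mul_zero]
    rw [Finset.sum_congr rfl this, Finset.sum_ite_eq]
    simp [hv]
  refine ⟨_, Finset.prod_ne_zero_iff.2 hne, fun v hv hT => ?_, fun v hv hT => ?_⟩
  · rw [key v hv, if_pos hT]
  · rw [key v hv, if_neg hT]

lemma ClassGen.mono {S T : Finset (HeightOneSpectrum (𝓞 K))} (hS : ClassGen S) (h : S ⊆ T) :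
    ClassGen T := by
  intro w hw
  obtain ⟨p, h0, h1, h2⟩ := hS w (fun hh => hw (h hh))
  exact ⟨p, h0, h1, fun v hv hne => h2 v (fun hh => hv (h hh)) hne⟩

end Gen

namespace QuadExt

variable {M L : Type*} [Field M] [NumberField M] [Field L] [NumberField L] [Algebra M L]
  (Q : QuadExt M L)

/-- A prime of `M` which does not split in `L`. -/
def NonSplit (v : HeightOneSpectrum (𝓞 M)) : Prop := ∃ w, w.under (𝓞 M) = v ∧ Q.conj w = w

theorem NonSplit.conj_eq {v : HeightOneSpectrum (𝓞 M)} (h : Q.NonSplit v)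
    {w : HeightOneSpectrum (𝓞 L)} (hw : w.under (𝓞 M) = v) : Q.conj w = w := by
  obtain ⟨w', hw', hc⟩ := h
  rcases Q.eq_or_eq_conj (hw'.trans hw.symm) with rfl | rfl
  · exact hc
  · rw [hc, hc]

/-- The primes of `L` above a finite set `S` of primes of `M`. A split prime contributes two of them,
whence the lower bound. -/
theorem exists_above_finset (S : Finset (HeightOneSpectrum (𝓞 M))) [DecidablePred Q.NonSplit] :
    ∃ T : Finset (HeightOneSpectrum (𝓞 L)), (∀ w, w ∈ T ↔ w.under (𝓞 M) ∈ S) ∧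
      2 * S.card ≤ T.card + (S.filter Q.NonSplit).card := by
  classical
  choose w0 hw0 using exists_above (M := M) (L := L)
  have hinj : Function.Injective w0 := fun v v' h => by rw [← hw0 v, h, hw0]
  refine ⟨S.image w0 ∪ S.image (fun v => Q.conj (w0 v)), fun w => ?_, ?_⟩
  · simp only [Finset.mem_union, Finset.mem_image]
    constructor
    · rintro (⟨v, hv, rfl⟩ | ⟨v, hv, rfl⟩)
      · rwa [hw0]
      · rwa [Q.under_conj, hw0]
    · intro h
      rcases Q.eq_or_eq_conj (hw0 (w.under (𝓞 M))) with h1 | h1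
      · exact Or.inl ⟨_, h, h1.symm⟩
      · exact Or.inr ⟨_, h, h1.symm⟩
  · have hd : Disjoint (S.image w0)
        ((S.filter (fun v => ¬ Q.NonSplit v)).image (fun v => Q.conj (w0 v))) := by
      rw [Finset.disjoint_left]
      intro w hw hw'
      simp only [Finset.mem_image, Finset.mem_filter] at hw hw'
      obtain ⟨v, hv, rfl⟩ := hw
      obtain ⟨v', ⟨hv', hns⟩, h⟩ := hw'
      have h2 : v' = v := by
        have := congrArg (fun w => w.under (𝓞 M)) h
        simpa only [Q.under_conj, hw0] using this
      subst h2
      exact hns ⟨_, hw0 _, h⟩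
    have h1 : (S.image w0 ∪
        (S.filter (fun v => ¬ Q.NonSplit v)).image (fun v => Q.conj (w0 v))).card ≤
        (S.image w0 ∪ S.image (fun v => Q.conj (w0 v))).card :=
      Finset.card_le_card (Finset.union_subset_union le_rfl
        (Finset.image_subset_image (Finset.filter_subset _ _)))
    rw [Finset.card_union_of_disjoint hd, Finset.card_image_of_injective _ hinj,
      Finset.card_image_of_injective (f := fun v => Q.conj (w0 v)) _ (fun v v' h => hinj (by
        have := congrArg Q.conj h
        simpa only [Q.conj_conj] using this))] at h1
    have h2 := Finset.card_filter_add_card_filter_not (s := S) Q.NonSplit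
    omega

include Q in
theorem card_infinitePlace_le [IsTotallyComplex M] :
    2 * Fintype.card (InfinitePlace M) ≤ Fintype.card (InfinitePlace L) := by
  have h1 := InfinitePlace.card_add_two_mul_card_eq_rank L
  have h2 := InfinitePlace.card_eq_nrRealPlaces_add_nrComplexPlaces L
  have h3 := InfinitePlace.card_eq_nrRealPlaces_add_nrComplexPlaces M
  have h4 := IsTotallyComplex.finrank (K := M)
  have h5 := IsTotallyComplex.nrRealPlaces_eq_zero (K := M)
  have h6 := Module.finrank_mul_finrank ℚ M L
  rw [Q.rank] at h6
  omega

theorem N_ne_zero {z : L} (hz : z ≠ 0) : Q.N z ≠ 0 := by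
  intro h
  have := Q.N_spec z
  rw [h, map_zero, eq_comm, mul_eq_zero] at this
  rcases this with h | h
  · exact hz h
  · exact hz ((map_eq_zero_iff _ Q.σ.injective).1 h)

/-- The norm on units. -/
noncomputable def NU : Lˣ →* Mˣ :=
  Units.map { toFun := Q.N, map_one' := Q.N_one, map_mul' := Q.N_mul }

@[simp] theorem NU_apply (x : Lˣ) : ((Q.NU x : Mˣ) : M) = Q.N x := rfl

theorem NU_mem {S : Finset (HeightOneSpectrum (𝓞 M))} {T : Finset (HeightOneSpectrum (𝓞 L))}
    (hT : ∀ w, w ∈ T ↔ w.under (𝓞 M) ∈ S) {x : Lˣ} (hx : x ∈ SU T) : Q.NU x ∈ SU S := by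
  intro v hv
  obtain ⟨w, rfl⟩ := exists_above (L := L) v
  have h1 : w ∉ T := fun h => hv ((hT w).1 h)
  have h2 : Q.conj w ∉ T := fun h => hv (by have := (hT _).1 h; rwa [Q.under_conj] at this)
  have h3 := congrArg (w.valuation L) (Q.N_spec x)
  rw [valuation_algebraMap (M := M), map_mul, Q.valuation_σ, hx w h1, hx _ h2, mul_one] at h3
  exact (pow_eq_one_iff_of_nonneg zero_le (e_pos (M := M) w).ne').1 h3

theorem map_mem {S : Finset (HeightOneSpectrum (𝓞 M))} {T : Finset (HeightOneSpectrum (𝓞 L))}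
    (hT : ∀ w, w ∈ T ↔ w.under (𝓞 M) ∈ S) {x : Mˣ} :
    Units.map (algebraMap M L : M →* L) x ∈ SU T ↔ x ∈ SU S := by
  constructor
  · intro hx v hv
    obtain ⟨w, rfl⟩ := exists_above (L := L) v
    have h3 : w.valuation L (algebraMap M L x) = 1 := hx w (fun h => hv ((hT w).1 h))
    rw [valuation_algebraMap (M := M)] at h3
    exact (pow_eq_one_iff_of_nonneg zero_le (e_pos (M := M) w).ne').1 h3
  · intro hx w hw
    change w.valuation L (algebraMap M L x) = 1
    rw [valuation_algebraMap (M := M), hx _ (fun h => hw ((hT w).2 h)), one_pow]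

/-- Vanishing of the first cohomology of the `S`-units: Hilbert 90 for the field, corrected by an
element of `M`, which is possible since `S` generates the class group and the extension is unramified
outside `S`. -/
theorem SU_hilbert90 {S : Finset (HeightOneSpectrum (𝓞 M))} {T : Finset (HeightOneSpectrum (𝓞 L))}
    (hT : ∀ w, w ∈ T ↔ w.under (𝓞 M) ∈ S) (hS : ClassGen S)
    (he : ∀ w : HeightOneSpectrum (𝓞 L), w.under (𝓞 M) ∉ S → e (M := M) w = 1)
    {x : Lˣ} (hx : x ∈ SU T) (h : (x : L) * Q.σ x = 1) :
    ∃ y ∈ SU T, (y : L) = x * Q.σ y := by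
  classical
  obtain ⟨z, hz0, hz⟩ := Q.hilbert90 h
  choose w0 hw0 using exists_above (M := M) (L := L)
  obtain ⟨y, hy0, hy1, hy2⟩ := hS.exists_vl (fun v => -vl (w0 v) z)
    ((vl_support_finite hz0).toFinset.image (fun w => w.under (𝓞 M)))
  have hconj : ∀ w ∉ T, vl (Q.conj w) z = vl w z := by
    intro w hw
    have h1 := congrArg (w.valuation L) hz
    rw [map_mul, hx w hw, one_mul, Q.valuation_σ] at h1
    rw [vl, vl, h1]
  have hyL : algebraMap M L y ≠ 0 := by simpa using hy0
  have hz' : z * algebraMap M L y ≠ 0 := mul_ne_zero hz0 hyL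
  refine ⟨Units.mk0 _ hz', fun w hw => ?_, ?_⟩
  · have hwS : w.under (𝓞 M) ∉ S := fun h => hw ((hT w).2 h)
    rw [Units.val_mk0, ← vl_eq_zero w hz', vl_mul w hz0 hyL]
    have h1 : vl w (algebraMap M L y) = vl (w.under (𝓞 M)) y := by
      rw [vl, valuation_algebraMap (M := M), he w hwS, pow_one]; rfl
    have h2 : vl (w0 (w.under (𝓞 M))) z = vl w z := by
      rcases Q.eq_or_eq_conj (hw0 (w.under (𝓞 M))).symm with h1 | h1
      · rw [h1]
      · rw [h1, hconj w hw]
    rw [h1]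
    by_cases hmem : w.under (𝓞 M) ∈
        (vl_support_finite hz0).toFinset.image (fun w => w.under (𝓞 M))
    · rw [hy1 _ hwS hmem, h2]; ring
    · rw [hy2 _ hwS hmem, add_zero]
      by_contra hne
      exact hmem (Finset.mem_image.2 ⟨w, by simpa using hne, rfl⟩)
  · rw [Units.val_mk0, map_mul, AlgEquiv.commutes]
    nth_rewrite 1 [hz]
    ring

/-- The first inequality: an upper bound on the index of norms among the `S`-units. -/
theorem first_inequality [IsTotallyComplex M] {S : Finset (HeightOneSpectrum (𝓞 M))}
    {T : Finset (HeightOneSpectrum (𝓞 L))} (hT : ∀ w, w ∈ T ↔ w.under (𝓞 M) ∈ S) (hS : ClassGen S)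
    (he : ∀ w : HeightOneSpectrum (𝓞 L), w.under (𝓞 M) ∉ S → e (M := M) w = 1)
    [DecidablePred Q.NonSplit] :
    2 * ((SU T).map Q.NU).relIndex (SU S) ≤ 2 ^ (S.filter Q.NonSplit).card := by
  classical
  let σU : Lˣ →* Lˣ := Units.map (Q.σ : L →* L)
  have hσU : ∀ x : SU T, σU x ∈ SU T := fun x w hw => by
    change w.valuation L (Q.σ ((x : Lˣ) : L)) = 1
    rw [Q.valuation_σ]
    exact x.2 _ (fun h => hw ((hT w).2 (by
      have := (hT _).1 h
      rwa [Q.under_conj] at this)))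
  let σA : SU T →* SU T := (σU.comp (SU T).subtype).codRestrict (SU T) hσU
  let iA : SU S →* SU T := ((Units.map (algebraMap M L : M →* L)).comp (SU S).subtype).codRestrict
    (SU T) (fun x => (map_mem hT).2 x.2)
  let νA : SU T →* SU S := (Q.NU.comp (SU T).subtype).codRestrict (SU S) (fun x => Q.NU_mem hT x.2)
  have hσA : ∀ x, ((σA x : Lˣ) : L) = Q.σ (x : Lˣ) := fun x => rfl
  have hiA : ∀ x, ((iA x : Lˣ) : L) = algebraMap M L (x : Mˣ) := fun x => rfl
  have hνA : ∀ x, ((νA x : Mˣ) : M) = Q.N (x : Lˣ) := fun x => rfl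
  have hextL : ∀ a b : Additive (SU T), ((a.toMul : Lˣ) : L) = (b.toMul : Lˣ) → a = b :=
    fun a b h => Additive.toMul.injective (Subtype.ext (Units.ext h))
  have hextM : ∀ a b : Additive (SU S), ((a.toMul : Mˣ) : M) = (b.toMul : Mˣ) → a = b :=
    fun a b h => Additive.toMul.injective (Subtype.ext (Units.ext h))
  have hm1 : (-1 : Mˣ) ∈ SU S := fun v _ => by simp
  have key := herbrand_index σA.toAdditive iA.toAdditive νA.toAdditive
    (fun a b h => hextM _ _ ((algebraMap M L).injective (by
      rw [← hiA, ← hiA]; exact congrArg (fun x => ((x.toMul : Lˣ) : L)) h)))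
    (fun a h => by
      have h1 : Q.σ ((a.toMul : Lˣ) : L) = (a.toMul : Lˣ) :=
        congrArg (fun x => ((x.toMul : Lˣ) : L)) h
      obtain ⟨b, hb⟩ := Q.fixed h1
      have hb0 : b ≠ 0 := by
        rintro rfl
        exact Units.ne_zero _ (hb.trans (map_zero _))
      refine ⟨Additive.ofMul ⟨Units.mk0 b hb0, (map_mem hT).1 ?_⟩, hextL _ _ hb.symm⟩
      have : Units.map (algebraMap M L : M →* L) (Units.mk0 b hb0) = (a.toMul : Lˣ) :=
        Units.ext hb.symm
      rw [this]
      exact a.toMul.2)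
    (fun b => hextL _ _ (Q.σ.commutes _))
    (fun a => hextL _ _ (Q.N_spec _))
    (fun a => hextL _ _ (Q.σσ _))
    (fun a h => by
      have h1 : ((a.toMul : Lˣ) : L) * Q.σ (a.toMul : Lˣ) = 1 :=
        congrArg (fun x => ((x.toMul : Lˣ) : L)) h
      obtain ⟨y, hy, hya⟩ := Q.SU_hilbert90 hT hS he a.toMul.2 h1
      refine ⟨Additive.ofMul ⟨y, hy⟩, ?_⟩
      rw [eq_sub_iff_add_eq]
      exact hextL _ _ hya.symm)
    (Additive.ofMul ⟨-1, hm1⟩)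
    (fun h => by
      have h1 : (-1 : M) = 1 := congrArg (fun x => ((x.toMul : Mˣ) : M)) h
      norm_num [eq_comm, eq_neg_iff_add_eq_zero] at h1)
    (hextM _ _ (by simp))
    (fun a h => by
      have h1 : ((a.toMul : Lˣ) : L) * (a.toMul : Lˣ) = 1 :=
        congrArg (fun x => ((x.toMul : Lˣ) : L)) h
      refine (mul_self_eq_one_iff.1 h1).imp (fun h => hextL _ _ h) (fun h => hextL _ _ ?_)
      rw [h]
      change _ = algebraMap M L ((-1 : Mˣ) : M)
      simp)
  have hidx : νA.toAdditive.range.index = ((SU T).map Q.NU).relIndex (SU S) := by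
    rw [Subgroup.relIndex, ← Subgroup.index_toAddSubgroup]
    congr 1
    ext x
    change (∃ y, _) ↔ (x.toMul : Mˣ) ∈ (SU T).map Q.NU
    rw [Subgroup.mem_map]
    constructor
    · rintro ⟨y, rfl⟩
      exact ⟨y.toMul, y.toMul.2, rfl⟩
    · rintro ⟨y, hy, hxy⟩
      exact ⟨Additive.ofMul ⟨y, hy⟩, Additive.toMul.injective (Subtype.ext hxy)⟩
  rw [hidx] at key
  set n := ((SU T).map Q.NU).relIndex (SU S)
  obtain ⟨T', hT', hcard⟩ := Q.exists_above_finset S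
  have hTT : T' = T := by ext w; rw [hT, hT']
  rw [hTT] at hcard
  have hA := SU_finrank T
  have hB := SU_finrank S
  have hinf := Q.card_infinitePlace_le
  have h1 : 2 * n * 2 ^ Module.finrank ℤ (Additive (SU T)) ≤
      2 ^ (S.filter Q.NonSplit).card * 2 ^ Module.finrank ℤ (Additive (SU T)) := by
    rw [mul_assoc, key, ← pow_succ', ← pow_add]
    exact Nat.pow_le_pow_right (by norm_num) (by omega)
  exact Nat.le_of_mul_le_mul_right h1 (by positivity)

end QuadExt

/-! ### Zeta functions and density of split primes -/

section Zeta
open Filter Topology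
variable {K : Type*} [Field K] [NumberField K]

/-- The weight `N(I)^{-s}` of an integral ideal, as an extended nonnegative real. -/
noncomputable def iwt (s : ℝ) (I : Ideal (𝓞 K)) : ENNReal :=
  ENNReal.ofReal ((Ideal.absNorm I : ℝ) ^ (-s))

lemma iwt_mul (s : ℝ) (I J : Ideal (𝓞 K)) : iwt s (I * J) = iwt s I * iwt s J := by
  unfold iwt
  rw [map_mul, Nat.cast_mul, Real.mul_rpow (by positivity) (by positivity),
    ENNReal.ofReal_mul (by positivity)]

lemma iwt_one (s : ℝ) : iwt s (1 : Ideal (𝓞 K)) = 1 := by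
  unfold iwt; simp

/-- The weight `∏ N(v)^{-s}` of a finite multiset of primes. -/
noncomputable def mwt (s : ℝ) (m : Multiset (HeightOneSpectrum (𝓞 K))) : ENNReal :=
  (m.map (fun v => iwt s v.asIdeal)).prod

lemma mwt_eq (s : ℝ) (m : Multiset (HeightOneSpectrum (𝓞 K))) :
    mwt s m = iwt s (m.map (fun v => v.asIdeal)).prod := by
  induction m using Multiset.induction_on with
  | empty => simp [mwt, ← Ideal.one_eq_top, iwt_one]
  | cons a m ih =>
    rw [Multiset.map_cons, Multiset.prod_cons, iwt_mul, ← ih]; simp [mwt]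

/-- The partial zeta function of `K` with the Euler factors at `S` removed, written as a sum over
the finite multisets of primes outside `S`. -/
noncomputable def zetaS (S : Set (HeightOneSpectrum (𝓞 K))) (s : ℝ) : ENNReal :=
  ∑' m : {m : Multiset (HeightOneSpectrum (𝓞 K)) | ∀ v ∈ m, v ∉ S}, mwt s m.1

lemma multiset_prod_ne_bot (m : Multiset (HeightOneSpectrum (𝓞 K))) :
    (m.map (fun v => v.asIdeal)).prod ≠ ⊥ := by
  rw [Ne, ← Ideal.zero_eq_bot, Multiset.prod_eq_zero_iff]
  intro h
  obtain ⟨v, -, hv⟩ := Multiset.mem_map.mp h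
  exact v.ne_bot hv

lemma multiset_prod_bijective : Function.Bijective
    (fun m : Multiset (HeightOneSpectrum (𝓞 K)) =>
      (⟨(m.map (fun v => v.asIdeal)).prod, multiset_prod_ne_bot m⟩ :
        {I : Ideal (𝓞 K) // I ≠ ⊥})) := by
  have hp : ∀ m : Multiset (HeightOneSpectrum (𝓞 K)),
      ∀ I ∈ m.map (fun v => v.asIdeal), Prime I := by
    intro m I hI
    obtain ⟨v, -, rfl⟩ := Multiset.mem_map.mp hI
    exact v.prime
  constructor
  · intro m m' h
    simp only [Subtype.mk.injEq] at h
    have h1 := congrArg UniqueFactorizationMonoid.normalizedFactors h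
    rw [UniqueFactorizationMonoid.normalizedFactors_prod_of_prime (hp m),
      UniqueFactorizationMonoid.normalizedFactors_prod_of_prime (hp m')] at h1
    exact Multiset.map_injective (fun v w h => HeightOneSpectrum.ext h) h1
  · rintro ⟨I, hI⟩
    simp only [Subtype.mk.injEq]
    refine UniqueFactorizationMonoid.induction_on_prime
      (P := fun I : Ideal (𝓞 K) => I ≠ ⊥ →
        ∃ m : Multiset (HeightOneSpectrum (𝓞 K)), (m.map (fun v => v.asIdeal)).prod = I)
      I (fun h => absurd rfl h) ?_ ?_ hI
    · intro J hJ _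
      exact ⟨0, by rw [Ideal.isUnit_iff.mp hJ]; simp⟩
    · intro J p hJ hp ih _
      obtain ⟨m, hm⟩ := ih hJ
      exact ⟨⟨p, Ideal.isPrime_of_prime hp, hp.ne_zero⟩ ::ₘ m, by simp [hm]⟩

lemma zetaS_empty {s : ℝ} (hs : s ≠ 0) :
    zetaS (∅ : Set (HeightOneSpectrum (𝓞 K))) s = ∑' I : Ideal (𝓞 K), iwt s I := by
  have h0 : ∀ I ∈ Function.support (iwt (K := K) s), I ≠ ⊥ := by
    rintro I hI rfl
    apply hI
    simp [iwt, Real.zero_rpow (neg_ne_zero.mpr hs)]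
  rw [← tsum_subtype_eq_of_support_subset (s := {I : Ideal (𝓞 K) | I ≠ ⊥}) h0]
  have h1 := (Equiv.ofBijective _ (multiset_prod_bijective (K := K))).tsum_eq
    (fun I : {I : Ideal (𝓞 K) // I ≠ ⊥} => iwt s I.1)
  refine Eq.trans ?_ h1
  unfold zetaS
  rw [tsum_subtype_eq_of_support_subset (f := mwt (K := K) s) (by intro m _; simp)]
  exact tsum_congr fun m => mwt_eq s m

lemma tsum_iwt {s : ℝ} (hs : s ≠ 0) (hz : dedekindZeta K s ≠ 0) :
    ∃ r : ℝ, 0 ≤ r ∧ dedekindZeta K s = r ∧ ∑' I : Ideal (𝓞 K), iwt s I = ENNReal.ofReal r := by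
  set c : ℕ → ℕ := fun n => Nat.card {I : Ideal (𝓞 K) // Ideal.absNorm I = n}
  set f : ℕ → ℝ := fun n => c n * (n : ℝ) ^ (-s) with hf
  have hfnn : ∀ n, 0 ≤ f n := fun n => by positivity
  have h1 : dedekindZeta K s = ((∑' n, f n : ℝ) : ℂ) := by
    rw [Complex.ofReal_tsum]
    unfold dedekindZeta LSeries
    refine tsum_congr fun n => ?_
    rcases eq_or_ne n 0 with rfl | hn
    · simp [hf, Real.zero_rpow (neg_ne_zero.mpr hs)]
    · rw [LSeries.term_of_ne_zero hn]
      simp only [hf, c]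
      push_cast
      rw [Complex.ofReal_cpow (by positivity)]
      push_cast
      rw [Complex.cpow_neg, div_eq_mul_inv]
  refine ⟨∑' n, f n, tsum_nonneg hfnn, h1, ?_⟩
  have hsum : Summable f := by
    by_contra h
    rw [tsum_eq_zero_of_not_summable h] at h1
    exact hz (by rw [h1]; simp)
  rw [ENNReal.ofReal_tsum_of_nonneg hfnn hsum, ← ENNReal.tsum_fiberwise _ (fun I : Ideal (𝓞 K) => Ideal.absNorm I)]
  refine tsum_congr fun n => ?_
  have h2 : ∀ b : ((fun I : Ideal (𝓞 K) => Ideal.absNorm I) ⁻¹' {n}), iwt s b.1 =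
      ENNReal.ofReal ((n : ℝ) ^ (-s)) := by
    rintro ⟨b, hb⟩
    simp only [Set.mem_preimage, Set.mem_singleton_iff] at hb
    simp [iwt, hb]
  rw [tsum_congr h2, ENNReal.tsum_const]
  have : Finite {I : Ideal (𝓞 K) // Ideal.absNorm I = n} :=
    (Ideal.finite_setOfPred_absNorm_eq n).to_subtype
  have h3 : ENat.card ((fun I : Ideal (𝓞 K) => Ideal.absNorm I) ⁻¹' {n}) = ((c n : ℕ) : ℕ∞) :=
    (ENat.card_eq_coe_natCard {I : Ideal (𝓞 K) // Ideal.absNorm I = n})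
  rw [h3, hf, ENNReal.ofReal_mul (by positivity)]
  simp

/-- `(s - 1) ζ_K(s)` tends to a positive limit as `s → 1⁺`, with `ζ_K` in its form as a
multiset sum. -/
lemma exists_zeta (K : Type*) [Field K] [NumberField K] : ∃ r : ℝ → ℝ, ∃ ρ : ℝ, 0 < ρ ∧
    Tendsto (fun s => (s - 1) * r s) (𝓝[>] 1) (𝓝 ρ) ∧
    ∀ᶠ s in 𝓝[>] 1, 0 ≤ r s ∧
      zetaS (∅ : Set (HeightOneSpectrum (𝓞 K))) s = ENNReal.ofReal (r s) := by
  have h := tendsto_sub_one_mul_dedekindZeta_nhdsGT K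
  have hpos := dedekindZeta_residue_pos K
  refine ⟨fun s => (dedekindZeta K s).re, _, hpos, ?_, ?_⟩
  · have := (Complex.continuous_re.tendsto _).comp h
    refine (this.congr fun s => ?_)
    simp only [Function.comp]
    rw [← Complex.ofReal_one, ← Complex.ofReal_sub, Complex.re_ofReal_mul]
  · have hne : ∀ᶠ s : ℝ in 𝓝[>] 1, ((s : ℂ) - 1) * dedekindZeta K s ≠ 0 :=
      h.eventually_ne (by exact_mod_cast hpos.ne')
    filter_upwards [hne, self_mem_nhdsWithin] with s hs h1
    have hs0 : s ≠ 0 := by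
      have : (1 : ℝ) < s := h1
      linarith
    obtain ⟨r, hr, hr1, hr2⟩ := tsum_iwt hs0 (right_ne_zero_of_mul hs)
    rw [hr1, zetaS_empty hs0, hr2]
    simpa using hr

lemma iwt_le_half {s : ℝ} (hs : 1 ≤ s) (P : HeightOneSpectrum (𝓞 K)) :
    iwt s P.asIdeal ≤ ENNReal.ofReal (1 / 2) := by
  unfold iwt
  apply ENNReal.ofReal_le_ofReal
  have h2 : 2 ≤ Ideal.absNorm P.asIdeal := by
    have h0 : Ideal.absNorm P.asIdeal ≠ 0 := by
      rw [Ne, Ideal.absNorm_eq_zero_iff]; exact P.ne_bot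
    have h1 : Ideal.absNorm P.asIdeal ≠ 1 := by
      rw [Ne, Ideal.absNorm_eq_one_iff]; exact P.isPrime.ne_top
    omega
  have h2' : (2 : ℝ) ≤ Ideal.absNorm P.asIdeal := by exact_mod_cast h2
  calc (Ideal.absNorm P.asIdeal : ℝ) ^ (-s) ≤ (Ideal.absNorm P.asIdeal : ℝ) ^ (-1 : ℝ) :=
        Real.rpow_le_rpow_of_exponent_le (by linarith) (by linarith)
    _ ≤ 1 / 2 := by
        rw [Real.rpow_neg_one, one_div]
        exact inv_anti₀ (by norm_num) h2'

lemma zetaS_mono {S T : Set (HeightOneSpectrum (𝓞 K))} (h : S ⊆ T) (s : ℝ) :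
    zetaS T s ≤ zetaS S s :=
  ENNReal.tsum_mono_subtype _ (fun m (hm : ∀ v ∈ m, v ∉ T) v hv hvS => hm v hv (h hvS))

lemma zetaS_insert {S : Set (HeightOneSpectrum (𝓞 K))} {s : ℝ} (hs : 1 ≤ s)
    (P : HeightOneSpectrum (𝓞 K)) (hfin : zetaS S s ≠ ⊤) :
    zetaS S s ≤ 2 * zetaS (insert P S) s := by
  have h1 : zetaS S s ≤ zetaS (insert P S) s + iwt s P.asIdeal * zetaS S s := by
    have hsub : {m : Multiset (HeightOneSpectrum (𝓞 K)) | ∀ v ∈ m, v ∉ S} ⊆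
        {m | ∀ v ∈ m, v ∉ insert P S} ∪ (fun m => P ::ₘ m) '' {m | ∀ v ∈ m, v ∉ S} := by
      intro m hm
      by_cases hP : P ∈ m
      · right
        obtain ⟨m', rfl⟩ := Multiset.exists_cons_of_mem hP
        exact ⟨m', fun v hv => hm v (Multiset.mem_cons_of_mem hv), rfl⟩
      · left
        rintro v hv (rfl | hvS)
        · exact hP hv
        · exact hm v hv hvS
    refine (ENNReal.tsum_mono_subtype _ hsub).trans ((ENNReal.tsum_union_le _ _ _).trans ?_)
    refine add_le_add le_rfl (le_of_eq ?_)
    rw [tsum_image _ (fun a _ b _ h => (Multiset.cons_inj_right P).mp h)]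
    unfold zetaS
    rw [← ENNReal.tsum_mul_left]
    refine tsum_congr fun m => ?_
    simp [mwt]
  have h2 := h1.trans (add_le_add le_rfl (mul_le_mul_left (iwt_le_half hs P) _))
  have hfin' : zetaS (insert P S) s ≠ ⊤ :=
    ne_top_of_le_ne_top hfin (zetaS_mono (Set.subset_insert _ _) s)
  rw [← ENNReal.ofReal_toReal hfin, ← ENNReal.ofReal_toReal hfin',
    ← ENNReal.ofReal_mul (by norm_num), ← ENNReal.ofReal_add (by positivity) (by positivity),
    ENNReal.ofReal_le_ofReal_iff (by positivity)] at h2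
  rw [← ENNReal.ofReal_toReal hfin, ← ENNReal.ofReal_toReal hfin', ← ENNReal.ofReal_ofNat,
    ← ENNReal.ofReal_mul (by norm_num)]
  apply ENNReal.ofReal_le_ofReal
  linarith

lemma zetaS_finset {s : ℝ} (hs : 1 ≤ s) (S : Finset (HeightOneSpectrum (𝓞 K)))
    (hfin : zetaS (∅ : Set (HeightOneSpectrum (𝓞 K))) s ≠ ⊤) :
    zetaS (∅ : Set (HeightOneSpectrum (𝓞 K))) s ≤ 2 ^ S.card * zetaS (S : Set (HeightOneSpectrum (𝓞 K))) s := by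
  classical
  induction S using Finset.induction_on with
  | empty => simp
  | insert P S hP ih =>
    rw [Finset.card_insert_of_notMem hP, Finset.coe_insert, pow_succ, mul_assoc]
    refine ih.trans ?_
    gcongr
    exact zetaS_insert hs P (ne_top_of_le_ne_top hfin (zetaS_mono (Set.empty_subset _) s))

end Zeta

namespace QuadExt
open Filter Topology
variable {M L : Type*} [Field M] [NumberField M] [Field L] [NumberField L] [Algebra M L]
  (Q : QuadExt M L)
include Q

/-- If all primes outside `S` split in the quadratic extension `L / M`, then each Euler factor of
`M` outside `S` occurs twice in the zeta function of `L`, so `ζ_M ^ 2 ≤ ζ_L` once the factors at `S` are removed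
from `ζ_M`. -/
lemma zetaS_sq_le (S : Set (HeightOneSpectrum (𝓞 M)))
    (F : HeightOneSpectrum (𝓞 M) → HeightOneSpectrum (𝓞 L))
    (hF : ∀ v, (F v).under (𝓞 M) = v) (hS : ∀ v ∉ S, Q.conj (F v) ≠ F v) (s : ℝ) :
    zetaS S s * zetaS S s ≤ zetaS (∅ : Set (HeightOneSpectrum (𝓞 L))) s := by
  classical
  have hF' : ∀ v, (Q.conj (F v)).under (𝓞 M) = v := fun v => by rw [Q.under_conj, hF]
  set X := {m : Multiset (HeightOneSpectrum (𝓞 M)) | ∀ v ∈ m, v ∉ S} with hX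
  let φ : X × X → Multiset (HeightOneSpectrum (𝓞 L)) := fun p =>
    p.1.1.map F + p.2.1.map (fun v => Q.conj (F v))
  have hw : ∀ m : X, mwt s (m.1.map F) = mwt s m.1 ∧
      mwt s (m.1.map (fun v => Q.conj (F v))) = mwt s m.1 := by
    intro m
    unfold mwt
    rw [Multiset.map_map, Multiset.map_map]
    constructor
    · congr 1
      refine Multiset.map_congr rfl fun v hv => ?_
      have := (Q.of_conj_ne (hS v (m.2 v hv))).2
      rw [hF] at this
      simp only [Function.comp, iwt, this]
    · congr 1
      refine Multiset.map_congr rfl fun v hv => ?_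
      have := (Q.of_conj_ne (w := Q.conj (F v))
        (by rw [Q.conj_conj]; exact (hS v (m.2 v hv)).symm)).2
      rw [hF'] at this
      simp only [Function.comp, iwt, this]
  have hφ : Function.Injective φ := by
    have hrec : ∀ p : X × X, ((φ p).filter (fun w => F (w.under (𝓞 M)) = w)).map
        (fun w => w.under (𝓞 M)) = p.1.1 ∧
        ((φ p).filter (fun w => ¬ F (w.under (𝓞 M)) = w)).map
        (fun w => w.under (𝓞 M)) = p.2.1 := by
      rintro ⟨⟨m, hm⟩, ⟨m', hm'⟩⟩
      have a1 : ∀ w ∈ m.map F, F (w.under (𝓞 M)) = w := by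
        intro w hw
        obtain ⟨v, -, rfl⟩ := Multiset.mem_map.mp hw
        rw [hF]
      have a2 : ∀ w ∈ m'.map (fun v => Q.conj (F v)), ¬ F (w.under (𝓞 M)) = w := by
        intro w hw
        obtain ⟨v, hv, rfl⟩ := Multiset.mem_map.mp hw
        rw [hF']
        exact fun h => hS v (hm' v hv) h.symm
      simp only [φ, Multiset.filter_add]
      rw [Multiset.filter_eq_self.mpr a1, Multiset.filter_eq_nil.mpr a2,
        Multiset.filter_eq_nil.mpr (fun w hw => not_not.mpr (a1 w hw)),
        Multiset.filter_eq_self.mpr a2]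
      simp [Multiset.map_map, hF, hF']
    intro p p' h
    refine Prod.ext (Subtype.ext ?_) (Subtype.ext ?_)
    · rw [← (hrec p).1, ← (hrec p').1, h]
    · rw [← (hrec p).2, ← (hrec p').2, h]
  have h1 := ENNReal.tsum_comp_le_tsum_of_injective hφ (mwt (K := L) s)
  have h2 : zetaS (∅ : Set (HeightOneSpectrum (𝓞 L))) s = ∑' m, mwt (K := L) s m := by
    unfold zetaS
    exact tsum_subtype_eq_of_support_subset (f := mwt (K := L) s) (by intro m _; simp)
  rw [h2]
  refine le_trans (le_of_eq ?_) h1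
  unfold zetaS
  rw [← ENNReal.tsum_mul_left]
  simp_rw [← ENNReal.tsum_mul_right]
  rw [ENNReal.tsum_comm, ← ENNReal.tsum_prod]
  refine tsum_congr fun p => ?_
  simp only [φ]
  rw [show mwt s (Multiset.map F p.1.1 + Multiset.map (fun v => Q.conj (F v)) p.2.1) =
    mwt s (Multiset.map F p.1.1) * mwt s (Multiset.map (fun v => Q.conj (F v)) p.2.1) by
      simp [mwt], (hw p.1).1, (hw p.2).2]

/-- The analytic input: a quadratic extension has infinitely many nonsplit primes, because `ζ_L`
has only a simple pole at `1`. -/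
lemma exists_nonsplit (S : Finset (HeightOneSpectrum (𝓞 M))) :
    ∃ w : HeightOneSpectrum (𝓞 L), w.under (𝓞 M) ∉ S ∧ Q.conj w = w := by
  by_contra! hcon
  choose F hF using QuadExt.exists_above (M := M) (L := L)
  obtain ⟨r, ρ, hρ, hr, hre⟩ := exists_zeta M
  obtain ⟨r', ρ', hρ', hr', hre'⟩ := exists_zeta L
  have key : ∀ᶠ s : ℝ in 𝓝[>] 1,
      ((s - 1) * r s) * ((s - 1) * r s) ≤ 2 ^ (2 * S.card) * ((s - 1) * ((s - 1) * r' s)) := by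
    filter_upwards [hre, hre', self_mem_nhdsWithin] with s h1 h2 hs1
    have hs : (1 : ℝ) < s := hs1
    have h3 := zetaS_finset hs.le S (by rw [h1.2]; exact ENNReal.ofReal_ne_top)
    have h4 := Q.zetaS_sq_le (S : Set (HeightOneSpectrum (𝓞 M))) F hF
      (fun v hv => hcon _ (by rw [hF]; exact hv)) s
    have h5 : ENNReal.ofReal (r s) * ENNReal.ofReal (r s) ≤
        2 ^ (2 * S.card) * ENNReal.ofReal (r' s) := by
      rw [← h1.2, ← h2.2]
      refine (mul_le_mul' h3 h3).trans ?_
      rw [mul_mul_mul_comm, ← pow_add, ← two_mul]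
      gcongr
    rw [← ENNReal.ofReal_mul h1.1, show (2 : ENNReal) ^ (2 * S.card) =
      ENNReal.ofReal (2 ^ (2 * S.card)) by
        rw [ENNReal.ofReal_pow (by norm_num)]; simp, ← ENNReal.ofReal_mul (by positivity),
      ENNReal.ofReal_le_ofReal_iff (mul_nonneg (by positivity) h2.1)] at h5
    nlinarith [mul_le_mul_of_nonneg_left h5 (mul_self_nonneg (s - 1))]
  have l1 := hr.mul hr
  have hs0 : Tendsto (fun s : ℝ => s - 1) (𝓝[>] 1) (𝓝 0) := by
    have : Tendsto (fun s : ℝ => s - 1) (𝓝 1) (𝓝 (1 - 1)) :=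
      (continuous_id.sub continuous_const).tendsto 1
    rw [sub_self] at this
    exact this.mono_left nhdsWithin_le_nhds
  have l2 := (hs0.mul hr').const_mul (2 ^ (2 * S.card) : ℝ)
  have := le_of_tendsto_of_tendsto l1 l2 key
  nlinarith [mul_pos hρ hρ]

end QuadExt

/-- A nonsquare of `K` is a quadratic nonresidue at some prime outside any given finite set. -/
lemma exists_nonres.{u} (K : Type u) [Field K] [NumberField K] (S : Finset (HeightOneSpectrum (𝓞 K)))
    {x : K} (hx : ¬ IsSquare x) :
    ∃ w ∉ S, w.valuation K x = 1 ∧ w.valuation K 2 = 1 ∧ ¬ Res w x := by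
  classical
  have hx0 : x ≠ 0 := by rintro rfl; exact hx ⟨0, by simp⟩
  obtain ⟨L, _, _, _, Q, rfl⟩ := QuadExt.exists_of_not_isSquare x hx
  obtain ⟨w, hw, hc⟩ := Q.exists_nonsplit (S ∪ (vl_support_finite hx0).toFinset ∪
    (vl_support_finite (K := K) two_ne_zero).toFinset)
  simp only [Finset.mem_union, Set.Finite.mem_toFinset, Set.mem_setOf_eq, not_or, not_not] at hw
  obtain ⟨⟨hS, h1⟩, h2⟩ := hw
  rw [vl_eq_zero _ hx0] at h1
  rw [vl_eq_zero _ two_ne_zero] at h2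
  refine ⟨_, hS, h1, h2, ?_⟩
  rintro ⟨α, hα⟩
  have hα2 := valuation_eq_one_of_sub h1 hα
  refine Q.split_of_near_square (w := w) (c := 1) (x := α) ?_ hc
  rw [one_pow, mul_one]
  refine hα.trans_eq ?_
  rw [show (4 : K) = 2 ^ 2 by norm_num, map_mul, map_pow, h2, hα2]; simp

/-! ### Auxiliary primes -/

section Grp
variable {G : Type*} [CommGroup G]

lemma card_le_relIndex (H K : Subgroup G) (hfin : H.relIndex K ≠ 0) {ι : Type*} [Fintype ι]
    (x : ι → G) (hx : ∀ i, x i ∈ K) (hinj : ∀ i j, (x i)⁻¹ * x j ∈ H → i = j) :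
    Fintype.card ι ≤ H.relIndex K := by
  have : Finite (K ⧸ H.subgroupOf K) := Nat.finite_of_card_ne_zero hfin
  rw [← Nat.card_eq_fintype_card]
  refine Nat.card_le_card_of_injective (β := K ⧸ H.subgroupOf K)
    (fun i => QuotientGroup.mk ⟨x i, hx i⟩) fun i j h => hinj i j ?_
  have := QuotientGroup.eq.mp h
  simpa [Subgroup.mem_subgroupOf] using this

lemma relIndex_le_card (H K : Subgroup G) {ι : Type*} [Finite ι] (φ : K → ι)
    (hφ : ∀ x y : K, φ x = φ y → (x : G)⁻¹ * y ∈ H) : H.relIndex K ≤ Nat.card ι := by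
  refine Nat.card_le_card_of_injective (α := K ⧸ H.subgroupOf K) (fun q => φ q.out) fun a b h => ?_
  have := hφ _ _ h
  rw [← QuotientGroup.out_eq' a, ← QuotientGroup.out_eq' b]
  exact QuotientGroup.eq.mpr (by simpa [Subgroup.mem_subgroupOf] using this)

end Grp

section SUsq
variable {K : Type*} [Field K] [NumberField K]

lemma sq_mem_of_isSquare {S : Finset (HeightOneSpectrum (𝓞 K))} {x : Kˣ} (hx : x ∈ SU S)
    (h : IsSquare (x : K)) : x ∈ (SU S).map (powMonoidHom 2) := by
  obtain ⟨z, hz⟩ := h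
  have hz0 : z ≠ 0 := by rintro rfl; exact x.ne_zero (by simpa using hz)
  refine ⟨Units.mk0 z hz0, ?_, ?_⟩
  · intro v hv
    have := hx v hv
    change v.valuation K (x : K) = 1 at this
    rw [hz, ← sq, map_pow, pow_eq_one_iff_of_nonneg zero_le two_ne_zero] at this
    exact this
  · ext; simp [hz, sq]

lemma Res.div {v : HeightOneSpectrum (𝓞 K)} {u u' : K} (hu : v.valuation K u = 1)
    (hu' : v.valuation K u' = 1) (h2 : v.valuation K 2 = 1) (h : Res v u ↔ Res v u') :
    Res v (u⁻¹ * u') := by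
  have hi : v.valuation K u⁻¹ = 1 := by rw [map_inv₀, hu, inv_one]
  have hu0 : u ≠ 0 := by rintro rfl; simp at hu
  have h1 : Res v u⁻¹ ↔ Res v u := by
    have := (Res.mul hi hu h2).mp (by
      rw [inv_mul_cancel₀ hu0]; exact ⟨1, by simp⟩)
    exact this
  rw [Res.mul hi hu' h2, h1]; exact h

/-- The `S`-units that are quadratic residues at every prime of `W`. -/
noncomputable def resSub (S W : Finset (HeightOneSpectrum (𝓞 K))) (hSW : Disjoint S W)
    (h2 : ∀ w ∈ W, w.valuation K 2 = 1) : Subgroup Kˣ where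
  carrier := {u | u ∈ SU S ∧ ∀ w ∈ W, Res w (u : K)}
  one_mem' := ⟨one_mem _, fun w _ => ⟨1, by simp⟩⟩
  mul_mem' := by
    rintro a b ⟨ha, ha'⟩ ⟨hb, hb'⟩
    refine ⟨mul_mem ha hb, fun w hw => ?_⟩
    have hwS : w ∉ S := fun h => Finset.disjoint_left.mp hSW h hw
    rw [Units.val_mul, Res.mul (ha w hwS) (hb w hwS) (h2 w hw)]
    exact iff_of_true (ha' w hw) (hb' w hw)
  inv_mem' := by
    rintro a ⟨ha, ha'⟩
    refine ⟨inv_mem ha, fun w hw => ?_⟩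
    have hwS : w ∉ S := fun h => Finset.disjoint_left.mp hSW h hw
    have := Res.div (ha w hwS) (u' := 1) (map_one _) (h2 w hw)
      (iff_of_true (ha' w hw) ⟨1, by simp⟩)
    simpa using this

end SUsq

namespace QuadExt
variable {M L : Type*} [Field M] [NumberField M] [Field L] [NumberField L] [Algebra M L]
  (Q : QuadExt M L)
include Q

/-- Every element of `M` that becomes a square in `L = M(√d)` is a square or `d` times a square. -/
lemma isSquare_algebraMap {u : M} (h : IsSquare (algebraMap M L u)) :
    IsSquare u ∨ IsSquare (Q.d * u) := by
  obtain ⟨z, hz⟩ := h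
  obtain ⟨a, b, rfl⟩ := Q.span z
  have hinj := (algebraMap M L).injective
  have h1 : algebraMap M L (u - a ^ 2 - Q.d * b ^ 2) = algebraMap M L (2 * a * b) * Q.s := by
    simp only [map_sub, map_mul, map_pow, map_ofNat, hz]
    linear_combination (-algebraMap M L b ^ 2) * Q.hs + 2 * algebraMap M L b ^ 2 * Q.hs
  have h2 : 2 * a * b = 0 := by
    by_contra hne
    have h3 := congrArg Q.σ h1
    rw [map_mul, Q.σ.commutes, Q.σ.commutes, Q.hσ, h1] at h3
    have h4 : algebraMap M L (2 * a * b) * Q.s = 0 := by linear_combination h3 / 2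
    rcases mul_eq_zero.mp h4 with h4 | h4
    · exact hne ((map_eq_zero_iff _ hinj).mp h4)
    · exact Q.s_ne_zero h4
  rw [h2, map_zero, zero_mul, map_eq_zero_iff _ hinj] at h1
  rcases mul_eq_zero.mp h2 with h3 | h3
  · rw [mul_eq_zero, or_iff_right two_ne_zero] at h3
    right
    exact ⟨Q.d * b, by subst h3; linear_combination Q.d * h1⟩
  · left
    exact ⟨a, by subst h3; linear_combination h1⟩

omit Q in
/-- If `u` does not become a square in `L = M(√d)`, it is a nonresidue at infinitely many primes
that split in `L`. -/
lemma exists_nonres_split.{u} {M L : Type u} [Field M] [NumberField M] [Field L] [NumberField L]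
    [Algebra M L] (Q : QuadExt M L) (S : Finset (HeightOneSpectrum (𝓞 M)))
    (he : ∀ w : HeightOneSpectrum (𝓞 L), e (M := M) w = 1) {u : M}
    (h1 : ¬ IsSquare u) (h2 : ¬ IsSquare (Q.d * u)) :
    ∃ v ∉ S, ¬ Q.NonSplit v ∧ v.valuation M u = 1 ∧ v.valuation M 2 = 1 ∧ ¬ Res v u := by
  classical
  obtain ⟨T, hT, -⟩ := Q.exists_above_finset S
  obtain ⟨w, hw, hu, hw2, hres⟩ := exists_nonres L T (x := algebraMap M L u)
    (fun h => (Q.isSquare_algebraMap h).elim h1 h2)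
  have hval : ∀ x : M, w.valuation L (algebraMap M L x) = (w.under (𝓞 M)).valuation M x := by
    intro x; rw [valuation_algebraMap (M := M), he, pow_one]
  refine ⟨w.under (𝓞 M), fun h => hw ((hT w).2 h), fun hns => hres ?_, ?_, ?_, ?_⟩
  · exact Q.res_of_inert (hns.conj_eq _ rfl) (he w) hw2 hu
  · rw [← hval, hu]
  · rw [← hval, map_ofNat, hw2]
  · rintro ⟨α, hα⟩
    exact hres ⟨algebraMap M L α, by rwa [← map_pow, ← map_sub, hval]⟩

omit Q in
/-- Auxiliary primes: a set `W` of `k` primes split in `L`, at which the residue symbols of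
`S`-units can be prescribed arbitrarily. -/
lemma exists_aux_primes.{u} {M L : Type u} [Field M] [NumberField M] [Field L] [NumberField L]
    [Algebra M L] (Q : QuadExt M L) (S : Finset (HeightOneSpectrum (𝓞 M)))
    (he : ∀ w : HeightOneSpectrum (𝓞 L), e (M := M) w = 1) (k : ℕ)
    (hk : k + 1 ≤ Fintype.card (InfinitePlace M) + S.card) :
    ∃ W : Finset (HeightOneSpectrum (𝓞 M)), W.card = k ∧ Disjoint S W ∧
      (∀ w ∈ W, ¬ Q.NonSplit w) ∧ (∀ w ∈ W, w.valuation M 2 = 1) ∧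
      ∀ t : HeightOneSpectrum (𝓞 M) → Prop, ∃ u ∈ SU S, ∀ w ∈ W, (Res w (u : M) ↔ t w) := by
  classical
  induction k with
  | zero => exact ⟨∅, by simp, by simp, by simp, by simp, fun t => ⟨1, one_mem _, by simp⟩⟩
  | succ k ih =>
    obtain ⟨W, hWc, hdis, hns, h2, hsurj⟩ := ih (by omega)
    set H := resSub S W hdis h2
    have hun : ∀ u ∈ SU S, ∀ w ∈ W, w.valuation M (u : M) = 1 := fun u hu w hw =>
      hu w (fun h => Finset.disjoint_left.mp hdis h hw)
    have hHU : H ≤ SU S := fun u hu => hu.1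
    have hUH : (SU S).map (powMonoidHom 2) ≤ H := by
      rintro _ ⟨z, hz, rfl⟩
      exact ⟨pow_mem hz 2, fun w _ => ⟨(z : M), by simp⟩⟩
    -- if every element of `H` were a square in `L`, the squares would have index at most `2` in `H`,
    -- hence at most `2 * 2 ^ k` in the `S`-units, contradicting Dirichlet's theorem
    have hex : ∃ u ∈ H, ¬ IsSquare (u : M) ∧ ¬ IsSquare (Q.d * (u : M)) := by
      by_contra! hcon
      have i1 : ((SU S).map (powMonoidHom 2)).relIndex H ≤ 2 := by
        refine (relIndex_le_card _ _ (fun u : H => decide (IsSquare ((u : Mˣ) : M))) ?_).trans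
          (by simp)
        intro x y hxy
        rw [decide_eq_decide] at hxy
        refine sq_mem_of_isSquare (mul_mem (inv_mem (hHU x.2)) (hHU y.2)) ?_
        rw [Units.val_mul, Units.val_inv_eq_inv_val]
        by_cases hx : IsSquare ((x : Mˣ) : M)
        · exact hx.inv.mul (hxy.mp hx)
        · have a1 := hcon x x.2 hx
          have a2 := hcon y y.2 (fun h => hx (hxy.mpr h))
          have hd0 : Q.d ≠ 0 := by
            intro h; exact Q.hd (h ▸ IsSquare.zero)
          have := a1.inv.mul a2
          have e : (Q.d * ((x : Mˣ) : M))⁻¹ * (Q.d * ((y : Mˣ) : M)) =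
            ((x : Mˣ) : M)⁻¹ * ((y : Mˣ) : M) := by
            field_simp
          rwa [e] at this
      have i2 : H.relIndex (SU S) ≤ 2 ^ k := by
        refine (relIndex_le_card _ _
          (fun u : SU S => fun w : W => decide (Res w.1 ((u : Mˣ) : M))) ?_).trans
          (le_of_eq (by simp [hWc]))
        intro x y hxy
        refine ⟨mul_mem (inv_mem x.2) y.2, fun w hw => ?_⟩
        have := congrFun hxy ⟨w, hw⟩
        rw [decide_eq_decide] at this
        rw [Units.val_mul, Units.val_inv_eq_inv_val]
        exact Res.div (hun x x.2 w hw) (hun y y.2 w hw) (h2 w hw) this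
      have i3 := Subgroup.relIndex_mul_relIndex _ H (SU S) hUH hHU
      rw [SU_sq_index] at i3
      have : 2 ^ (k + 2) ≤ 2 ^ (Fintype.card (InfinitePlace M) + S.card) :=
        Nat.pow_le_pow_right (by norm_num) (by omega)
      rw [← i3] at this
      have := this.trans (Nat.mul_le_mul i1 i2)
      have h4 : 0 < 2 ^ k := by positivity
      rw [pow_add] at this
      omega
    obtain ⟨u, hu, hu1, hu2⟩ := hex
    obtain ⟨v, hv, hvs, hvu, hv2, hvr⟩ := Q.exists_nonres_split (S ∪ W) he hu1 hu2
    rw [Finset.mem_union, not_or] at hv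
    refine ⟨insert v W, by rw [Finset.card_insert_of_notMem hv.2, hWc], ?_, ?_, ?_, ?_⟩
    · rw [Finset.disjoint_insert_right]; exact ⟨hv.1, hdis⟩
    · intro w hw
      rcases Finset.mem_insert.mp hw with rfl | hw
      exacts [hvs, hns w hw]
    · intro w hw
      rcases Finset.mem_insert.mp hw with rfl | hw
      exacts [hv2, h2 w hw]
    · intro t
      obtain ⟨x, hx, hxt⟩ := hsurj t
      by_cases hxv : Res v (x : M) ↔ t v
      · refine ⟨x, hx, fun w hw => ?_⟩
        rcases Finset.mem_insert.mp hw with rfl | hw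
        exacts [hxv, hxt w hw]
      · refine ⟨x * u, mul_mem hx (hHU hu), fun w hw => ?_⟩
        rcases Finset.mem_insert.mp hw with rfl | hw
        · rw [Units.val_mul, Res.mul (hx w hv.1) hvu hv2]
          tauto
        · rw [Units.val_mul, Res.mul (hun x hx w hw) (hun u hu.1 w hw) (h2 w hw), ← hxt w hw]
          exact iff_true_right (hu.2 w hw)

end QuadExt

/-! ### Units in unramified extensions, and local squares -/

section Vl
variable {K : Type*} [Field K] [NumberField K]

lemma exists_vl_eq (v : HeightOneSpectrum (𝓞 K)) (k : ℤ) : ∃ c : K, c ≠ 0 ∧ vl v c = k := by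
  obtain ⟨π, hπ⟩ := v.valuation_exists_uniformizer K
  have hπ0 : π ≠ 0 := by rintro rfl; rw [map_zero] at hπ; exact WithZero.exp_ne_zero hπ.symm
  refine ⟨π ^ (-k), zpow_ne_zero _ hπ0, ?_⟩
  rw [vl_zpow]
  have : vl v π = -1 := by unfold vl; rw [hπ]; rfl
  rw [this]; ring

/-- A unit of the form `a² - y b²` with `v(y)` odd is a quadratic residue at `v`. -/
lemma res_of_odd_norm {v : HeightOneSpectrum (𝓞 K)} {y a b : K} (hy : y ≠ 0)
    (hodd : ¬ Even (vl v y)) (h : v.valuation K (a ^ 2 - y * b ^ 2) = 1) :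
    Res v (a ^ 2 - y * b ^ 2) := by
  refine ⟨a, ?_⟩
  rw [show a ^ 2 - y * b ^ 2 - a ^ 2 = -(y * b ^ 2) by ring, Valuation.map_neg]
  rcases eq_or_ne b 0 with rfl | hb
  · simp
  have hyb : y * b ^ 2 ≠ 0 := mul_ne_zero hy (pow_ne_zero _ hb)
  have hvl : vl v (y * b ^ 2) = vl v y + 2 * vl v b := by
    rw [vl_mul v hy (pow_ne_zero _ hb), vl_pow]; push_cast; ring
  have hne1 : v.valuation K (y * b ^ 2) ≠ 1 := by
    rw [Ne, ← vl_eq_zero v hyb, hvl]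
    intro h0
    exact hodd ⟨-vl v b, by linarith⟩
  rcases eq_or_ne a 0 with rfl | ha
  · rw [show (0 : K) ^ 2 - y * b ^ 2 = -(y * b ^ 2) by ring, Valuation.map_neg] at h
    exact absurd h hne1
  have hne2 : v.valuation K (a ^ 2) ≠ v.valuation K (y * b ^ 2) := by
    intro h0
    have : vl v (a ^ 2) = vl v (y * b ^ 2) := by unfold vl; rw [h0]
    rw [hvl, vl_pow] at this
    push_cast at this
    exact hodd ⟨vl v a - vl v b, by linarith⟩
  rw [sub_eq_add_neg] at h
  rw [← Valuation.map_neg _ (y * b ^ 2)] at hne1 hne2 ⊢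
  rw [Valuation.map_add_of_distinct_val _ hne2] at h
  exact lt_of_le_of_ne (h ▸ le_max_right _ _) hne1

end Vl

namespace QuadExt
variable {M L : Type*} [Field M] [NumberField M] [Field L] [NumberField L] [Algebra M L]
  (Q : QuadExt M L)
include Q

lemma d_ne_zero : Q.d ≠ 0 := fun h => Q.hd (h ▸ IsSquare.zero)

lemma unram_of_even {w : HeightOneSpectrum (𝓞 L)} (h2 : w.valuation L 2 = 1)
    (hev : Even (vl (w.under (𝓞 M)) Q.d)) : e (M := M) w = 1 := by
  obtain ⟨k, hk⟩ := hev
  obtain ⟨c, hc0, hc⟩ := exists_vl_eq (w.under (𝓞 M)) (-k)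
  have h1 : w.valuation L (Q.s * algebraMap M L c) = 1 := by
    have : w.valuation L (Q.s * algebraMap M L c) ^ 2 = 1 := by
      rw [← map_pow, mul_pow, Q.hs, ← map_pow, ← map_mul, valuation_algebraMap (M := M),
        (vl_eq_zero _ (mul_ne_zero Q.d_ne_zero (pow_ne_zero _ hc0))).mp, one_pow]
      rw [vl_mul _ Q.d_ne_zero (pow_ne_zero _ hc0), vl_pow, hk, hc]; push_cast; ring
    rwa [pow_eq_one_iff_of_nonneg zero_le two_ne_zero] at this
  refine Q.unram_of_theta h1.le ?_
  rw [map_mul, Q.hσ, Q.σ.commutes, show Q.s * algebraMap M L c - -Q.s * algebraMap M L c =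
    2 * (Q.s * algebraMap M L c) by ring, map_mul, h2, h1, one_mul]

lemma NU_algebraMap (x : Mˣ) : Q.NU (Units.map (algebraMap M L : M →* L) x) = x ^ 2 := by
  ext
  apply (algebraMap M L).injective
  rw [NU_apply, Q.N_spec]
  simp [sq, Q.σ.commutes]

lemma sq_le_norm {S : Finset (HeightOneSpectrum (𝓞 M))} {T : Finset (HeightOneSpectrum (𝓞 L))}
    (hT : ∀ w, w ∈ T ↔ w.under (𝓞 M) ∈ S) :
    (SU S).map (powMonoidHom 2) ≤ (SU T).map Q.NU := by
  rintro _ ⟨x, hx, rfl⟩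
  exact ⟨_, (map_mem hT).2 hx, Q.NU_algebraMap x⟩

lemma relIndex_norm_ne_zero {S : Finset (HeightOneSpectrum (𝓞 M))}
    {T : Finset (HeightOneSpectrum (𝓞 L))} (hT : ∀ w, w ∈ T ↔ w.under (𝓞 M) ∈ S) :
    ((SU T).map Q.NU).relIndex (SU S) ≠ 0 := by
  intro h
  have := Subgroup.relIndex_dvd_of_le_left (SU S) (Q.sq_le_norm hT)
  rw [h, zero_dvd_iff, SU_sq_index] at this
  exact absurd this (by positivity)

/-- Norms have even valuation at unramified nonsplit primes. -/
lemma even_vl_norm {v : HeightOneSpectrum (𝓞 M)} {w : HeightOneSpectrum (𝓞 L)}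
    (hw : w.under (𝓞 M) = v) (hc : Q.conj w = w) (he : e (M := M) w = 1) (z : L) :
    vl v (Q.N z) = 2 * vl w z := by
  subst hw
  unfold vl
  rw [Q.valuation_N hc he, ← map_pow]
  have := vl_pow w z 2
  unfold vl at this
  rw [this]; norm_num

end QuadExt

/-- An `S ∪ W`-unit of a totally complex field that is locally a square at all primes of `S` is a
square, provided the residue symbols of the `S`-units at `W` are independent. Otherwise `M(√y)`
would contradict the first inequality: the elements `x A` below give too many norm classes. -/
theorem isSquare_of_local.{u} {M : Type u} [Field M] [NumberField M] [IsTotallyComplex M]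
    [DecidableEq (HeightOneSpectrum (𝓞 M))]
    {S W : Finset (HeightOneSpectrum (𝓞 M))} (hS : ClassGen S) (hdis : Disjoint S W)
    (h2 : ∀ v ∉ S, v.valuation M 2 = 1)
    (hsurj : ∀ t : HeightOneSpectrum (𝓞 M) → Prop, ∃ u ∈ SU S, ∀ w ∈ W, (Res w (u : M) ↔ t w))
    {y : Mˣ} (hy : y ∈ SU (S ∪ W))
    (hloc : ∀ v ∈ S, ∃ c x : M, v.valuation M (y * c ^ 2 - x ^ 2) < v.valuation M (4 * x ^ 2)) :
    IsSquare (y : M) := by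
  classical
  by_contra hsq
  obtain ⟨L, _, _, _, Q, hQ⟩ := QuadExt.exists_of_not_isSquare (y : M) hsq
  have hWS : ∀ w ∈ W, w ∉ S := fun w hw h => Finset.disjoint_left.mp hdis h hw
  have h2L : ∀ w : HeightOneSpectrum (𝓞 L), w.under (𝓞 M) ∉ S → w.valuation L 2 = 1 := by
    intro w hw
    have := QuadExt.valuation_algebraMap (M := M) w 2
    rwa [map_ofNat, h2 _ hw, one_pow] at this
  obtain ⟨T, hT, -⟩ := Q.exists_above_finset (S ∪ W)
  have FI := Q.first_inequality hT (hS.mono Finset.subset_union_left) (by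
    intro w hw
    refine Q.unram_of_even (h2L w fun h => hw (Finset.mem_union_left _ h)) ?_
    rw [hQ, (vl_eq_zero _ y.ne_zero).mpr (hy _ hw)]
    exact Even.zero)
  set W1 := W.filter Q.NonSplit with hW1
  have hsub : (S ∪ W).filter Q.NonSplit ⊆ W1 := by
    intro v hv
    rw [Finset.mem_filter, Finset.mem_union] at hv
    obtain ⟨hv, hns⟩ := hv
    rcases hv with hv | hv
    · exfalso
      obtain ⟨w, rfl, hc⟩ := hns
      obtain ⟨c, x, h⟩ := hloc _ hv
      rw [← hQ] at h
      exact Q.split_of_near_square h hc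
    · exact Finset.mem_filter.mpr ⟨hv, hns⟩
  -- a unit whose class modulo norms from `M(√y)` determines `A`: through the parity of the valuation
  -- where `y` has even valuation, and through a residue symbol elsewhere
  have hx : ∀ A : Finset (HeightOneSpectrum (𝓞 M)), ∃ x ∈ SU (S ∪ W), ∀ w ∈ W,
      vl w (x : M) = (if w ∈ A ∧ Even (vl w (y : M)) then 1 else 0) ∧
      (¬ Even (vl w (y : M)) → (Res w (x : M) ↔ w ∉ A)) := by
    intro A
    obtain ⟨x0, hx0, h1, h3⟩ := hS.exists_vl
      (fun w => if w ∈ A ∧ Even (vl w (y : M)) then 1 else 0) W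
    obtain ⟨u, hu, hut⟩ := hsurj (fun w => Res w x0 ↔ w ∉ A)
    have hu0 : ∀ w ∈ W, w.valuation M (u : M) = 1 := fun w hw => hu w (hWS w hw)
    refine ⟨Units.mk0 x0 hx0 * u, mul_mem ?_ ?_, fun w hw => ⟨?_, fun hodd => ?_⟩⟩
    · intro v hv
      have hv' : v ∉ S ∪ W := hv
      rw [Finset.mem_union, not_or] at hv'
      exact (vl_eq_zero v hx0).mp (h3 v hv'.1 hv'.2)
    · exact fun v hv => hu v (fun h => hv (Finset.mem_union_left _ h))
    · rw [Units.val_mul, Units.val_mk0, vl_mul w hx0 u.ne_zero, h1 w (hWS w hw) hw,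
        (vl_eq_zero w u.ne_zero).mpr (hu0 w hw), add_zero]
    · have hv0 : vl w x0 = 0 := by rw [h1 w (hWS w hw) hw, if_neg (fun h => hodd h.2)]
      rw [Units.val_mul, Units.val_mk0, Res.mul ((vl_eq_zero w hx0).mp hv0) (hu0 w hw)
        (h2 w (hWS w hw)), hut w hw]
      tauto
  choose x hxS hxW using hx
  have hlow := card_le_relIndex ((SU T).map Q.NU) (SU (S ∪ W)) (Q.relIndex_norm_ne_zero hT)
    (fun A : W1.powerset => x A.1) (fun A => hxS A.1) (by
      rintro ⟨A, hA⟩ ⟨B, hB⟩ ⟨z, -, hz⟩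
      rw [Finset.mem_powerset] at hA hB
      have hz' : Q.N z = ((x A : Mˣ) : M)⁻¹ * (x B : Mˣ) := by
        have := congrArg (Units.val) hz
        simpa using this
      have key : ∀ w ∈ W1, (w ∈ A ↔ w ∈ B) := by
        intro w hw
        obtain ⟨hwW, w', hw', hc⟩ := Finset.mem_filter.mp hw
        have hvl : vl w (Q.N z) = -vl w (x A : M) + vl w (x B : M) := by
          rw [hz', vl_mul w (inv_ne_zero (x A).ne_zero) (x B).ne_zero, vl_inv]
        rw [(hxW A w hwW).1, (hxW B w hwW).1] at hvl
        by_cases hev : Even (vl w (y : M))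
        · have he := Q.unram_of_even (w := w') (h2L w' (hw' ▸ hWS w hwW)) (by rw [hw', hQ]; exact hev)
          rw [Q.even_vl_norm hw' hc he] at hvl
          simp only [hev, and_true] at hvl
          by_cases h1 : w ∈ A <;> by_cases h3 : w ∈ B <;> simp only [h1, h3, if_true, if_false] at hvl ⊢ <;>
            omega
        · have hA0 : w.valuation M (x A : M) = 1 := by
            rw [← vl_eq_zero w (x A).ne_zero, (hxW A w hwW).1, if_neg (fun h => hev h.2)]
          have hB0 : w.valuation M (x B : M) = 1 := by
            rw [← vl_eq_zero w (x B).ne_zero, (hxW B w hwW).1, if_neg (fun h => hev h.2)]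
          have hAi : w.valuation M (x A : M)⁻¹ = 1 := by rw [map_inv₀, hA0, inv_one]
          have hres : Res w (Q.N z) := by
            obtain ⟨a, b, hab⟩ := Q.exists_N_eq z
            have h1 : w.valuation M (Q.N z) = 1 := by rw [hz', map_mul, hAi, hB0, one_mul]
            rw [hab, hQ] at h1 ⊢
            exact res_of_odd_norm y.ne_zero hev h1
          have h2w := h2 w (hWS w hwW)
          have hii : Res w (x A : M)⁻¹ ↔ Res w (x A : M) :=
            (Res.mul hAi hA0 h2w).mp (by
              rw [inv_mul_cancel₀ (x A).ne_zero]; exact ⟨1, by simp⟩)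
          rw [hz', Res.mul hAi hB0 h2w, hii, (hxW A w hwW).2 hev, (hxW B w hwW).2 hev] at hres
          tauto
      refine Subtype.ext (Finset.ext fun w => ⟨fun h => (key w (hA h)).mp h,
        fun h => (key w (hB h)).mpr h⟩))
  rw [Fintype.card_coe, Finset.card_powerset] at hlow
  have h4 : 2 ^ ((S ∪ W).filter Q.NonSplit).card ≤ 2 ^ W1.card :=
    Nat.pow_le_pow_right (by norm_num) (Finset.card_le_card hsub)
  have : 0 < 2 ^ W1.card := by positivity
  omega

/-! ### Counting local square classes -/

section Local
variable {K : Type*} [Field K] [NumberField K]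

lemma lt_exp_iff_le (x : WithZero (Multiplicative ℤ)) (m : ℤ) :
    x < WithZero.exp m ↔ x ≤ WithZero.exp (m - 1) := by
  rcases eq_or_ne x 0 with rfl | hx
  · simp
  · rw [← WithZero.exp_log hx, WithZero.exp_lt_exp, WithZero.exp_le_exp]; omega

lemma val_lt_iff_mem_pow (v : HeightOneSpectrum (𝓞 K)) (r : 𝓞 K) (n : ℕ) :
    v.valuation K (algebraMap (𝓞 K) K r) < WithZero.exp (-(n : ℤ)) ↔ r ∈ v.asIdeal ^ (n + 1) := by
  rw [lt_exp_iff_le, v.valuation_of_algebraMap, ← v.intValuation_le_pow_iff_mem]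
  push_cast
  rw [show (-(n : ℤ) - 1) = -(n + 1) by ring]

/-- The group of units of `𝓞 K` modulo `v ^ (2 n + 1)`, modulo squares. For `n = v(2)` this is the
group of local unit square classes at `v`. -/
abbrev LocSq (v : HeightOneSpectrum (𝓞 K)) (n : ℕ) : Type _ :=
  (𝓞 K ⧸ v.asIdeal ^ (2 * n + 1))ˣ ⧸ (powMonoidHom (α := (𝓞 K ⧸ v.asIdeal ^ (2 * n + 1))ˣ) 2).range

instance finite_quot_pow (v : HeightOneSpectrum (𝓞 K)) (k : ℕ) :
    Finite (𝓞 K ⧸ v.asIdeal ^ k) :=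
  Ideal.finiteQuotientOfFreeOfNeBot _ (pow_ne_zero _ v.ne_bot)

lemma card_locSq_le (v : HeightOneSpectrum (𝓞 K)) (n : ℕ) :
    Nat.card (LocSq v n) ≤ 2 * Ideal.absNorm v.asIdeal ^ n := by
  classical
  set A := (𝓞 K ⧸ v.asIdeal ^ (2 * n + 1))
  set f := powMonoidHom (α := Aˣ) 2
  have hcard : Nat.card (LocSq v n) = Nat.card f.ker := by
    have h1 := f.ker.card_mul_index
    have h2 := f.range.card_mul_index
    rw [Subgroup.index_ker] at h1
    have h3 : 0 < Nat.card f.range := Nat.card_pos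
    have h4 : f.range.index = Nat.card f.ker := by
      apply Nat.eq_of_mul_eq_mul_left h3
      rw [h2, ← h1, mul_comm]
    exact h4
  set ρ : A →+* (𝓞 K ⧸ v.asIdeal ^ (n + 1)) :=
    Ideal.Quotient.factor (Ideal.pow_le_pow_right (by omega)) with hρ
  have hρs : Function.Surjective ρ := Ideal.Quotient.factor_surjective _
  have hq : ∀ k, Nat.card (𝓞 K ⧸ v.asIdeal ^ k) = Ideal.absNorm v.asIdeal ^ k := by
    intro k; rw [← map_pow, Ideal.absNorm_apply, Submodule.cardQuot_apply]
  have hpos : 0 < Ideal.absNorm v.asIdeal := by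
    rw [Nat.pos_iff_ne_zero, Ne, Ideal.absNorm_eq_zero_iff]; exact v.ne_bot
  have hker : Nat.card ρ.toAddMonoidHom.ker = Ideal.absNorm v.asIdeal ^ n := by
    have h1 := ρ.toAddMonoidHom.ker.card_mul_index
    have hr : ρ.toAddMonoidHom.range = ⊤ := AddMonoidHom.range_eq_top.mpr hρs
    rw [AddSubgroup.index_ker, hr, AddSubgroup.card_top, hq, hq] at h1
    refine Nat.eq_of_mul_eq_mul_right (pow_pos hpos (n + 1)) (h1.trans ?_)
    rw [← pow_add]; congr 1; ring
  have hpm : ∀ t : Aˣ, t ^ 2 = 1 → ρ t = 1 ∨ ρ t = -1 := by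
    intro t ht
    obtain ⟨τ, hτ⟩ := Ideal.Quotient.mk_surjective (t : A)
    have h1 : (τ - 1) * (τ + 1) ∈ v.asIdeal ^ (2 * n + 1) := by
      rw [← Ideal.Quotient.eq_zero_iff_mem]
      simp only [map_mul, map_sub, map_add, map_one, hτ]
      have : (t : A) ^ 2 = 1 := by rw [← Units.val_pow_eq_pow_val, ht, Units.val_one]
      linear_combination this
    have h2 : τ - 1 ∈ v.asIdeal ^ (n + 1) ∨ τ + 1 ∈ v.asIdeal ^ (n + 1) := by
      by_contra! hcon
      rw [← val_lt_iff_mem_pow (K := K), ← val_lt_iff_mem_pow (K := K), not_lt, not_lt] at hcon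
      rw [← val_lt_iff_mem_pow (K := K), map_mul, map_mul] at h1
      have := (mul_le_mul' hcon.1 hcon.2).trans_lt h1
      rw [← WithZero.exp_add, WithZero.exp_lt_exp] at this
      push_cast at this
      omega
    have h3 : ρ t = Ideal.Quotient.mk _ τ := by rw [← hτ, hρ, Ideal.Quotient.factor_mk]
    rw [h3]
    rcases h2 with h2 | h2
    · left
      rw [← sub_eq_zero, ← map_one (Ideal.Quotient.mk _), ← map_sub]
      exact Ideal.Quotient.eq_zero_iff_mem.mpr h2
    · right
      rw [← sub_eq_zero, sub_neg_eq_add, ← map_one (Ideal.Quotient.mk _), ← map_add]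
      exact Ideal.Quotient.eq_zero_iff_mem.mpr h2
  have hmem : ∀ t : f.ker, ρ (((t : Aˣ) : A) - (if ρ ((t : Aˣ) : A) = 1 then 1 else -1)) = 0 := by
    intro t
    have ht : (t : Aˣ) ^ 2 = 1 := t.2
    split_ifs with h
    · rw [map_sub, map_one, h, sub_self]
    · rw [map_sub, map_neg, map_one, (hpm _ ht).resolve_left h, sub_self]
  rw [hcard, ← hker, show 2 * Nat.card ρ.toAddMonoidHom.ker =
    Nat.card (Bool × ρ.toAddMonoidHom.ker) by rw [Nat.card_prod]; simp]
  refine Nat.card_le_card_of_injective (fun t : f.ker => (decide (ρ ((t : Aˣ) : A) = 1),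
    (⟨((t : Aˣ) : A) - (if ρ ((t : Aˣ) : A) = 1 then 1 else -1), hmem t⟩ :
      ρ.toAddMonoidHom.ker))) fun t t' h => ?_
  rw [Prod.mk.injEq, decide_eq_decide] at h
  obtain ⟨h1, h2⟩ := h
  replace h2 := congrArg Subtype.val h2
  dsimp only at h2
  apply Subtype.ext
  apply Units.ext
  by_cases h : ρ ((t : Aˣ) : A) = 1
  · rw [if_pos h, if_pos (h1.mp h)] at h2
    exact sub_left_injective h2
  · rw [if_neg h, if_neg (fun h' => h (h1.mpr h'))] at h2
    exact sub_left_injective h2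

lemma isUnit_mk_pow (v : HeightOneSpectrum (𝓞 K)) {r : 𝓞 K} (hr : r ∉ v.asIdeal) (k : ℕ) :
    IsUnit (Ideal.Quotient.mk (v.asIdeal ^ k) r) := by
  have h1 : IsCoprime (v.asIdeal ^ k) (Ideal.span {r}) := by
    apply IsCoprime.pow_left
    rw [Ideal.isCoprime_iff_sup_eq]
    refine v.isMaximal.out.2 _ (lt_of_le_of_ne le_sup_left fun h => hr ?_)
    rw [h]
    exact Ideal.mem_sup_right (Ideal.mem_span_singleton_self r)
  obtain ⟨i, hi, j, hj, hij⟩ := Ideal.isCoprime_iff_exists.mp h1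
  obtain ⟨t, rfl⟩ := Ideal.mem_span_singleton'.mp hj
  refine IsUnit.of_mul_eq_one (Ideal.Quotient.mk _ t) ?_
  rw [← map_mul, mul_comm r t, ← map_one (Ideal.Quotient.mk _), Ideal.Quotient.eq]
  rw [show t * r - 1 = -i by linear_combination hij]
  exact neg_mem hi

/-- `q` is the square class of the unit part of `x` at `v`. -/
def LocClass (v : HeightOneSpectrum (𝓞 K)) (n : ℕ) (x : K) (q : LocSq v n) : Prop :=
  ∃ (c : K) (r : 𝓞 K) (u : (𝓞 K ⧸ v.asIdeal ^ (2 * n + 1))ˣ),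
    v.valuation K (x * c ^ 2) = 1 ∧
    v.valuation K (x * c ^ 2 - algebraMap (𝓞 K) K r) < WithZero.exp (-((2 * n : ℕ) : ℤ)) ∧
    (u : 𝓞 K ⧸ v.asIdeal ^ (2 * n + 1)) = Ideal.Quotient.mk _ r ∧ q = QuotientGroup.mk u

lemma exists_locClass (v : HeightOneSpectrum (𝓞 K)) (n : ℕ) {x : K} (hx : x ≠ 0)
    (hev : Even (vl v x)) : ∃ q, LocClass v n x q := by
  obtain ⟨k, hk⟩ := hev
  obtain ⟨c, hc0, hc⟩ := exists_vl_eq v (-k)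
  have h1 : v.valuation K (x * c ^ 2) = 1 := by
    rw [← vl_eq_zero v (mul_ne_zero hx (pow_ne_zero _ hc0)), vl_mul v hx (pow_ne_zero _ hc0),
      vl_pow, hk, hc]
    push_cast; ring
  obtain ⟨r, hr⟩ := HeightOneSpectrum.exists_valuation_sub_lt_of_integer v h1.le
    (Units.mk0 (WithZero.exp (-((2 * n : ℕ) : ℤ))) (WithZero.exp_ne_zero))
  rw [Valuation.map_sub_swap, Units.val_mk0] at hr
  have hr1 : v.valuation K (algebraMap (𝓞 K) K r) = 1 := valuation_eq_one_of_sub h1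
    (hr.trans_le (by rw [← WithZero.exp_zero, WithZero.exp_le_exp]; omega))
  have hu := isUnit_mk_pow v (r := r) (by
    rw [← val_lt_one_iff (K := K), hr1]; exact lt_irrefl _) (2 * n + 1)
  exact ⟨_, c, r, hu.unit, h1, hr, hu.unit_spec, rfl⟩

lemma LocClass.local_square {v : HeightOneSpectrum (𝓞 K)} {n : ℕ} {x y : K} {q : LocSq v n}
    (hx : LocClass v n x q) (hy : LocClass v n y q)
    (h2 : v.valuation K 2 = WithZero.exp (-(n : ℤ))) :
    ∃ c z : K, v.valuation K (x⁻¹ * y * c ^ 2 - z ^ 2) < v.valuation K (4 * z ^ 2) := by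
  obtain ⟨c, r, u, hc, hr, hu, rfl⟩ := hx
  obtain ⟨d, r', u', hd, hr', hu', hq⟩ := hy
  obtain ⟨b, hb⟩ := QuotientGroup.eq.mp hq
  have hb' : u' = u * b ^ 2 := by
    rw [eq_inv_mul_iff_mul_eq] at hb
    exact hb.symm
  obtain ⟨β, hβ⟩ := Ideal.Quotient.mk_surjective (b : 𝓞 K ⧸ v.asIdeal ^ (2 * n + 1))
  have h3 : r' - r * β ^ 2 ∈ v.asIdeal ^ (2 * n + 1) := by
    rw [← Ideal.Quotient.eq, map_mul, map_pow, hβ, ← hu, ← hu', hb']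
    simp
  rw [← val_lt_iff_mem_pow (K := K)] at h3
  set B := algebraMap (𝓞 K) K β
  set V := v.valuation K
  set R := algebraMap (𝓞 K) K r
  set R' := algebraMap (𝓞 K) K r'
  have hx0 : x ≠ 0 := by rintro rfl; simp at hc
  have hB : V B ≤ 1 := v.valuation_le_one _
  have e1 : (WithZero.exp (-((2 * n : ℕ) : ℤ))) ≤ (1 : WithZero (Multiplicative ℤ)) := by
    rw [← WithZero.exp_zero, WithZero.exp_le_exp]; omega
  have h4 : V (y * d ^ 2 - x * c ^ 2 * B ^ 2) < WithZero.exp (-((2 * n : ℕ) : ℤ)) := by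
    have : y * d ^ 2 - x * c ^ 2 * B ^ 2 = (y * d ^ 2 - R') + (algebraMap (𝓞 K) K (r' - r * β ^ 2))
        + -((x * c ^ 2 - R) * B ^ 2) := by
      simp only [map_sub, map_mul, map_pow]; ring
    rw [this]
    refine Valuation.map_add_lt _ (Valuation.map_add_lt _ hr' h3) ?_
    rw [Valuation.map_neg, map_mul, map_pow]
    exact (mul_le_of_le_one_right' (pow_le_one' hB 2)).trans_lt hr
  have hB1 : V (x * c ^ 2 * B ^ 2) = 1 := valuation_eq_one_of_sub hd (h4.trans_le e1)
  refine ⟨d, c * B, ?_⟩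
  have h5 : V x⁻¹ = V (c * B) ^ 2 := by
    rw [map_inv₀]
    apply inv_eq_of_mul_eq_one_right
    rw [← map_pow, ← map_mul, ← hB1]
    congr 1; ring
  have hpos : 0 < V x⁻¹ := by
    rw [zero_lt_iff, Ne, map_eq_zero]; exact inv_ne_zero hx0
  rw [show x⁻¹ * y * d ^ 2 - (c * B) ^ 2 = x⁻¹ * (y * d ^ 2 - x * c ^ 2 * B ^ 2) by
    field_simp, show (4 : K) * (c * B) ^ 2 = (c * B) ^ 2 * 2 ^ 2 by ring, map_mul, map_mul,
    map_pow V (c * B), ← h5, map_pow]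
  refine mul_lt_mul_of_pos_left (h4.trans_eq ?_) hpos
  rw [h2, ← WithZero.exp_nsmul]
  congr 1; simp

lemma prod_absNorm_le (S : Finset (HeightOneSpectrum (𝓞 K))) (n : HeightOneSpectrum (𝓞 K) → ℕ)
    (h2 : ∀ v ∈ S, v.valuation K 2 = WithZero.exp (-(n v : ℤ))) :
    ∏ v ∈ S, Ideal.absNorm v.asIdeal ^ n v ≤ 2 ^ Module.finrank ℚ K := by
  have hdvd : ∏ v ∈ S, v.asIdeal ^ n v ∣ Ideal.span {(2 : 𝓞 K)} := by
    refine Finset.prod_dvd_of_coprime ?_ ?_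
    · intro v _ w _ hne
      apply IsCoprime.pow
      rw [Ideal.isCoprime_iff_sup_eq]
      exact v.isMaximal.coprime_of_ne w.isMaximal (fun h => hne (HeightOneSpectrum.ext h))
    · intro v hv
      rw [Ideal.dvd_span_singleton, ← v.intValuation_le_pow_iff_mem, ← v.valuation_of_algebraMap (K := K)]
      have := h2 v hv
      rw [← map_ofNat (algebraMap (𝓞 K) K)] at this
      exact this.le
  have := map_dvd Ideal.absNorm hdvd
  rw [map_prod] at this
  simp_rw [map_pow] at this
  have h3 : Ideal.absNorm (Ideal.span {(2 : 𝓞 K)}) = 2 ^ Module.finrank ℚ K := by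
    have := Ideal.absNorm_span_natCast (S := 𝓞 K) 2
    rw [RingOfIntegers.rank] at this
    exact_mod_cast this
  rw [h3] at this
  exact Nat.le_of_dvd (by positivity) this

end Local

/-! ### Norms from unramified quadratic extensions -/

section EvenSub
variable {K : Type*} [Field K] [NumberField K]

/-- The `S'`-units with even valuation at every prime satisfying `p`. -/
noncomputable def evenSub (S' : Finset (HeightOneSpectrum (𝓞 K)))
    (p : HeightOneSpectrum (𝓞 K) → Prop) : Subgroup Kˣ where
  carrier := {x | x ∈ SU S' ∧ ∀ v, p v → Even (vl v (x : K))}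
  one_mem' := ⟨one_mem _, fun v _ => by simp⟩
  mul_mem' := by
    rintro a b ⟨ha, ha'⟩ ⟨hb, hb'⟩
    refine ⟨mul_mem ha hb, fun v hv => ?_⟩
    rw [Units.val_mul, vl_mul v a.ne_zero b.ne_zero]
    exact (ha' v hv).add (hb' v hv)
  inv_mem' := by
    rintro a ⟨ha, ha'⟩
    refine ⟨inv_mem ha, fun v hv => ?_⟩
    rw [Units.val_inv_eq_inv_val, vl_inv]
    exact (ha' v hv).neg

lemma exists_val_two (v : HeightOneSpectrum (𝓞 K)) :
    ∃ n : ℕ, v.valuation K 2 = WithZero.exp (-(n : ℤ)) := by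
  have h1 : v.valuation K 2 ≤ 1 := by
    rw [← map_ofNat (algebraMap (𝓞 K) K)]; exact v.valuation_le_one _
  rw [← exp_vl v (two_ne_zero (α := K)), ← WithZero.exp_zero, WithZero.exp_le_exp] at h1
  refine ⟨(-(vl v (2 : K))).toNat, ?_⟩
  rw [Int.toNat_of_nonneg (by omega), neg_neg, exp_vl v (two_ne_zero (α := K))]

lemma finrank_eq [IsTotallyComplex K] :
    Module.finrank ℚ K = 2 * Fintype.card (InfinitePlace K) := by
  rw [IsTotallyComplex.finrank, InfinitePlace.card_eq_nrRealPlaces_add_nrComplexPlaces,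
    IsTotallyComplex.nrRealPlaces_eq_zero, zero_add]

end EvenSub

/-- In an unramified quadratic extension of a totally complex field, every element with even
valuation at all primes is a norm. -/
theorem exists_N_eq_of_even.{u} {M L : Type u} [Field M] [NumberField M] [IsTotallyComplex M] [Field L]
    [NumberField L] [Algebra M L] (Q : QuadExt M L)
    (he : ∀ w : HeightOneSpectrum (𝓞 L), QuadExt.e (M := M) w = 1) {b : M} (hb0 : b ≠ 0)
    (hb : ∀ v : HeightOneSpectrum (𝓞 M), Even (vl v b)) : ∃ z : L, Q.N z = b := by
  classical
  obtain ⟨S, hTS, hS⟩ := exists_classGen ((vl_support_finite hb0).toFinset ∪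
    (vl_support_finite (K := M) two_ne_zero).toFinset)
  have hbS : ∀ v ∉ S, v.valuation M b = 1 := by
    intro v hv
    by_contra h
    rw [← vl_eq_zero v hb0] at h
    exact hv (hTS (Finset.mem_union_left _ (by simpa using h)))
  have h2 : ∀ v ∉ S, v.valuation M 2 = 1 := by
    intro v hv
    by_contra h
    rw [← vl_eq_zero v two_ne_zero] at h
    exact hv (hTS (Finset.mem_union_right _ (by simpa using h)))
  set I := Fintype.card (InfinitePlace M) with hI
  have hIpos : 0 < I := Fintype.card_pos
  obtain ⟨W, hWc, hdis, hWs, hW2, hsurj⟩ := Q.exists_aux_primes S he (I + S.card - 1) (by omega)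
  obtain ⟨T, hT, -⟩ := Q.exists_above_finset (S ∪ W)
  have FI := Q.first_inequality hT (hS.mono Finset.subset_union_left) (fun w _ => he w)
  have hsub : ((S ∪ W).filter Q.NonSplit).card ≤ (S.filter Q.NonSplit).card := by
    refine Finset.card_le_card fun v hv => ?_
    rw [Finset.mem_filter, Finset.mem_union] at hv
    rcases hv.1 with h | h
    · exact Finset.mem_filter.mpr ⟨h, hv.2⟩
    · exact absurd hv.2 (hWs v h)
  have hrne := Q.relIndex_norm_ne_zero hT
  set X := SU (S ∪ W)
  set X2 := X.map (powMonoidHom 2)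
  set NX := (SU T).map Q.NU
  set K1 := evenSub (S ∪ W) (fun v => v ∈ S ∧ Q.NonSplit v)
  set K0 := evenSub (S ∪ W) (fun v => v ∈ S)
  have hK1X : K1 ≤ X := fun x hx => hx.1
  have hK01 : K0 ≤ K1 := fun x hx => ⟨hx.1, fun v hv => hx.2 v hv.1⟩
  have hX2K0 : X2 ≤ K0 := by
    rintro _ ⟨x, hx, rfl⟩
    refine ⟨pow_mem hx 2, fun v _ => ?_⟩
    simp only [powMonoidHom_apply, Units.val_pow_eq_pow_val, vl_pow]
    exact ⟨vl v (x : M), by push_cast; ring⟩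
  have hNK : NX ≤ K1 := by
    rintro _ ⟨x, hx, rfl⟩
    refine ⟨Q.NU_mem hT hx, ?_⟩
    rintro v ⟨-, w, hw, hc⟩
    rw [QuadExt.NU_apply, Q.even_vl_norm hw hc (he w)]
    exact ⟨_, two_mul _⟩
  choose n hn using exists_val_two (K := M)
  -- an element of `K0` that is locally a square at `S` is a square, by the choice of `W`
  have i0 : X2.relIndex K0 ≤ 2 ^ S.card * 2 ^ (2 * I) := by
    have hcl : ∀ x : K0, ∀ v : S, ∃ q, LocClass v.1 (n v.1) ((x : Mˣ) : M) q := fun x v =>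
      exists_locClass v.1 _ (x : Mˣ).ne_zero (x.2.2 v.1 v.2)
    choose φ hφ using hcl
    refine (relIndex_le_card X2 K0 φ fun x y hxy => ?_).trans ?_
    · have hmem : (x : Mˣ)⁻¹ * (y : Mˣ) ∈ X := mul_mem (inv_mem x.2.1) y.2.1
      refine sq_mem_of_isSquare hmem (isSquare_of_local hS hdis h2 hsurj hmem fun v hv => ?_)
      rw [Units.val_mul, Units.val_inv_eq_inv_val]
      refine (hφ x ⟨v, hv⟩).local_square ?_ (hn v)
      rw [hxy]
      exact hφ y ⟨v, hv⟩
    · rw [Nat.card_pi]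
      refine (Finset.prod_le_prod' fun v _ => card_locSq_le v.1 (n v.1)).trans ?_
      rw [Finset.prod_mul_distrib, Finset.prod_const, Finset.card_univ, Fintype.card_coe,
        ← finrank_eq]
      refine Nat.mul_le_mul_left _ ?_
      rw [Finset.prod_coe_sort S (fun v => Ideal.absNorm v.asIdeal ^ n v)]
      exact prod_absNorm_le S n (fun v _ => hn v)
  -- parities of the valuations at the split primes of `S`
  have i1 : K0.relIndex K1 ≤ 2 ^ (S.filter (fun v => ¬ Q.NonSplit v)).card := by
    refine (relIndex_le_card K0 K1
      (fun x (v : S.filter (fun v => ¬ Q.NonSplit v)) => decide (Even (vl v.1 ((x : Mˣ) : M))))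
      fun x y hxy => ⟨mul_mem (inv_mem x.2.1) y.2.1, fun v hv => ?_⟩).trans (le_of_eq (by
        rw [Nat.card_eq_fintype_card, Fintype.card_fun, Fintype.card_bool, Fintype.card_coe]))
    rw [Units.val_mul, Units.val_inv_eq_inv_val, vl_mul v (inv_ne_zero (Units.ne_zero _))
      (Units.ne_zero _), vl_inv, Int.even_add, even_neg]
    by_cases hns : Q.NonSplit v
    · exact iff_of_true (x.2.2 v ⟨hv, hns⟩) (y.2.2 v ⟨hv, hns⟩)
    · have := congrFun hxy ⟨v, Finset.mem_filter.mpr ⟨hv, hns⟩⟩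
      rwa [decide_eq_decide] at this
  have e1 := Subgroup.relIndex_mul_relIndex X2 K0 K1 hX2K0 hK01
  have e2 := Subgroup.relIndex_mul_relIndex X2 K1 X (hX2K0.trans hK01) hK1X
  have e3 := Subgroup.relIndex_mul_relIndex NX K1 X hNK hK1X
  rw [SU_sq_index, Finset.card_union_of_disjoint hdis, hWc] at e2
  have hm := Finset.card_filter_add_card_filter_not (s := S) Q.NonSplit
  have h1 : NX.relIndex K1 = 1 := by
    set m := (S.filter Q.NonSplit).card
    set c := (S.filter (fun v => ¬ Q.NonSplit v)).card
    set a := NX.relIndex K1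
    set k := K1.relIndex X
    have hFI : 2 * NX.relIndex X ≤ 2 ^ m := FI.trans (Nat.pow_le_pow_right (by norm_num) hsub)
    rw [← e3] at hFI hrne
    -- the left side is `[X : X2]`, by Dirichlet's theorem
    have h3 : 2 ^ (I + (S.card + (I + S.card - 1))) ≤ 2 ^ S.card * 2 ^ (2 * I) * 2 ^ c * k := by
      rw [← e2, ← e1]
      exact Nat.mul_le_mul_right _ (Nat.mul_le_mul i0 i1)
    have h4 : 2 ^ (S.card + 2 * I + c) * 2 ^ m = 2 * 2 ^ (I + (S.card + (I + S.card - 1))) := by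
      rw [← pow_add, ← pow_succ']
      congr 1
      omega
    have h5 : 2 ^ m ≤ 2 * k := by
      have hp : 0 < 2 ^ (S.card + 2 * I + c) := by positivity
      refine Nat.le_of_mul_le_mul_left ?_ hp
      have h6 : 2 ^ (S.card + 2 * I + c) * (2 * k) =
          2 * (2 ^ S.card * 2 ^ (2 * I) * 2 ^ c * k) := by
        rw [pow_add, pow_add]
        ring
      rw [h4, h6]
      exact Nat.mul_le_mul_left _ h3
    have ha : a ≠ 0 := left_ne_zero_of_mul hrne
    have hk : 0 < k := Nat.pos_of_ne_zero (right_ne_zero_of_mul hrne)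
    have : a ≤ 1 := by
      by_contra! h
      nlinarith
    omega
  rw [Subgroup.relIndex_eq_one] at h1
  have hbK : Units.mk0 b hb0 ∈ K1 :=
    ⟨fun v hv => hbS v (fun h => hv (Finset.mem_coe.mpr (Finset.mem_union_left _ h))), fun v _ => hb v⟩
  obtain ⟨z, -, hz⟩ := h1 hbK
  exact ⟨z, by simpa using congrArg Units.val hz⟩

/-! ### `-1` as a sum of two squares -/

/-- If `2` and `3` have even valuation at every prime of the totally complex field `M`, then
`-2 = α² + 3 β²` is solvable in `M`: if `-3` is not a square, the extension
`M(√-3)` is unramified and `-2` has even valuation everywhere. -/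
lemma neg_two_repr.{u} {M : Type u} [Field M] [NumberField M] [IsTotallyComplex M]
    (h2 : ∀ v : HeightOneSpectrum (𝓞 M), Even (vl v (2 : M)))
    (h3 : ∀ v : HeightOneSpectrum (𝓞 M), Even (vl v (3 : M))) :
    ∃ α β : M, α ^ 2 + 3 * β ^ 2 = -2 := by
  by_cases hsq : IsSquare (-3 : M)
  · obtain ⟨s, hs⟩ := hsq
    have hs0 : s ≠ 0 := by rintro rfl; norm_num at hs
    refine ⟨-1 / 2, -3 / (2 * s), ?_⟩
    field_simp
    linear_combination -9 * hs
  · obtain ⟨L, _, _, _, Q, hQ⟩ := QuadExt.exists_of_not_isSquare (-3 : M) hsq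
    have hneg : ∀ (v : HeightOneSpectrum (𝓞 M)) (x : M), vl v (-x) = vl v x := fun v x => by
      unfold vl; rw [Valuation.map_neg]
    have he : ∀ w : HeightOneSpectrum (𝓞 L), QuadExt.e (M := M) w = 1 := by
      intro w
      by_cases hw2 : w.valuation L 2 = 1
      · exact Q.unram_of_even hw2 (by rw [hQ, hneg]; exact h3 _)
      · have hle : w.valuation L 2 ≤ 1 := by
          rw [← map_ofNat (algebraMap (𝓞 L) L)]; exact w.valuation_le_one _
        have hlt := lt_of_le_of_ne hle hw2
        have hw3 : w.valuation L 3 = 1 := by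
          rw [show (3 : L) = 1 + 2 by norm_num, Valuation.map_one_add_of_lt _ hlt]
        have hs2 : Q.s ^ 2 = -3 := by rw [Q.hs, hQ, map_neg, map_ofNat]
        have hs : w.valuation L Q.s = 1 := by
          have : w.valuation L Q.s ^ 2 = 1 := by
            rw [← map_pow, hs2, Valuation.map_neg, hw3]
          rwa [pow_eq_one_iff_of_nonneg zero_le two_ne_zero] at this
        -- `θ` is a primitive cube root of unity
        have hθ : w.valuation L ((-1 + Q.s) / 2) = 1 := by
          have : w.valuation L ((-1 + Q.s) / 2) ^ 3 = 1 := by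
            rw [← map_pow, ← map_one (w.valuation L)]
            congr 1
            linear_combination (Q.s - 3) / 8 * hs2
          rwa [pow_eq_one_iff_of_nonneg zero_le three_ne_zero] at this
        refine Q.unram_of_theta hθ.le ?_
        rw [map_div₀, map_add, map_neg, map_one, Q.hσ, map_ofNat,
          show (-1 + Q.s) / 2 - (-1 + -Q.s) / 2 = Q.s by ring, hs]
    obtain ⟨z, hz⟩ := exists_N_eq_of_even Q he (b := -2) (by norm_num)
      (fun v => by rw [hneg]; exact h2 v)
    obtain ⟨a, b, hab⟩ := Q.exists_N_eq z
    refine ⟨a, b, ?_⟩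
    rw [hz, hQ] at hab
    linear_combination -hab

/-- If `2` and `3` have even valuation at every prime of the totally complex field `M`, then `-1` is
a sum of two squares in `M`: with `-2 = α² + 3 β²`, the sums of two squares `α² + β²` and
`(β + 1)² + (β - 1)²` are opposite to each other. -/
theorem neg_one_eq_add_sq.{u} {M : Type u} [Field M] [NumberField M] [IsTotallyComplex M]
    (h2 : ∀ v : HeightOneSpectrum (𝓞 M), Even (vl v (2 : M)))
    (h3 : ∀ v : HeightOneSpectrum (𝓞 M), Even (vl v (3 : M))) :
    ∃ x y : M, x ^ 2 + y ^ 2 = -1 := by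
  obtain ⟨α, β, h⟩ := neg_two_repr h2 h3
  have h4 : α ^ 2 + β ^ 2 + ((β + 1) ^ 2 + (β - 1) ^ 2) = 0 := by linear_combination h
  by_cases h0 : α ^ 2 + β ^ 2 = 0
  · rw [h0, zero_add] at h4
    have : β + 1 ≠ 0 ∨ β - 1 ≠ 0 := by
      by_contra! hc
      have : (2 : M) = 0 := by linear_combination hc.1 - hc.2
      exact two_ne_zero this
    rcases this with h | h
    · exact ⟨(β - 1) / (β + 1), 0, by field_simp; linear_combination h4⟩
    · exact ⟨(β + 1) / (β - 1), 0, by field_simp; linear_combination h4⟩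
  · refine ⟨(α * (β + 1) + β * (β - 1)) / (α ^ 2 + β ^ 2),
      (α * (β - 1) - β * (β + 1)) / (α ^ 2 + β ^ 2), ?_⟩
    field_simp
    linear_combination (α ^ 2 + β ^ 2) * h4

/-! ### Reduction from totally positive elements -/

section Reduction
variable {F : Type*} [Field F] [NumberField F]

lemma exists_real_embedding (h : ∀ (σ : F →+* ℂ) (x : F), (σ x).im = 0) (σ : F →+* ℂ) :
    ∃ ρ : F →+* ℝ, ∀ x, σ x = (ρ x : ℂ) := by
  have hσ : ComplexEmbedding.IsReal σ := by
    ext x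
    rw [ComplexEmbedding.conjugate_coe_eq, Complex.conj_eq_iff_im.mpr (h σ x)]
  exact ⟨hσ.embedding, fun x => (ComplexEmbedding.IsReal.coe_embedding_apply hσ x).symm⟩

/-- If `Tr(x² c) > 0` for all `x ≠ 0`, then `c` is positive at every real embedding: otherwise
take `x` large at one embedding where `c` is negative and small at all the others. -/
lemma totally_pos_of_trace (h : ∀ (σ : F →+* ℂ) (x : F), (σ x).im = 0) {c : F}
    (hc : ∀ x : F, x ≠ 0 → 0 < Algebra.trace ℚ F (x ^ 2 * c)) (ρ : F →+* ℝ) : 0 < ρ c := by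
  classical
  have htr : ∀ x : F, ((Algebra.trace ℚ F x : ℚ) : ℝ) = ∑ σ : F →ₐ[ℚ] ℂ, (σ x).re := by
    intro x
    have := congrArg Complex.re (trace_eq_sum_embeddings (K := ℚ) (L := F) ℂ (x := x))
    rw [Complex.re_sum] at this
    simpa using this
  have hc0 : c ≠ 0 := by
    rintro rfl
    simpa using hc 1 one_ne_zero
  by_contra! hneg
  have hlt : ρ c < 0 := lt_of_le_of_ne hneg (by simpa using hc0)
  set σ₀ : F →+* ℂ := Complex.ofRealHom.comp ρ with hσ₀
  obtain ⟨x, hx1, hx2⟩ := AbsoluteValue.exists_one_lt_lt_one_pi_of_not_isEquiv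
    (v := fun w : InfinitePlace F => w.1) (fun w => w.isNontrivial)
    (fun _ _ hne => (InfinitePlace.eq_iff_isEquiv (K := F)).not.mp hne) (InfinitePlace.mk σ₀)
  have hx1' : 1 < |ρ x| := by
    have : (InfinitePlace.mk σ₀).1 x = |ρ x| := by
      change InfinitePlace.mk σ₀ x = _
      rw [InfinitePlace.apply]
      simp [hσ₀]
    rwa [this] at hx1
  have hx0 : x ≠ 0 := by
    rintro rfl
    simp at hx1'
    linarith
  have hsmall : ∀ σ : F →ₐ[ℚ] ℂ, (σ : F →+* ℂ) ≠ σ₀ → ‖σ x‖ < 1 := by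
    intro σ hne
    refine hx2 (InfinitePlace.mk (σ : F →+* ℂ)) ?_
    intro heq
    rcases InfinitePlace.mk_eq_iff.mp heq with h1 | h1
    · exact hne h1
    · apply hne
      rw [← h1]
      ext y
      rw [ComplexEmbedding.conjugate_coe_eq]
      exact (Complex.conj_eq_iff_im.mpr (h _ y)).symm
  set B := ∑ σ : F →ₐ[ℚ] ℂ, ‖σ c‖ with hB
  obtain ⟨n, hn⟩ := (tendsto_pow_atTop_atTop_of_one_lt hx1').eventually_gt_atTop (B / |ρ c|) |>.exists
  have hbig : B < |ρ x| ^ (2 * n) * |ρ c| := by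
    have hpos : 0 < |ρ c| := abs_pos.mpr hlt.ne
    rw [div_lt_iff₀ hpos] at hn
    refine hn.trans_le ?_
    gcongr
    · exact hx1'.le
    · omega
  have hpos := hc (x ^ n) (pow_ne_zero _ hx0)
  have hpos' : (0 : ℝ) < ((Algebra.trace ℚ F ((x ^ n) ^ 2 * c) : ℚ) : ℝ) := by exact_mod_cast hpos
  rw [htr] at hpos'
  set τ : F →ₐ[ℚ] ℂ := σ₀.toRatAlgHom with hτ
  have hle : ∀ σ : F →ₐ[ℚ] ℂ, σ ≠ τ → (σ ((x ^ n) ^ 2 * c)).re ≤ ‖σ c‖ := by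
    intro σ hne
    refine (Complex.re_le_norm _).trans ?_
    rw [map_mul, norm_mul, map_pow, map_pow, norm_pow, norm_pow]
    have h1 : ‖σ x‖ < 1 := hsmall σ (by
      intro h1
      apply hne
      ext y
      exact RingHom.congr_fun h1 y)
    exact mul_le_of_le_one_left (norm_nonneg _)
      (pow_le_one₀ (by positivity) (pow_le_one₀ (norm_nonneg _) h1.le))
  have hτv : (τ ((x ^ n) ^ 2 * c)).re = -(|ρ x| ^ (2 * n) * |ρ c|) := by
    have : τ ((x ^ n) ^ 2 * c) = ((ρ ((x ^ n) ^ 2 * c) : ℝ) : ℂ) := rfl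
    rw [this, Complex.ofReal_re, map_mul, map_pow, map_pow, abs_of_neg hlt, pow_mul, sq_abs]
    ring
  rw [← Finset.add_sum_erase _ _ (Finset.mem_univ τ), hτv] at hpos'
  have h3 : ∑ σ ∈ Finset.univ.erase τ, (σ ((x ^ n) ^ 2 * c)).re ≤ B := by
    refine (Finset.sum_le_sum fun σ hσ => hle σ (Finset.ne_of_mem_erase hσ)).trans ?_
    exact Finset.sum_le_sum_of_subset_of_nonneg (Finset.subset_univ _) fun _ _ _ => norm_nonneg _
  linarith

/-- The step from `-1 = x² + y²` over `F(√-a)` to sums of squares over `F`: if `-1` is a sum of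
two squares in `F(√-a)`, then `a` is a sum of three squares in `F`. -/
lemma sum_squares_of_adjoin {L : Type*} [Field L] [Algebra F L] (ρ : F →+* ℝ) {a : F}
    (Q : QuadExt F L) (hQ : Q.d = -a) {x y : L} (hxy : x ^ 2 + y ^ 2 = -1) :
    ∃ p q r : F, p ^ 2 + q ^ 2 + r ^ 2 = a := by
  have hzero : ∀ u v : F, algebraMap F L u + algebraMap F L v * Q.s = 0 → u = 0 ∧ v = 0 := by
    intro u v huv
    by_cases hv : v = 0
    · subst hv
      simpa using huv
    · exfalso
      apply Q.hd
      refine ⟨-u / v, (algebraMap F L).injective ?_⟩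
      have hv' : algebraMap F L v ≠ 0 := by simpa using hv
      rw [← Q.hs]
      have : Q.s = algebraMap F L (-u / v) := by
        rw [map_div₀, map_neg]
        field_simp
        linear_combination huv
      rw [this, map_mul, sq]
  obtain ⟨x0, x1, rfl⟩ := Q.span x
  obtain ⟨y0, y1, rfl⟩ := Q.span y
  have hs := Q.hs
  rw [hQ, map_neg] at hs
  obtain ⟨h1, h2⟩ := hzero (x0 ^ 2 + y0 ^ 2 - a * (x1 ^ 2 + y1 ^ 2) + 1) (2 * (x0 * x1 + y0 * y1)) (by
    simp only [map_add, map_sub, map_mul, map_pow, map_ofNat, map_one]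
    linear_combination hxy - (algebraMap F L x1 ^ 2 + algebraMap F L y1 ^ 2) * hs)
  have h2' : x0 * x1 + y0 * y1 = 0 := by simpa using h2
  have ht : x1 ^ 2 + y1 ^ 2 ≠ 0 := by
    intro h
    rw [h] at h1
    have := congrArg ρ h1
    simp only [map_add, map_sub, map_mul, map_pow, map_zero, map_one] at this
    nlinarith [sq_nonneg (ρ x0), sq_nonneg (ρ y0)]
  refine ⟨x1 / (x1 ^ 2 + y1 ^ 2), y1 / (x1 ^ 2 + y1 ^ 2),
    (x0 * y1 - x1 * y0) / (x1 ^ 2 + y1 ^ 2), ?_⟩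
  field_simp
  linear_combination (x1 ^ 2 + y1 ^ 2) * h1 - (x0 * x1 + y0 * y1) * h2'

/-- Simultaneous approximation of integers at finitely many primes. -/
lemma exists_approx_finset (S : Finset (HeightOneSpectrum (𝓞 F))) (n : HeightOneSpectrum (𝓞 F) → ℕ)
    (x : HeightOneSpectrum (𝓞 F) → 𝓞 F) :
    ∃ y : 𝓞 F, ∀ v ∈ S, v.valuation F (algebraMap (𝓞 F) F (y - x v)) < WithZero.exp (-(n v : ℤ)) := by
  obtain ⟨y, hy⟩ := IsDedekindDomain.exists_forall_sub_mem_ideal (s := S)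
    (fun v : HeightOneSpectrum (𝓞 F) => v.asIdeal) (fun v => n v + 1) (fun v _ => v.prime)
    (fun v _ w _ hvw h => hvw (HeightOneSpectrum.ext h)) (fun v => x v.1)
  exact ⟨y, fun v hv => (val_lt_iff_mem_pow v _ _).mpr (hy v hv)⟩

/-- Multiplying `a` by a suitable sum of squares makes its valuation odd at all primes where
`2` or `3` has odd valuation. -/
lemma exists_odd_mul (ρ : F →+* ℝ) {a : F} (ha : a ≠ 0) :
    ∃ y z : F, ∀ v : HeightOneSpectrum (𝓞 F), (¬ Even (vl v (2 : F)) ∨ ¬ Even (vl v (3 : F))) →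
      ¬ Even (vl v (a * (1 + y ^ 2 + z ^ 2))) := by
  classical
  have h2 : (2 : F) ≠ 0 := two_ne_zero
  have h3 : (3 : F) ≠ 0 := three_ne_zero
  set S := (vl_support_finite h2).toFinset ∪ (vl_support_finite h3).toFinset with hS
  set A := fun v : HeightOneSpectrum (𝓞 F) => Even (vl v a) ∧ ¬ Even (vl v (2 : F)) with hA
  set B := fun v : HeightOneSpectrum (𝓞 F) => Even (vl v a) ∧ ¬ Even (vl v (3 : F)) with hB
  have hint : ∀ (v : HeightOneSpectrum (𝓞 F)) (r : 𝓞 F), v.valuation F (algebraMap (𝓞 F) F r) ≤ 1 :=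
    fun v r => v.valuation_le_one r
  have hle2 : ∀ v : HeightOneSpectrum (𝓞 F), vl v (2 : F) ≤ 0 := fun v => by
    rw [← WithZero.exp_le_exp, exp_vl v h2, WithZero.exp_zero]
    rw [← map_ofNat (algebraMap (𝓞 F) F)]; exact hint v 2
  have hle3 : ∀ v : HeightOneSpectrum (𝓞 F), vl v (3 : F) ≤ 0 := fun v => by
    rw [← WithZero.exp_le_exp, exp_vl v h3, WithZero.exp_zero]
    rw [← map_ofNat (algebraMap (𝓞 F) F)]; exact hint v 3
  set n := fun v : HeightOneSpectrum (𝓞 F) => (-(vl v (2 : F)) - vl v (3 : F)).toNat with hn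
  obtain ⟨y, hy⟩ := exists_approx_finset S n (fun v => if A v ∨ B v then 1 else 0)
  obtain ⟨z, hz⟩ := exists_approx_finset S n (fun v => if ¬ A v ∧ B v then 1 else 0)
  set Y := algebraMap (𝓞 F) F y
  set Z := algebraMap (𝓞 F) F z
  have hg0 : 1 + Y ^ 2 + Z ^ 2 ≠ 0 := by
    intro h
    have := congrArg ρ h
    simp only [map_add, map_pow, map_zero, map_one] at this
    nlinarith [sq_nonneg (ρ Y), sq_nonneg (ρ Z)]
  refine ⟨Y, Z, fun v hv => ?_⟩
  have hvS : v ∈ S := by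
    rw [hS, Finset.mem_union]
    rcases hv with h | h
    · left; simp only [Set.Finite.mem_toFinset, Set.mem_setOf_eq]; rintro h0; simp [h0] at h
    · right; simp only [Set.Finite.mem_toFinset, Set.mem_setOf_eq]; rintro h0; simp [h0] at h
  have hsq : ∀ r c : 𝓞 F, v.valuation F (algebraMap (𝓞 F) F (r - c)) < WithZero.exp (-(n v : ℤ)) →
      v.valuation F ((algebraMap (𝓞 F) F r) ^ 2 - (algebraMap (𝓞 F) F c) ^ 2) <
        WithZero.exp (-(n v : ℤ)) := by
    intro r c h
    rw [sq_sub_sq, ← map_add, ← map_sub, map_mul]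
    exact (mul_le_of_le_one_left zero_le (hint v _)).trans_lt h
  have hy2 := hsq _ _ (hy v hvS)
  have hz2 := hsq _ _ (hz v hvS)
  -- `t` is the value approximated by `1 + Y² + Z²`
  have key : ∀ t : F, t ≠ 0 → -(n v : ℤ) ≤ vl v t →
      v.valuation F (1 + Y ^ 2 + Z ^ 2 - t) < WithZero.exp (-(n v : ℤ)) →
      vl v (1 + Y ^ 2 + Z ^ 2) = vl v t := by
    intro t ht hnt h
    have : v.valuation F (1 + Y ^ 2 + Z ^ 2) = v.valuation F t := by
      refine Valuation.map_eq_of_sub_lt _ (h.trans_le ?_)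
      rw [← exp_vl v ht, WithZero.exp_le_exp]
      exact hnt
    unfold vl
    rw [this]
  have hsum : ∀ c d : 𝓞 F, v.valuation F (Y ^ 2 - (algebraMap (𝓞 F) F c) ^ 2) <
      WithZero.exp (-(n v : ℤ)) → v.valuation F (Z ^ 2 - (algebraMap (𝓞 F) F d) ^ 2) <
      WithZero.exp (-(n v : ℤ)) → v.valuation F (1 + Y ^ 2 + Z ^ 2 -
        (1 + (algebraMap (𝓞 F) F c) ^ 2 + (algebraMap (𝓞 F) F d) ^ 2)) <
      WithZero.exp (-(n v : ℤ)) := by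
    intro c d h1 h2
    convert Valuation.map_add_lt _ h1 h2 using 2
    ring
  have hnv : (n v : ℤ) = -(vl v (2 : F)) - vl v (3 : F) :=
    Int.toNat_of_nonneg (by linarith [hle2 v, hle3 v])
  have hcomb := hsum _ _ hy2 hz2
  have hl2 := hle2 v
  have hl3 := hle3 v
  rw [vl_mul v ha hg0, Int.even_add]
  by_cases hav : A v
  · simp only [hav, true_or, if_true, not_true, false_and, if_false, map_one, map_zero] at hcomb
    rw [key 2 h2 (by omega) (by convert hcomb using 2; norm_num)]
    exact fun h => hav.2 (h.mp hav.1)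
  · by_cases hbv : B v
    · simp only [hav, hbv, or_true, if_true, not_false_eq_true, true_and, map_one] at hcomb
      rw [key 3 h3 (by omega) (by convert hcomb using 2; norm_num)]
      exact fun h => hbv.2 (h.mp hbv.1)
    · simp only [hav, hbv, or_self, if_false, and_false, map_zero] at hcomb
      rw [key 1 one_ne_zero (by rw [vl_one]; omega) (by convert hcomb using 2; norm_num), vl_one]
      intro h
      have hae : Even (vl v a) := h.mpr (by simp)
      rcases hv with h' | h'
      · exact hav ⟨hae, h'⟩
      · exact hbv ⟨hae, h'⟩

end Reduction

/-! ### Four squares and diagonalization -/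

/-- A totally positive element of a totally real number field is a sum of four squares. -/
theorem sum_four_squares.{u} {F : Type u} [Field F] [NumberField F]
    (h : ∀ (σ : F →+* ℂ) (x : F), (σ x).im = 0) {a : F} (hpos : ∀ ρ : F →+* ℝ, 0 < ρ a) :
    ∃ p q r s : F, p ^ 2 + q ^ 2 + r ^ 2 + s ^ 2 = a := by
  obtain ⟨ρ₀, -⟩ := exists_real_embedding h (Classical.arbitrary (F →+* ℂ))
  have ha : a ≠ 0 := by
    rintro rfl
    simpa using hpos ρ₀
  obtain ⟨y, z, hodd⟩ := exists_odd_mul ρ₀ ha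
  set g := 1 + y ^ 2 + z ^ 2 with hg
  have hgpos : ∀ ρ : F →+* ℝ, 0 < ρ g := by
    intro ρ
    simp only [hg, map_add, map_one, map_pow]
    positivity
  have hg0 : g ≠ 0 := by
    intro h0
    simpa [h0] using hgpos ρ₀
  have hagpos : ∀ ρ : F →+* ℝ, 0 < ρ (a * g) := fun ρ => by
    rw [map_mul]; exact mul_pos (hpos ρ) (hgpos ρ)
  have hag0 : a * g ≠ 0 := mul_ne_zero ha hg0
  have hnsq : ¬ IsSquare (-(a * g)) := by
    rintro ⟨b, hb⟩
    have := congrArg ρ₀ hb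
    rw [map_neg, map_mul ρ₀ b b] at this
    nlinarith [hagpos ρ₀, mul_self_nonneg (ρ₀ b)]
  obtain ⟨M, _, _, _, Q, hQ⟩ := QuadExt.exists_of_not_isSquare (-(a * g)) hnsq
  have hs := Q.hs
  rw [hQ] at hs
  have hc : IsTotallyComplex M := by
    refine ⟨fun w => ?_⟩
    rw [← InfinitePlace.not_isReal_iff_isComplex, InfinitePlace.isReal_iff]
    intro hr
    set φ := hr.embedding
    have := congrArg φ hs
    have h1 := hagpos (φ.comp (algebraMap F M))
    rw [map_pow, map_neg, map_neg] at this
    rw [RingHom.comp_apply] at h1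
    nlinarith [sq_nonneg (φ Q.s)]
  have hs0 : Q.s ≠ 0 := by
    intro h0
    rw [h0] at hs
    have : algebraMap F M (-(a * g)) = 0 := by rw [← hs]; ring
    exact hag0 (neg_eq_zero.mp ((map_eq_zero _).mp this))
  have hval : ∀ (w : HeightOneSpectrum (𝓞 M)) {x : F} (hx : x ≠ 0),
      vl w (algebraMap F M x) = QuadExt.e (M := F) w * vl (w.under (𝓞 F)) x := by
    intro w x hx
    unfold vl
    rw [QuadExt.valuation_algebraMap, WithZero.log_pow]
    simp
  -- a prime at which `-(a * g)` has odd valuation ramifies in `M`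
  have heven : ∀ (w : HeightOneSpectrum (𝓞 M)) {x : F} (hx : x ≠ 0),
      (¬ Even (vl (w.under (𝓞 F)) x) → ¬ Even (vl (w.under (𝓞 F)) (a * g))) →
      Even (vl w (algebraMap F M x)) := by
    intro w x hx himp
    rw [hval w hx, Int.even_mul]
    by_cases hev : Even (vl (w.under (𝓞 F)) x)
    · exact Or.inr hev
    · left
      have h1 := hval w (neg_ne_zero.mpr hag0)
      rw [← hs, vl_pow] at h1
      have h2 : vl (w.under (𝓞 F)) (-(a * g)) = vl (w.under (𝓞 F)) (a * g) := by
        unfold vl; rw [Valuation.map_neg]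
      rw [h2] at h1
      have h3 : Even ((QuadExt.e (M := F) w : ℤ) * vl (w.under (𝓞 F)) (a * g)) := by
        rw [← h1]
        exact ⟨vl w Q.s, by push_cast; ring⟩
      exact (Int.even_mul.mp h3).resolve_right (himp hev)
  obtain ⟨x, y', hxy⟩ := neg_one_eq_add_sq (M := M)
    (fun w => by
      have := heven w (x := 2) two_ne_zero (fun h => hodd _ (Or.inl h))
      rwa [map_ofNat] at this)
    (fun w => by
      have := heven w (x := 3) three_ne_zero (fun h => hodd _ (Or.inr h))
      rwa [map_ofNat] at this)
  obtain ⟨p, q, r, hpqr⟩ := sum_squares_of_adjoin ρ₀ Q hQ hxy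
  -- Euler's four-square identity for `(p, q, r, 0)` and `(1, y, z, 0)`
  refine ⟨(p * 1 - q * y - r * z) / g, (p * y + q * 1) / g, (p * z + r * 1) / g,
    (q * z - r * y) / g, ?_⟩
  field_simp
  linear_combination g * hpqr + (p ^ 2 + q ^ 2 + r ^ 2) * hg.symm

/-- The matrix of left multiplication by the quaternion `p + q i + r j + s k`. -/
def quatMat {F : Type*} [CommRing F] (p q r s : F) : Matrix (Fin 4) (Fin 4) F :=
  !![p, -q, -r, -s; q, p, -s, r; r, s, p, -q; s, -r, q, p]

/-- Left multiplication by a quaternion scales the standard form in four variables by the norm. -/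
lemma quatMat_sum {F : Type*} [CommRing F] (p q r s : F) (x y : Fin 4 → F) :
    ∑ i, (∑ k, quatMat p q r s i k * x k) * (∑ k, quatMat p q r s i k * y k) =
      (p ^ 2 + q ^ 2 + r ^ 2 + s ^ 2) * ∑ k, x k * y k := by
  simp [Fin.sum_univ_four, quatMat]
  ring

/-- The fourth power of a trace-positive form is the standard form on `F ^ (4 n)`. -/
theorem exists_standard_coords (F : Type*) [Field F] [NumberField F]
    (htotreal : ∀ (σ : F →+* ℂ) (x : F), (σ x).im = 0)
    (V : Type*) [AddCommGroup V] [Module F V] [FiniteDimensional F V]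
    (ψ : V → V → F)
    (hbil : ∀ (a : F) (v v' w : V), ψ (a • v + v') w = a * ψ v w + ψ v' w)
    (hsymm : ∀ v w : V, ψ w v = ψ v w)
    (hpos : ∀ v : V, v ≠ 0 → 0 < Algebra.trace ℚ F (ψ v v)) :
    ∃ f : (Fin 4 → V) ≃ₗ[F] (Fin 4 → Fin (Module.finrank F V) → F),
      ∀ x y : Fin 4 → V, ∑ i, ∑ j, f x i j * f y i j = ∑ i, ψ (x i) (y i) := by
  have hadd : ∀ v v' w, ψ (v + v') w = ψ v w + ψ v' w := fun v v' w => by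
    simpa using hbil 1 v v' w
  have hzero : ∀ w, ψ 0 w = 0 := fun w => by simpa using hadd 0 0 w
  have hsmul : ∀ a v w, ψ (a • v) w = a * ψ v w := fun a v w => by
    simpa [hzero] using hbil a v 0 w
  let B : LinearMap.BilinForm F V := LinearMap.mk₂ F ψ hadd hsmul
    (fun v w w' => by rw [hsymm, hadd, hsymm v w, hsymm v w'])
    (fun a v w => by rw [hsymm, hsmul, hsymm v w, smul_eq_mul])
  have hBψ : ∀ v w, B v w = ψ v w := fun v w => rfl
  have hB : LinearMap.IsSymm B := ⟨fun v w => by simp [hBψ, hsymm v w]⟩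
  have : Invertible (2 : F) := invertibleOfNonzero two_ne_zero
  obtain ⟨b, hb⟩ := LinearMap.BilinForm.exists_orthogonal_basis hB
  have hsq : ∀ j, ∃ p q r s : F, p ^ 2 + q ^ 2 + r ^ 2 + s ^ 2 = ψ (b j) (b j) := by
    intro j
    refine sum_four_squares htotreal (totally_pos_of_trace htotreal fun x hx => ?_)
    have := hpos (x • b j) (smul_ne_zero hx (b.ne_zero j))
    rwa [hsmul, hsymm, hsmul, ← mul_assoc, ← sq] at this
  choose p q r s hpqrs using hsq
  have hdiag : ∀ v w, ψ v w = ∑ j, ψ (b j) (b j) * (b.repr v j * b.repr w j) := by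
    intro v w
    rw [← hBψ, ← LinearMap.sum_repr_mul_repr_mul b b]
    rw [Finsupp.sum_fintype _ _ (by simp)]
    refine Finset.sum_congr rfl fun j _ => ?_
    rw [Finsupp.sum_fintype _ _ (by simp), Finset.sum_eq_single j]
    · simp only [smul_eq_mul, hBψ]; ring
    · intro k _ hk
      have : B (b j) (b k) = 0 := hb hk.symm
      rw [this]; simp
    · simp
  let f : (Fin 4 → V) →ₗ[F] (Fin 4 → Fin (Module.finrank F V) → F) :=
    { toFun := fun x i j => ∑ k, quatMat (p j) (q j) (r j) (s j) i k * b.repr (x k) j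
      map_add' := fun x y => by
        funext i j
        simp [mul_add, Finset.sum_add_distrib]
      map_smul' := fun a x => by
        funext i j
        simp only [Pi.smul_apply, map_smul, Finsupp.smul_apply, smul_eq_mul, RingHom.id_apply,
          Finset.mul_sum]
        exact Finset.sum_congr rfl fun k _ => by ring }
  have hf : ∀ x y : Fin 4 → V, ∑ i, ∑ j, f x i j * f y i j = ∑ i, ψ (x i) (y i) := by
    intro x y
    rw [Finset.sum_comm]
    rw [Finset.sum_congr rfl fun i _ => hdiag (x i) (y i)]
    rw [Finset.sum_comm (s := (Finset.univ : Finset (Fin 4)))]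
    refine Finset.sum_congr rfl fun j _ => ?_
    rw [← Finset.mul_sum, ← hpqrs j]
    exact quatMat_sum (p j) (q j) (r j) (s j) (fun k => b.repr (x k) j) (fun k => b.repr (y k) j)
  have hinj : Function.Injective f := by
    refine (injective_iff_map_eq_zero f).mpr fun x hx => ?_
    have h0 := hf x x
    rw [hx] at h0
    have h1 : ∑ i, Algebra.trace ℚ F (ψ (x i) (x i)) = 0 := by
      rw [← map_sum, ← h0]; simp
    have hnn : ∀ i, 0 ≤ Algebra.trace ℚ F (ψ (x i) (x i)) := by
      intro i
      by_cases hi : x i = 0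
      · simp [hi, hzero]
      · exact (hpos _ hi).le
    funext i
    by_contra hi
    exact (hpos _ hi).ne' ((Finset.sum_eq_zero_iff_of_nonneg fun i _ => hnn i).mp h1 i
      (Finset.mem_univ i))
  refine ⟨LinearMap.linearEquivOfInjective f hinj (by simp [Module.finrank_pi_fintype]),
    fun x y => ?_⟩
  simp only [LinearMap.linearEquivOfInjective_apply]
  exact hf x y

/-- **Albert type I case of the fourth-power Hermitian form theorem.**
Over a totally real number field, two symmetric bilinear forms whose `ℚ`-traces are
positive definite have isometric fourth powers. -/
theorem fourth_power_quadratic_form_totally_real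
    (F : Type*) [Field F] [NumberField F]
    (htotreal : ∀ (σ : F →+* ℂ) (x : F), (σ x).im = 0)
    (V : Type*) [AddCommGroup V] [Module F V] [Nontrivial V] [FiniteDimensional F V]
    (ψ₁ ψ₂ : V → V → F)
    (hbil₁ : ∀ (a : F) (v v' w : V),
      ψ₁ (a • v + v') w = a * ψ₁ v w + ψ₁ v' w)
    (hbil₂ : ∀ (a : F) (v v' w : V),
      ψ₂ (a • v + v') w = a * ψ₂ v w + ψ₂ v' w)
    (hsymm₁ : ∀ v w : V, ψ₁ w v = ψ₁ v w)
    (hsymm₂ : ∀ v w : V, ψ₂ w v = ψ₂ v w)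
    (hpos₁ : ∀ v : V, v ≠ 0 → 0 < Algebra.trace ℚ F (ψ₁ v v))
    (hpos₂ : ∀ v : V, v ≠ 0 → 0 < Algebra.trace ℚ F (ψ₂ v v)) :
    ∃ f : (Fin 4 → V) ≃ₗ[F] (Fin 4 → V),
      ∀ x y : Fin 4 → V, ∑ i, ψ₂ (f x i) (f y i) = ∑ i, ψ₁ (x i) (y i) := by
  obtain ⟨f₁, h₁⟩ := exists_standard_coords F htotreal V ψ₁ hbil₁ hsymm₁ hpos₁
  obtain ⟨f₂, h₂⟩ := exists_standard_coords F htotreal V ψ₂ hbil₂ hsymm₂ hpos₂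
  refine ⟨f₁.trans f₂.symm, fun x y => ?_⟩
  rw [← h₂, ← h₁]
  simp
end

section
/- Let (D,*) be a finite-dimensional semisimple ℚ-algebra with involution, V a nonzero finite-dimensional right D-module, and ψ : V × V → D a positive definite (D,*)-Hermitian form. Let E = End_D(V) be the ring of right-D-module endomorphisms of V and let † be an involution of E satisfying ψ(a(v), w) = ψ(v, a†(w)) for all v, w ∈ V and a ∈ E (the adjoint involution with respect to ψ). Then † is a positive involution of E, i.e. Tr(a†·a ; E) > 0 for every a ∈ E \ {0}. -/
/-!
Let `T` be the trace of `D` over `ℚ`. Since every additive map of `ℚ`-vector spaces is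
`ℚ`-linear, `(v, w) ↦ T (ψ v w) + T (ψ w v)` is a positive definite symmetric `ℚ`-bilinear form
on `V`. Summing its values at a `ℚ`-basis `b` of `V` gives a positive definite symmetric form
`⟨f, g⟩ = ∑ i, (T (ψ (f (b i)) (g (b i))) + T (ψ (g (b i)) (f (b i))))` on `E = End_D(V)`, for
which left multiplication by `a†` is adjoint to left multiplication by `a`.
So the trace in question has the form `Tr (A* A)` with `A ≠ 0`; in an orthogonal basis `e` it
equals `∑ i, ⟨A e i, A e i⟩ / ⟨e i, e i⟩`, which is positive (`trace_adjoint_comp_pos`).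
The symmetrised form makes the identity `T (x*) = T x` unnecessary.
-/

open MulOpposite

/-- The trace of left multiplication by `x` on the finite-dimensional `ℚ`-algebra `A`. -/
noncomputable def algTraceQ (A : Type*) [Ring A] [Algebra ℚ A] (x : A) : ℚ :=
  LinearMap.trace ℚ A (LinearMap.mulLeft ℚ x)

/-- `st` is an involution of the `ℚ`-algebra `D`. -/
def IsInvolutionQ (D : Type*) [Ring D] [Algebra ℚ D] (st : D → D) : Prop :=
  (∀ x y : D, st (x + y) = st x + st y) ∧
  (∀ x y : D, st (x * y) = st y * st x) ∧
  (∀ x : D, st (st x) = x) ∧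
  (∀ r : ℚ, st (algebraMap ℚ D r) = algebraMap ℚ D r)

/-- `ψ` is a `(D,*)`-Hermitian form on the right `D`-module `V`. -/
def IsHermitianForm (D : Type*) [Ring D] [Algebra ℚ D] (V : Type*) [AddCommGroup V]
    [Module Dᵐᵒᵖ V] (st : D → D) (ψ : V → V → D) : Prop :=
  (∀ v v' w : V, ψ (v + v') w = ψ v w + ψ v' w) ∧
  (∀ v w w' : V, ψ v (w + w') = ψ v w + ψ v w') ∧
  (∀ (a : D) (v w : V), ψ (op a • v) w = st a * ψ v w) ∧
  (∀ (b : D) (v w : V), ψ v (op b • w) = ψ v w * b) ∧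
  (∀ v w : V, ψ w v = st (ψ v w))

/-- `ψ` is a positive definite `(D,*)`-Hermitian form on the right `D`-module `V`. -/
def IsPosDefHermitianForm (D : Type*) [Ring D] [Algebra ℚ D] (V : Type*) [AddCommGroup V]
    [Module Dᵐᵒᵖ V] (st : D → D) (ψ : V → V → D) : Prop :=
  IsHermitianForm D V st ψ ∧ ∀ v : V, v ≠ 0 → 0 < algTraceQ D (ψ v v)

/-- For a positive definite symmetric bilinear form over `ℚ` with `A'` adjoint to `A ≠ 0`, the
trace of `A' A` is positive: it is the sum of `β (A eᵢ) (A eᵢ) / β eᵢ eᵢ` over an orthogonal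
basis `e`. -/
theorem trace_adjoint_comp_pos {U : Type*} [AddCommGroup U] [Module ℚ U] [FiniteDimensional ℚ U]
    (β : LinearMap.BilinForm ℚ U) (hsymm : ∀ u w, β u w = β w u)
    (hpos : ∀ u, u ≠ 0 → 0 < β u u) (A A' : U →ₗ[ℚ] U)
    (hA : ∀ u w, β (A u) w = β u (A' w)) (hA0 : A ≠ 0) :
    0 < LinearMap.trace ℚ U (A' ∘ₗ A) := by
  classical
  obtain ⟨e, he⟩ := LinearMap.BilinForm.exists_orthogonal_basis (B := β) ⟨fun u w => hsymm u w⟩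
  have hnonneg : ∀ u, 0 ≤ β u u := fun u => by
    rcases eq_or_ne u 0 with rfl | h
    · simp
    · exact (hpos u h).le
  have hcoord : ∀ i u, β (e i) u = e.repr u i * β (e i) (e i) := fun i u => by
    conv_lhs => rw [← e.sum_repr u]
    rw [map_sum, Finset.sum_eq_single i]
    · simp
    · intro j _ hj
      have : β (e i) (e j) = 0 := he hj.symm
      simp [this]
    · simp
  have hentry : ∀ i, e.repr ((A' ∘ₗ A) (e i)) i = β (A (e i)) (A (e i)) / β (e i) (e i) :=
    fun i => by
      rw [eq_div_iff (hpos _ (e.ne_zero i)).ne', ← hcoord, hA, LinearMap.comp_apply]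
  rw [LinearMap.trace_eq_matrix_trace ℚ e, Matrix.trace]
  simp only [Matrix.diag_apply, LinearMap.toMatrix_apply, hentry]
  obtain ⟨i, hi⟩ : ∃ i, A (e i) ≠ 0 := by
    by_contra! h
    exact hA0 (e.ext fun i => by simpa using h i)
  exact Finset.sum_pos' (fun i _ => div_nonneg (hnonneg _) (hnonneg _))
    ⟨i, Finset.mem_univ i, div_pos (hpos _ hi) (hpos _ (e.ne_zero i))⟩

/-- **The adjoint involution of `End_D(V)` with respect to a positive definite Hermitian
form is a positive involution.** -/
theorem adjoint_involution_positive
    (D : Type*) [Ring D] [Algebra ℚ D] [FiniteDimensional ℚ D] [IsSemisimpleRing D]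
    (st : D → D) (hst : IsInvolutionQ D st)
    (V : Type*) [AddCommGroup V] [Module Dᵐᵒᵖ V] [Nontrivial V]
    [Module ℚ V] [FiniteDimensional ℚ V] [Module.Finite Dᵐᵒᵖ V]
    [SMulCommClass Dᵐᵒᵖ ℚ V] [IsScalarTower ℚ Dᵐᵒᵖ V]
    (ψ : V → V → D) (hψ : IsPosDefHermitianForm D V st ψ)
    (dag : Module.End Dᵐᵒᵖ V → Module.End Dᵐᵒᵖ V)
    (hdag : IsInvolutionQ (Module.End Dᵐᵒᵖ V) dag)
    (hadj : ∀ (a : Module.End Dᵐᵒᵖ V) (v w : V), ψ (a v) w = ψ v (dag a w)) :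
    ∀ a : Module.End Dᵐᵒᵖ V, a ≠ 0 →
      0 < algTraceQ (Module.End Dᵐᵒᵖ V) (dag a * a) := by
  obtain ⟨⟨hadd₁, hadd₂, -, -, -⟩, hpd⟩ := hψ
  have hdd : ∀ a, dag (dag a) = a := hdag.2.2.1
  let T : D →ₗ[ℚ] ℚ := LinearMap.trace ℚ D ∘ₗ LinearMap.mul ℚ D
  have hT : ∀ v : V, v ≠ 0 → 0 < T (ψ v v) := hpd
  have hz : ∀ v : V, ψ 0 v = 0 := fun v => by simpa using hadd₁ 0 0 v
  have hQ : ∀ v : V, 0 ≤ T (ψ v v) := fun v => by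
    rcases eq_or_ne v 0 with rfl | h
    · simp [hz]
    · exact (hT v h).le
  let B : V →ₗ[ℚ] V →ₗ[ℚ] ℚ :=
    (AddMonoidHom.mk' (fun v =>
      (AddMonoidHom.mk' (fun w => T (ψ v w)) fun w w' => by
        rw [hadd₂, map_add]).toRatLinearMap) fun v v' => by
      ext w
      change T (ψ (v + v') w) = T (ψ v w) + T (ψ v' w)
      rw [hadd₁, map_add]).toRatLinearMap
  have hB : ∀ v w, B v w = T (ψ v w) := fun _ _ => rfl
  let b := Module.finBasis ℚ V
  let ev : V → Module.End Dᵐᵒᵖ V →ₗ[ℚ] V := fun v =>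
    (AddMonoidHom.mk' (fun f : Module.End Dᵐᵒᵖ V => f v) fun _ _ => rfl).toRatLinearMap
  have hev : ∀ v f, ev v f = f v := fun _ _ => rfl
  have hext : ∀ f : Module.End Dᵐᵒᵖ V, (∀ i, f (b i) = 0) → f = 0 := fun f hf => by
    have h : f.toAddMonoidHom.toRatLinearMap = 0 := b.ext hf
    ext v
    exact LinearMap.congr_fun h v
  have : FiniteDimensional ℚ (Module.End Dᵐᵒᵖ V) :=
    Module.Finite.of_injective (LinearMap.pi fun i => ev (b i)) <| by
      rw [← LinearMap.ker_eq_bot, LinearMap.ker_eq_bot']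
      exact fun f hf => hext f fun i => congrFun hf i
  let β : LinearMap.BilinForm ℚ (Module.End Dᵐᵒᵖ V) :=
    ∑ i, (B + B.flip).compl₁₂ (ev (b i)) (ev (b i))
  have hβ : ∀ f g, β f g = ∑ i, (T (ψ (f (b i)) (g (b i))) + T (ψ (g (b i)) (f (b i)))) :=
    fun f g => by simp [β, hB, hev]
  intro a ha
  have key := trace_adjoint_comp_pos β
    (fun f g => by simp only [hβ, add_comm])
    (fun f hf => by
      obtain ⟨i, hi⟩ : ∃ i, f (b i) ≠ 0 := by
        by_contra! h
        exact hf (hext f h)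
      rw [hβ]
      exact Finset.sum_pos' (fun i _ => add_nonneg (hQ _) (hQ _))
        ⟨i, Finset.mem_univ i, add_pos (hT _ hi) (hT _ hi)⟩)
    (LinearMap.mulLeft ℚ a) (LinearMap.mulLeft ℚ (dag a))
    (fun f g => by
      -- The second summand uses the adjunction for `dag a`, whose adjoint is `a` itself.
      have h : ∀ v w, ψ v (a w) = ψ (dag a v) w := fun v w => by rw [hadj, hdd]
      simp only [hβ, LinearMap.mulLeft_apply, Module.End.mul_apply, hadj a, h])
    (fun h => ha (by simpa using LinearMap.congr_fun h 1))
  rwa [← LinearMap.mulLeft_mul] at key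
end
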